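/- arXiv:0906.0655 — 6 statements merged into one kernel-verified Lean document; each statement's English description precedes it below -/
import Mathlib

section
/- Let D = ⊕_{g∈G} D_g be a finite-dimensional central graded division algebra over F with support H, graded by an abelian group G. Then there exist r ≥ 0, prime powers n_1,…,n_r, and a decomposition H = H_1 × ⋯ × H_r into subgroups with H_i ≅ ℤ_{n_i} × ℤ_{n_i}, together with graded subalgebras D_i = ⊕_{h∈H_i} D_h of D such that each D_i is graded isomorphic to A_{n_i} and the multiplication map D_1 ⊗ ⋯ ⊗ D_r → D is an isomorphism of graded algebras (where the tensor product carries the H_1 × ⋯ × H_r grading). -/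
open scoped TensorProduct

/-!
Since `F` is algebraically closed, the identity component `D_0`, a finite-dimensional division
algebra, is `F`. Hence every nonzero component is a line, the support `S` is a finite subgroup
of `G`, and homogeneous elements commute up to scalars: `X_s X_t = β(s, t) X_t X_s`, where `β` is an
alternating bicharacter of `S` with values in `Fˣ` (`IsGradedDivision.exists_bichar`). A degree in
the radical of `β` carries a central element, so centrality of `D` makes `β` nondegenerate
(`IsGradedDivision.nondegenerate`).

A finite abelian group with a nondegenerate alternating bicharacter is an orthogonal sum of
hyperbolic planes (`exists_hyperbolicBasis`). To split off one plane, choose a prime `p` dividing the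
order of the group and `a` of the largest order `n = p ^ k` among elements of `p`-power order. By
nondegeneracy `β(a, ·)` has order `n`, so `β(a, b)` is a primitive `n`-th root of unity for some `b`,
which can be moved into the `p`-part; maximality of `n` gives `n b = 0`. Every value of `β(a, ·)` and
`β(b, ·)` is then a power of `β(a, b)`, so the group is the sum of `⟨a, b⟩` and its orthogonal
complement.

For a hyperbolic basis `(a_i, b_i)`, choose homogeneous `x_i, y_i` of these degrees normalized to
`x_i ^ n_i = y_i ^ n_i = 1`. The algebras `D_i` generated by `x_i, y_i` commute with each other by
orthogonality, so multiplication is an algebra map from their tensor product to `D`. It is surjective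
because monomials in the `x_i, y_i` reach every degree of the support, and bijective because both
sides have dimension `∏ n_i ^ 2` (`IsGradedDivision.multiplication_equiv`).
-/

/-! ### Finite abelian groups with an alternating bicharacter -/

section Bicharacter
variable {H A : Type*} [AddCommGroup H] [AddCommGroup A] (β : H →+ H →+ A)

theorem bichar_skew (halt : ∀ h, β h h = 0) (g h : H) : β g h = -β h g := by
  have := halt (g + h)
  simp only [map_add, AddMonoidHom.add_apply, halt, zero_add, add_zero] at this
  exact eq_neg_of_add_eq_zero_right this

/-- A subgroup `T ≠ 0` on which `β` is nondegenerate contains a hyperbolic pair of prime power order: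
`a` is an element of largest `p`-power order for some prime `p`, and `b` is a partner of it. -/
theorem exists_hyperbolic_pair [Finite H] (T : AddSubgroup H)
    (hnd : ∀ g ∈ T, (∀ h ∈ T, β g h = 0) → g = 0) (hT : T ≠ ⊥) :
    ∃ n : ℕ, ∃ a ∈ T, ∃ b ∈ T, IsPrimePow n ∧ n • a = 0 ∧ n • b = 0 ∧ addOrderOf (β a b) = n := by
  obtain ⟨t, htT, ht0⟩ := T.ne_bot_iff_exists_ne_zero.1 hT |>.elim fun t ht =>
    (⟨t.1, t.2, fun h => ht (Subtype.ext h)⟩ : ∃ t : H, t ∈ T ∧ t ≠ 0)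
  have ho : addOrderOf t ≠ 1 := fun h => ht0 (AddMonoid.addOrderOf_eq_one_iff.1 h)
  obtain ⟨p, hp, q, hq⟩ := Nat.exists_prime_and_dvd ho
  have := Fact.mk hp
  have htpos : 0 < addOrderOf t := addOrderOf_pos t
  let P : ℕ → Prop := fun k => ∃ a ∈ T, addOrderOf a = p ^ k
  have hP1 : P 1 := by
    refine ⟨q • t, T.nsmul_mem htT q, ?_⟩
    rw [pow_one]
    refine addOrderOf_eq_prime ?_ ?_
    · rw [← mul_nsmul', ← hq, addOrderOf_nsmul_eq_zero]
    · intro h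
      have := addOrderOf_dvd_of_nsmul_eq_zero h
      have hq0 : 0 < q := by
        rcases Nat.eq_zero_or_pos q with h | h
        · rw [h, mul_zero] at hq; omega
        · exact h
      have := Nat.le_of_dvd hq0 this
      have := hp.two_le
      nlinarith
  have hbd : ∀ k, P k → k ≤ Nat.card H := by
    rintro k ⟨a, -, ha⟩
    have h1 : addOrderOf a ≤ Nat.card H := Nat.le_of_dvd Nat.card_pos (addOrderOf_dvd_natCard a)
    have h2 : k < p ^ k := Nat.lt_pow_self hp.one_lt
    omega
  classical
  obtain ⟨k, hk1, ⟨a, haT, ha⟩, hmax⟩ :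
      ∃ k, 1 ≤ k ∧ P k ∧ ∀ k', P k' → k' ≤ k :=
    ⟨Nat.findGreatest P (Nat.card H), Nat.le_findGreatest (hbd 1 hP1) hP1,
      Nat.findGreatest_spec (hbd 1 hP1) hP1, fun k' hk' => Nat.le_findGreatest (hbd k' hk') hk'⟩
  obtain ⟨l, rfl⟩ : ∃ l, k = l + 1 := ⟨k - 1, by omega⟩
  -- nondegeneracy detects the nonzero element `p ^ l • a`
  obtain ⟨b, hbT, hb⟩ : ∃ b ∈ T, ¬ p ^ l • β a b = 0 := by
    by_contra! hcon
    have h0 : p ^ l • a = 0 := hnd _ (T.nsmul_mem haT _) fun h hh => by simpa using hcon h hh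
    have := addOrderOf_dvd_of_nsmul_eq_zero h0
    rw [ha, Nat.pow_dvd_pow_iff_le_right hp.one_lt] at this
    omega
  have hna : p ^ (l + 1) • a = 0 := ha ▸ addOrderOf_nsmul_eq_zero a
  have hord : addOrderOf (β a b) = p ^ (l + 1) :=
    addOrderOf_eq_prime_pow hb (by
      have := congrArg (fun z => β z b) hna
      simpa using this)
  -- `b` is replaced by its multiple `m • b` of `p`-power order; `m` is prime to `p`, so the order of
  -- the pairing with `a` does not change
  obtain ⟨s, m, hpm, hsm⟩ := Nat.exists_eq_pow_mul_and_not_dvd (addOrderOf_pos b).ne' p hp.ne_one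
  have hm0 : m ≠ 0 := by rintro rfl; simp at hpm
  have hbm : addOrderOf (m • b) = p ^ s := by
    rw [addOrderOf_nsmul' _ hm0, hsm, Nat.gcd_eq_right (Dvd.intro_left _ rfl),
      Nat.mul_div_cancel _ (Nat.pos_of_ne_zero hm0)]
  have hsl := hmax s ⟨m • b, T.nsmul_mem hbT m, hbm⟩
  refine ⟨p ^ (l + 1), a, haT, m • b, T.nsmul_mem hbT m, hp.isPrimePow.pow (by omega), hna,
    addOrderOf_dvd_iff_nsmul_eq_zero.1 (hbm ▸ pow_dvd_pow p hsl), ?_⟩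
  rw [map_nsmul, Nat.Coprime.addOrderOf_nsmul, hord]
  rw [hord]
  exact (Nat.Coprime.pow_left _ ((Nat.Prime.coprime_iff_not_dvd hp).2 hpm))

/-- The pairs `(a i, b i)` span mutually orthogonal hyperbolic planes for the bicharacter `β`: both
elements are killed by the prime power `nn i`, and `β (a i) (b i)` has exact order `nn i`. Spanning
is not part of the definition, and independence follows (`IsHyperbolicBasis.modEq`) when `β` is
alternating. -/
structure IsHyperbolicBasis {r : ℕ} (nn : Fin r → ℕ) (a b : Fin r → H) : Prop where
  primePow : ∀ i, IsPrimePow (nn i)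
  nsmul_a : ∀ i, nn i • a i = 0
  nsmul_b : ∀ i, nn i • b i = 0
  order : ∀ i, addOrderOf (β (a i) (b i)) = nn i
  ortho : ∀ i j, i ≠ j → β (a i) (a j) = 0 ∧ β (a i) (b j) = 0 ∧ β (b i) (a j) = 0 ∧
    β (b i) (b j) = 0

/-- A subgroup on which an alternating bicharacter is nondegenerate is spanned by a hyperbolic basis.
The hypothesis `hA` says that the `n`-torsion of the value group is generated by any element of
order `n`, as holds for the units of a field. -/
theorem exists_hyperbolicBasis [Finite H] (halt : ∀ h, β h h = 0)
    (hA : ∀ (n : ℕ) (e y : A), 0 < n → addOrderOf e = n → n • y = 0 → ∃ j : ℕ, y = j • e)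
    (T : AddSubgroup H) (hnd : ∀ g ∈ T, (∀ h ∈ T, β g h = 0) → g = 0) :
    ∃ (r : ℕ) (nn : Fin r → ℕ) (a b : Fin r → H), IsHyperbolicBasis β nn a b ∧
      (∀ i, a i ∈ T) ∧ (∀ i, b i ∈ T) ∧
      ∀ t ∈ T, ∃ c d : Fin r → ℕ, t = ∑ i, (c i • a i + d i • b i) := by
  induction T using WellFoundedLT.induction with
  | ind T ih =>
  by_cases hT : T = ⊥
  · subst hT
    exact ⟨0, Fin.elim0, Fin.elim0, Fin.elim0, ⟨fun i => i.elim0, fun i => i.elim0,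
      fun i => i.elim0, fun i => i.elim0, fun i => i.elim0⟩, fun i => i.elim0, fun i => i.elim0,
      fun t ht => ⟨Fin.elim0, Fin.elim0, by simpa using ht⟩⟩
  obtain ⟨n, a, haT, b, hbT, hn, hna, hnb, hord⟩ := exists_hyperbolic_pair β T hnd hT
  have hskew := bichar_skew β halt
  -- the orthogonal complement of the plane spanned by `a` and `b`
  let T' : AddSubgroup H := T ⊓ ((β a).ker ⊓ (β b).ker)
  have hdec : ∀ t ∈ T, ∃ i j : ℕ, t - i • a - j • b ∈ T' := by
    intro t ht
    obtain ⟨j, hj⟩ := hA n (β a b) (β a t) hn.pos hord (by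
      simpa using congrArg (fun z => β z t) hna)
    obtain ⟨i, hi⟩ := hA n (β a b) (-β b t) hn.pos hord (by
      simpa using congrArg (fun z => β z t) hnb)
    refine ⟨i, j, T.sub_mem (T.sub_mem ht (T.nsmul_mem haT i)) (T.nsmul_mem hbT j), ?_, ?_⟩
    · change β a _ = 0
      simp [halt, hj]
    · change β b _ = 0
      simp only [map_sub, map_nsmul, halt, hskew b a, smul_neg, ← hi]
      simp
  have hlt : T' < T := by
    refine lt_of_le_of_ne inf_le_left fun h => ?_
    have hb' : b ∈ T' := h ▸ hbT
    have h0 : β a b = 0 := hb'.2.1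
    rw [h0, addOrderOf_zero] at hord
    exact hn.ne_one hord.symm
  obtain ⟨r, nn, a', b', hB, ha', hb', hspan⟩ := ih T' hlt (by
    intro g hg hgz
    refine hnd g hg.1 fun t ht => ?_
    obtain ⟨i, j, hij⟩ := hdec t ht
    have h1 := hgz _ hij
    have h2 : β g a = 0 := by rw [hskew, show β a g = 0 from hg.2.1, neg_zero]
    have h3 : β g b = 0 := by rw [hskew, show β b g = 0 from hg.2.2, neg_zero]
    simpa [h2, h3] using h1)
  have e1 : ∀ t ∈ T', β a t = 0 := fun t h => h.2.1
  have e2 : ∀ t ∈ T', β b t = 0 := fun t h => h.2.2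
  have e3 : ∀ t ∈ T', β t a = 0 := fun t h => by rw [hskew, e1 t h, neg_zero]
  have e4 : ∀ t ∈ T', β t b = 0 := fun t h => by rw [hskew, e2 t h, neg_zero]
  refine ⟨r + 1, Fin.cons n nn, Fin.cons a a', Fin.cons b b', ⟨?_, ?_, ?_, ?_, ?_⟩, ?_, ?_, ?_⟩
  · exact Fin.cases hn hB.primePow
  · exact Fin.cases hna hB.nsmul_a
  · exact Fin.cases hnb hB.nsmul_b
  · exact Fin.cases hord hB.order
  · refine Fin.cases (Fin.cases (fun h => absurd rfl h) fun j _ => ?_)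
      (fun i => Fin.cases (fun _ => ?_) fun j hij => ?_)
    · simp [e1 _ (ha' j), e1 _ (hb' j), e2 _ (ha' j), e2 _ (hb' j)]
    · simp [e3 _ (ha' i), e3 _ (hb' i), e4 _ (ha' i), e4 _ (hb' i)]
    · simpa using hB.ortho i j (fun h => hij (by rw [h]))
  · exact Fin.cases haT fun i => (ha' i).1
  · exact Fin.cases hbT fun i => (hb' i).1
  · intro t ht
    obtain ⟨i, j, hij⟩ := hdec t ht
    obtain ⟨c, d, hcd⟩ := hspan _ hij
    refine ⟨Fin.cons i c, Fin.cons j d, ?_⟩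
    rw [Fin.sum_univ_succ]
    simp only [Fin.cons_zero, Fin.cons_succ, ← hcd]
    abel

theorem IsHyperbolicBasis.pair_a {β : H →+ H →+ A} (halt : ∀ h, β h h = 0) {r : ℕ}
    {nn : Fin r → ℕ} {a b : Fin r → H} (hB : IsHyperbolicBasis β nn a b) (c d : Fin r → ℕ)
    (i : Fin r) : β (a i) (∑ j, (c j • a j + d j • b j)) = d i • β (a i) (b i) := by
  rw [map_sum, Finset.sum_eq_single i]
  · simp [halt]
  · intro j _ hj
    simp [hB.ortho i j hj.symm]
  · simp

theorem IsHyperbolicBasis.pair_b {β : H →+ H →+ A} (halt : ∀ h, β h h = 0) {r : ℕ}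
    {nn : Fin r → ℕ} {a b : Fin r → H} (hB : IsHyperbolicBasis β nn a b) (c d : Fin r → ℕ)
    (i : Fin r) : β (b i) (∑ j, (c j • a j + d j • b j)) = -(c i • β (a i) (b i)) := by
  rw [map_sum, Finset.sum_eq_single i]
  · simp [halt, bichar_skew β halt (b i) (a i)]
  · intro j _ hj
    simp [hB.ortho i j hj.symm]
  · simp

/-- Coordinates with respect to a hyperbolic basis are unique modulo the orders: they are read off by
pairing with the basis elements. -/
theorem IsHyperbolicBasis.modEq {β : H →+ H →+ A} (halt : ∀ h, β h h = 0) {r : ℕ}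
    {nn : Fin r → ℕ} {a b : Fin r → H} (hB : IsHyperbolicBasis β nn a b) {c d c' d' : Fin r → ℕ}
    (h : ∑ j, (c j • a j + d j • b j) = ∑ j, (c' j • a j + d' j • b j)) (i : Fin r) :
    c i ≡ c' i [MOD nn i] ∧ d i ≡ d' i [MOD nn i] := by
  have h1 := congrArg (β (a i)) h
  have h2 := congrArg (β (b i)) h
  rw [hB.pair_a halt, hB.pair_a halt, nsmul_eq_nsmul_iff_modEq, hB.order] at h1
  rw [hB.pair_b halt, hB.pair_b halt, neg_inj, nsmul_eq_nsmul_iff_modEq, hB.order] at h2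
  exact ⟨h2, h1⟩

end Bicharacter

/-! ### Auxiliary facts -/

section Auxiliary

/-- If `n` kills `a` and `b`, the subgroup they generate consists of the `i a + j b` with
`0 ≤ i, j < n`. -/
theorem range_zmod_eq_closure {G : Type*} [AddCommGroup G] {n : ℕ} [NeZero n] {a b : G}
    (ha : n • a = 0) (hb : n • b = 0) :
    Set.range (fun p : ZMod n × ZMod n => p.1.val • a + p.2.val • b) =
      (AddSubgroup.closure {a, b} : Set G) := by
  have key : ∀ (z : G), n • z = 0 → ∀ m : ℤ, (m : ZMod n).val • z = m • z := by
    intro z hz m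
    rw [← natCast_zsmul, ZMod.val_intCast]
    conv_rhs => rw [← Int.emod_add_mul_ediv m n]
    rw [add_zsmul, mul_comm, mul_zsmul, natCast_zsmul, hz, zsmul_zero, add_zero]
  ext z
  rw [SetLike.mem_coe, AddSubgroup.mem_closure_pair]
  constructor
  · rintro ⟨p, rfl⟩
    exact ⟨(p.1.val : ℕ), (p.2.val : ℕ), by simp only [natCast_zsmul]⟩
  · rintro ⟨m, k, rfl⟩
    exact ⟨(m, k), by simp only [key a ha, key b hb]⟩

theorem list_ofFn_prod_mul {M : Type*} [Monoid M] : ∀ {r : ℕ} (v w : Fin r → M),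
    (∀ i j, i ≠ j → Commute (v i) (w j)) →
      (List.ofFn fun i => v i * w i).prod = (List.ofFn v).prod * (List.ofFn w).prod
  | 0, _, _, _ => by simp
  | r + 1, v, w, h => by
    have ih := list_ofFn_prod_mul (fun i : Fin r => v i.succ) (fun i => w i.succ)
      (fun i j hij => h _ _ (fun e => hij (Fin.succ_injective _ e)))
    have hc : Commute (w 0) (List.ofFn fun i : Fin r => v i.succ).prod := by
      refine Commute.list_prod_right _ _ fun z hz => ?_
      obtain ⟨i, rfl⟩ := (List.mem_ofFn' _ _).1 hz
      exact (h i.succ 0 (Fin.succ_ne_zero i)).symm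
    simp only [List.ofFn_succ, List.prod_cons, ih]
    rw [mul_assoc, mul_assoc, ← mul_assoc (w 0), hc.eq, mul_assoc]

/-- In the units of a field, the `n`-torsion is generated by any element of order `n`. The group is
written additively so as to serve as the value group of a bicharacter. -/
theorem additive_units_cyclic {F : Type*} [Field F] (n : ℕ) (e y : Additive Fˣ) (hn : 0 < n)
    (he : addOrderOf e = n) (hy : n • y = 0) : ∃ j : ℕ, y = j • e := by
  have : NeZero n := ⟨hn.ne'⟩
  have hprim : IsPrimitiveRoot ((e.toMul : Fˣ) : F) n := by
    rw [IsPrimitiveRoot.coe_units_iff, ← he]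
    exact IsPrimitiveRoot.orderOf e.toMul
  have hy' : ((y.toMul : Fˣ) : F) ^ n = 1 := by
    rw [← Units.val_pow_eq_pow_val, show y.toMul ^ n = 1 from hy, Units.val_one]
  obtain ⟨j, -, hj⟩ := hprim.eq_pow_of_pow_eq_one hy'
  exact ⟨j, (Units.ext (by simpa using hj.symm) : y.toMul = e.toMul ^ j)⟩

end Auxiliary

/-! ### Graded division algebras -/

section GradedDivision
variable {F D G : Type*} [Field F] [Ring D] [Algebra F D] [AddCommGroup G]

/-- `gr` is a grading of the algebra `D` by the group `G` in which nonzero homogeneous elements are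
invertible. That `1` has degree `0` is not required: it follows in finite dimension. -/
structure IsGradedDivision (gr : G → Submodule F D) : Prop where
  indep : iSupIndep gr
  top : iSup gr = ⊤
  mul_mem : ∀ {g h : G} {a b : D}, a ∈ gr g → b ∈ gr h → a * b ∈ gr (g + h)
  isUnit : ∀ {g : G} {a : D}, a ∈ gr g → a ≠ 0 → IsUnit a

namespace IsGradedDivision
variable {gr : G → Submodule F D}

theorem mul_ne_zero (hD : IsGradedDivision gr) {g : G} {a b : D} (ha : a ∈ gr g) (ha0 : a ≠ 0) (hb0 : b ≠ 0) :
    a * b ≠ 0 := fun h => hb0 (((hD.isUnit ha ha0).mul_right_eq_zero).1 h)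

theorem finite_support [FiniteDimensional F D] (hD : IsGradedDivision gr) : {g | gr g ≠ ⊥}.Finite :=
  WellFoundedGT.finite_ne_bot_of_iSupIndep hD.indep

theorem add_ne_bot (hD : IsGradedDivision gr) {g h : G} (hg : gr g ≠ ⊥) (hh : gr h ≠ ⊥) : gr (g + h) ≠ ⊥ := by
  obtain ⟨a, ha, ha0⟩ := (Submodule.ne_bot_iff _).1 hg
  obtain ⟨b, hb, hb0⟩ := (Submodule.ne_bot_iff _).1 hh
  exact (Submodule.ne_bot_iff _).2 ⟨a * b, hD.mul_mem ha hb, hD.mul_ne_zero ha ha0 hb0⟩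

/-- Translation by an element of the support is an injective self-map of the support, which is finite,
hence is surjective. -/
theorem exists_add_eq [FiniteDimensional F D] (hD : IsGradedDivision gr) {g k : G} (hg : gr g ≠ ⊥) (hk : gr k ≠ ⊥) :
    ∃ h, gr h ≠ ⊥ ∧ g + h = k :=
  ((hD.finite_support.injOn_iff_bijOn_of_mapsTo (f := fun h => g + h)
    fun _ hh => hD.add_ne_bot hg hh).1 fun _ _ _ _ h => add_left_cancel h).surjOn hk

theorem zero_ne_bot [FiniteDimensional F D] [Nontrivial D] (hD : IsGradedDivision gr) : gr 0 ≠ ⊥ := by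
  obtain ⟨g, hg⟩ : ∃ g, gr g ≠ ⊥ := by
    by_contra! h
    exact bot_ne_top ((iSup_eq_bot.2 h).symm.trans hD.top)
  obtain ⟨h, hh, e⟩ := hD.exists_add_eq hg hg
  rwa [add_eq_left.1 e] at hh

/-- Left multiplication by a nonzero `e` of degree `0` is injective on the finite-dimensional space
`gr 0`, so `e * f = e` for some `f` in `gr 0`, and cancelling `e` gives `f = 1`. -/
theorem one_mem [FiniteDimensional F D] [Nontrivial D] (hD : IsGradedDivision gr) : (1 : D) ∈ gr 0 := by
  obtain ⟨e, he, he0⟩ := (Submodule.ne_bot_iff _).1 hD.zero_ne_bot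
  let L : gr 0 →ₗ[F] gr 0 := (LinearMap.mulLeft F e).restrict fun x hx => by
    simpa using hD.mul_mem he hx
  have hL : Function.Injective L := fun x y h =>
    Subtype.ext ((hD.isUnit he he0).mul_left_cancel (congrArg Subtype.val h))
  obtain ⟨f, hf⟩ := LinearMap.injective_iff_surjective.1 hL ⟨e, he⟩
  have hf' : e * f.1 = e * 1 := by rw [mul_one]; exact congrArg Subtype.val hf
  rw [← (hD.isUnit he he0).mul_left_cancel hf']
  exact f.2

theorem pow_mem [FiniteDimensional F D] [Nontrivial D] (hD : IsGradedDivision gr) {g : G} {a : D} (ha : a ∈ gr g) (n : ℕ) :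
    a ^ n ∈ gr (n • g) := by
  induction n with
  | zero => simpa using hD.one_mem
  | succ n ih => rw [pow_succ, succ_nsmul]; exact hD.mul_mem ih ha

theorem ofFn_prod_mem [FiniteDimensional F D] [Nontrivial D] (hD : IsGradedDivision gr) {r : ℕ} (v : Fin r → D)
    (g : Fin r → G) (h : ∀ i, v i ∈ gr (g i)) : (List.ofFn v).prod ∈ gr (∑ i, g i) := by
  induction r with
  | zero => simpa using hD.one_mem
  | succ r ih =>
    rw [List.ofFn_succ, List.prod_cons, Fin.sum_univ_succ]
    exact hD.mul_mem (h 0) (ih _ _ fun i => h i.succ)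

/-- An element of degree `0` has an eigenvalue `l`, and the difference with `l` is homogeneous and not
invertible, hence zero. -/
theorem exists_scalar [IsAlgClosed F] [FiniteDimensional F D] [Nontrivial D] (hD : IsGradedDivision gr) {c : D}
    (hc : c ∈ gr 0) : ∃ l : F, c = algebraMap F D l := by
  obtain ⟨l, hl⟩ := spectrum.nonempty_of_isAlgClosed_of_finiteDimensional F c
  refine ⟨l, ?_⟩
  by_contra hne
  refine hl (hD.isUnit (g := 0) ?_ (sub_ne_zero.2 (Ne.symm hne)))
  rw [Algebra.algebraMap_eq_smul_one]
  exact (gr 0).sub_mem ((gr 0).smul_mem l hD.one_mem) hc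

/-- Every nonzero component is a line: multiplying by an element of opposite degree moves it into
`gr 0 = F`. -/
theorem exists_smul [IsAlgClosed F] [FiniteDimensional F D] [Nontrivial D] (hD : IsGradedDivision gr) {g : G} {a b : D}
    (ha : a ∈ gr g) (ha0 : a ≠ 0) (hb : b ∈ gr g) : ∃ l : F, b = l • a := by
  have hg : gr g ≠ ⊥ := (Submodule.ne_bot_iff _).2 ⟨a, ha, ha0⟩
  obtain ⟨h, hh, e⟩ := hD.exists_add_eq hg hD.zero_ne_bot
  obtain ⟨u, hu, hu0⟩ := (Submodule.ne_bot_iff _).1 hh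
  rw [add_comm] at e
  obtain ⟨l, hl⟩ := hD.exists_scalar (e ▸ hD.mul_mem hu ha)
  obtain ⟨m, hm⟩ := hD.exists_scalar (e ▸ hD.mul_mem hu hb)
  have hl0 : l ≠ 0 := by
    rintro rfl
    rw [map_zero] at hl
    exact hD.mul_ne_zero hu hu0 ha0 hl
  refine ⟨m * l⁻¹, (hD.isUnit hu hu0).mul_left_cancel ?_⟩
  rw [mul_smul_comm, hl, hm, Algebra.algebraMap_eq_smul_one, Algebra.algebraMap_eq_smul_one,
    smul_smul, mul_assoc, inv_mul_cancel₀ hl0, mul_one]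

end IsGradedDivision

/-- The support of a finite-dimensional graded division algebra, as a subgroup of `G`. -/
def supportSubgroup [FiniteDimensional F D] [Nontrivial D] {gr : G → Submodule F D}
    (hD : IsGradedDivision gr) : AddSubgroup G where
  carrier := {g | gr g ≠ ⊥}
  add_mem' := hD.add_ne_bot
  zero_mem' := hD.zero_ne_bot
  neg_mem' := fun {g} hg => by
    obtain ⟨h, hh, e⟩ := hD.exists_add_eq hg hD.zero_ne_bot
    rwa [eq_neg_of_add_eq_zero_right e] at hh

/-- The commutation scalars of homogeneous elements form an alternating bicharacter of the support,
with values in `Fˣ` written additively. -/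
theorem IsGradedDivision.exists_bichar [IsAlgClosed F] [FiniteDimensional F D] [Nontrivial D]
    {gr : G → Submodule F D} (hD : IsGradedDivision gr) :
    ∃ β : supportSubgroup hD →+ supportSubgroup hD →+ Additive Fˣ,
      (∀ (s t : supportSubgroup hD) (a b : D), a ∈ gr s → b ∈ gr t →
        a * b = (((β s t).toMul : Fˣ) : F) • (b * a)) ∧ ∀ s, β s s = 0 := by
  have hX : ∀ s : supportSubgroup hD, ∃ x, x ∈ gr s ∧ x ≠ 0 := fun s =>
    (Submodule.ne_bot_iff _).1 s.2
  choose X hXm hX0 using hX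
  have hex : ∀ s t : supportSubgroup hD, ∃ u : Fˣ, ∀ a b : D, a ∈ gr s → b ∈ gr t →
      a * b = (u : F) • (b * a) := by
    intro s t
    obtain ⟨l, hl⟩ := hD.exists_smul (hD.mul_mem (hXm t) (hXm s))
      (hD.mul_ne_zero (hXm t) (hX0 t) (hX0 s)) (add_comm (s : G) t ▸ hD.mul_mem (hXm s) (hXm t))
    have hl0 : l ≠ 0 := by
      rintro rfl
      rw [zero_smul] at hl
      exact hD.mul_ne_zero (hXm s) (hX0 s) (hX0 t) hl
    refine ⟨Units.mk0 l hl0, fun a b ha hb => ?_⟩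
    obtain ⟨m, rfl⟩ := hD.exists_smul (hXm s) (hX0 s) ha
    obtain ⟨k, rfl⟩ := hD.exists_smul (hXm t) (hX0 t) hb
    simp only [smul_mul_smul_comm, hl, Units.val_mk0, smul_smul]
    congr 1
    ring
  choose u hu using hex
  have huniq : ∀ (k l : Fˣ) (z : D), z ≠ 0 → (k : F) • z = (l : F) • z → k = l :=
    fun k l z hz h => Units.ext (smul_left_injective F hz h)
  have hleft : ∀ s s' t, u (s + s') t = u s t * u s' t := by
    intro s s' t
    refine huniq _ _ (X t * (X s * X s')) (hD.mul_ne_zero (hXm t) (hX0 t)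
      (hD.mul_ne_zero (hXm s) (hX0 s) (hX0 s'))) ?_
    rw [← hu (s + s') t _ _ (hD.mul_mem (hXm s) (hXm s')) (hXm t), mul_assoc,
      hu s' t _ _ (hXm s') (hXm t), mul_smul_comm, ← mul_assoc, hu s t _ _ (hXm s) (hXm t),
      smul_mul_assoc, smul_smul, mul_assoc, Units.val_mul, mul_comm]
  have hright : ∀ s t t', u s (t + t') = u s t * u s t' := by
    intro s t t'
    refine huniq _ _ (X t * X t' * X s) (hD.mul_ne_zero (hD.mul_mem (hXm t) (hXm t'))
      (hD.mul_ne_zero (hXm t) (hX0 t) (hX0 t')) (hX0 s)) ?_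
    rw [← hu s (t + t') _ _ (hXm s) (hD.mul_mem (hXm t) (hXm t')), ← mul_assoc,
      hu s t _ _ (hXm s) (hXm t), smul_mul_assoc, mul_assoc, hu s t' _ _ (hXm s) (hXm t'),
      mul_smul_comm, smul_smul, mul_assoc, Units.val_mul]
  refine ⟨AddMonoidHom.mk' (fun s => AddMonoidHom.mk' (fun t => Additive.ofMul (u s t)) fun t t' =>
    congrArg Additive.ofMul (hright s t t')) fun s s' => ?_, hu, fun s => ?_⟩
  · ext t
    exact congrArg (fun z : Fˣ => (Additive.ofMul z).toMul.val) (hleft s s' t)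
  · refine congrArg Additive.ofMul (huniq (u s s) 1 (X s * X s)
      (hD.mul_ne_zero (hXm s) (hX0 s) (hX0 s)) ?_)
    rw [← hu s s _ _ (hXm s) (hXm s), Units.val_one, one_smul]

/-- A degree in the radical of the commutation bicharacter carries a nonzero central element, which is
a scalar and so has degree `0`. -/
theorem IsGradedDivision.nondegenerate [FiniteDimensional F D] [Nontrivial D]
    {gr : G → Submodule F D} (hD : IsGradedDivision gr)
    (hcentral : Subalgebra.center F D = ⊥)
    {β : supportSubgroup hD →+ supportSubgroup hD →+ Additive Fˣ}
    (hβ : ∀ (s t : supportSubgroup hD) (a b : D), a ∈ gr s → b ∈ gr t →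
        a * b = (((β s t).toMul : Fˣ) : F) • (b * a))
    (s : supportSubgroup hD) (hs : ∀ t, β s t = 0) : s = 0 := by
  obtain ⟨a, ha, ha0⟩ := (Submodule.ne_bot_iff _).1 s.2
  have hcomm : ∀ g, gr g ≤ Subalgebra.toSubmodule (Subalgebra.centralizer F {a}) := by
    intro g b hb
    rw [Subalgebra.mem_toSubmodule, Subalgebra.mem_centralizer_iff]
    intro a' ha'
    rw [Set.mem_singleton_iff.1 ha']
    by_cases hg : gr g = ⊥
    · rw [hg, Submodule.mem_bot] at hb
      simp [hb]
    · rw [hβ s ⟨g, hg⟩ a b ha hb, hs]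
      simp
  have hac : a ∈ Subalgebra.center F D := by
    rw [Subalgebra.mem_center_iff]
    intro b
    have hb : b ∈ iSup gr := hD.top ▸ Submodule.mem_top
    have := iSup_le hcomm hb
    rw [Subalgebra.mem_toSubmodule, Subalgebra.mem_centralizer_iff] at this
    exact (this a rfl).symm
  rw [hcentral, Algebra.mem_bot] at hac
  obtain ⟨l, rfl⟩ := hac
  by_contra hs0
  refine ha0 ((hD.indep.pairwiseDisjoint (i := (s : G)) (j := 0) fun h => hs0 (Subtype.ext h)).le_bot
    ⟨ha, ?_⟩)
  rw [Algebra.algebraMap_eq_smul_one]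
  exact (gr 0).smul_mem l hD.one_mem

/-- The `n`-th power of a homogeneous element of degree `s` with `n • s = 0` is a scalar, which can be
normalized to `1` by extracting a root. -/
theorem IsGradedDivision.exists_root [IsAlgClosed F] [FiniteDimensional F D] [Nontrivial D]
    {gr : G → Submodule F D} (hD : IsGradedDivision gr) {s : G} (hs : gr s ≠ ⊥) {n : ℕ}
    (hn : 0 < n) (hns : n • s = 0) : ∃ x ∈ gr s, x ^ n = 1 := by
  obtain ⟨a, ha, ha0⟩ := (Submodule.ne_bot_iff _).1 hs
  obtain ⟨l, hl⟩ := hD.exists_scalar (hns ▸ hD.pow_mem ha n)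
  have hl0 : l ≠ 0 := by
    rintro rfl
    rw [map_zero] at hl
    exact ((hD.isUnit ha ha0).pow n).ne_zero hl
  obtain ⟨z, hz⟩ := IsAlgClosed.exists_pow_nat_eq l⁻¹ hn
  refine ⟨z • a, (gr s).smul_mem z ha, ?_⟩
  rw [smul_pow, hz, hl, Algebra.algebraMap_eq_smul_one, smul_smul, inv_mul_cancel₀ hl0, one_smul]

theorem IsGradedDivision.adjoin_le_iSup [FiniteDimensional F D] [Nontrivial D]
    {gr : G → Submodule F D} (hD : IsGradedDivision gr) {a b : G} {x y : D} (hx : x ∈ gr a)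
    (hy : y ∈ gr b) (K : AddSubgroup G) (ha : a ∈ K) (hb : b ∈ K) :
    Subalgebra.toSubmodule (Algebra.adjoin F {x, y}) ≤ ⨆ h : K, gr (h : G) := by
  have hmem : ∀ {g : G} {z : D}, g ∈ K → z ∈ gr g → z ∈ ⨆ h : K, gr (h : G) :=
    fun {g z} hg hz => Submodule.mem_iSup_of_mem (p := fun h : K => gr (h : G)) ⟨g, hg⟩ hz
  have hmul : (⨆ h : K, gr (h : G)) * (⨆ h : K, gr (h : G)) ≤ ⨆ h : K, gr (h : G) := by
    rw [Submodule.iSup_mul]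
    refine iSup_le fun g => ?_
    rw [Submodule.mul_iSup]
    exact iSup_le fun h => Submodule.mul_le.2 fun u hu v hv =>
      hmem (K.add_mem g.2 h.2) (hD.mul_mem hu hv)
  intro z hz
  rw [Subalgebra.mem_toSubmodule] at hz
  induction hz using Algebra.adjoin_induction with
  | mem z hz =>
    rcases hz with rfl | rfl
    exacts [hmem ha hx, hmem hb hy]
  | algebraMap l =>
    rw [Algebra.algebraMap_eq_smul_one]
    exact Submodule.smul_mem _ l (hmem K.zero_mem hD.one_mem)
  | add u v hu hv ihu ihv => exact Submodule.add_mem _ ihu ihv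
  | mul u v hu hv ihu ihv => exact hmul (Submodule.mul_mem_mul ihu ihv)

theorem IsGradedDivision.iSup_le_span [IsAlgClosed F] [FiniteDimensional F D] [Nontrivial D]
    {gr : G → Submodule F D} (hD : IsGradedDivision gr) {a b : G} {x y : D} (hx : x ∈ gr a)
    (hy : y ∈ gr b) {n : ℕ} [NeZero n] (ha : n • a = 0) (hb : n • b = 0) (hxn : x ^ n = 1)
    (hyn : y ^ n = 1) :
    (⨆ h : AddSubgroup.closure {a, b}, gr (h : G)) ≤
      Submodule.span F (Set.range fun p : ZMod n × ZMod n => x ^ p.1.val * y ^ p.2.val) := by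
  refine iSup_le fun ⟨h, hh⟩ z hz => ?_
  rw [← SetLike.mem_coe, ← range_zmod_eq_closure ha hb] at hh
  obtain ⟨p, rfl⟩ := hh
  have hxu : IsUnit x := IsUnit.of_pow_eq_one hxn (NeZero.ne n)
  have hyu : IsUnit y := IsUnit.of_pow_eq_one hyn (NeZero.ne n)
  obtain ⟨l, rfl⟩ := hD.exists_smul (hD.mul_mem (hD.pow_mem hx p.1.val) (hD.pow_mem hy p.2.val))
    ((hxu.pow _).mul (hyu.pow _)).ne_zero hz
  exact Submodule.smul_mem _ l (Submodule.subset_span ⟨p, rfl⟩)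

theorem span_monomials_le_adjoin (x y : D) (n : ℕ) :
    Submodule.span F (Set.range fun p : ZMod n × ZMod n => x ^ p.1.val * y ^ p.2.val) ≤
      Subalgebra.toSubmodule (Algebra.adjoin F {x, y}) := by
  rw [Submodule.span_le]
  rintro _ ⟨p, rfl⟩
  rw [SetLike.mem_coe, Subalgebra.mem_toSubmodule]
  exact mul_mem (pow_mem (Algebra.subset_adjoin (by simp)) _)
    (pow_mem (Algebra.subset_adjoin (by simp)) _)

theorem commute_of_mem_adjoin {s t : Set D} (h : ∀ x ∈ s, ∀ y ∈ t, Commute x y) {u v : D}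
    (hu : u ∈ Algebra.adjoin F s) (hv : v ∈ Algebra.adjoin F t) : Commute u v := by
  have h1 : ∀ x ∈ s, Commute x v := fun x hx => by
    have : Algebra.adjoin F t ≤ Subalgebra.centralizer F {x} := Algebra.adjoin_le fun y hy => by
      rw [SetLike.mem_coe, Subalgebra.mem_centralizer_iff]
      rintro _ rfl
      exact h _ hx y hy
    exact Subalgebra.mem_centralizer_iff F |>.1 (this hv) x rfl
  have : Algebra.adjoin F s ≤ Subalgebra.centralizer F {v} := Algebra.adjoin_le fun y hy => by
    rw [SetLike.mem_coe, Subalgebra.mem_centralizer_iff]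
    rintro _ rfl
    exact (h1 y hy).symm
  exact (Subalgebra.mem_centralizer_iff F |>.1 (this hu) v rfl).symm

end GradedDivision

/-! ### The tensor decomposition -/

/-- Given homogeneous generators `x i, y i` whose degrees form independent planes spanning the support,
with generators from different planes commuting, multiplication identifies the tensor product of the
subalgebras they generate with `D`. -/
theorem IsGradedDivision.multiplication_equiv {F D G : Type*} [Field F] [Ring D] [Algebra F D]
    [AddCommGroup G] [IsAlgClosed F] [FiniteDimensional F D] [Nontrivial D]
    {gr : G → Submodule F D} (hD : IsGradedDivision gr) {r : ℕ} (nn : Fin r → ℕ)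
    (hnn : ∀ i, 0 < nn i) (a b : Fin r → G) (x y : Fin r → D) (Dsub : Fin r → Subalgebra F D)
    (hDsub : ∀ i, Dsub i = Algebra.adjoin F {x i, y i})
    (hle : ∀ i, Subalgebra.toSubmodule (Dsub i) ≤ Submodule.span F
      (Set.range fun p : ZMod (nn i) × ZMod (nn i) => x i ^ p.1.val * y i ^ p.2.val))
    (hx : ∀ i, x i ∈ gr (a i)) (hy : ∀ i, y i ∈ gr (b i))
    (hxn : ∀ i, x i ^ nn i = 1) (hyn : ∀ i, y i ^ nn i = 1)
    (hcomm : ∀ i j, i ≠ j → ∀ u ∈ ({x i, y i} : Set D), ∀ v ∈ ({x j, y j} : Set D), Commute u v)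
    (hspan : ∀ g, gr g ≠ ⊥ → ∃ c d : Fin r → ℕ, g = ∑ i, (c i • a i + d i • b i))
    (hinj : Function.Injective fun p : ∀ i, ZMod (nn i) × ZMod (nn i) =>
      ∑ i, ((p i).1.val • a i + (p i).2.val • b i)) :
    ∃ Φ : (⨂[F] i : Fin r, (Dsub i : Type _)) ≃ₐ[F] D,
      ∀ v : ∀ i, Dsub i, Φ (PiTensorProduct.tprod F fun i => v i) =
        ((List.finRange r).map fun i => (v i : D)).prod := by
  have : ∀ i, NeZero (nn i) := fun i => ⟨(hnn i).ne'⟩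
  let f : MultilinearMap F (fun i => Dsub i) D :=
    (MultilinearMap.mkPiAlgebraFin F r D).compLinearMap fun i => (Dsub i).val.toLinearMap
  have hf : ∀ v, f v = (List.ofFn fun i => (v i : D)).prod := fun v => rfl
  let φ : (⨂[F] i : Fin r, (Dsub i : Type _)) →ₐ[F] D := PiTensorProduct.liftAlgHom f
    (by simp [hf])
    (fun v w => by
      simp only [hf, Pi.mul_apply, MulMemClass.coe_mul]
      refine list_ofFn_prod_mul _ _ fun i j hij => ?_
      exact commute_of_mem_adjoin (hcomm i j hij)
        (by rw [← hDsub]; exact (v i).2) (by rw [← hDsub]; exact (w j).2))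
  have hφ : ∀ v : ∀ i, Dsub i, φ (PiTensorProduct.tprod F v) = (List.ofFn fun i => (v i : D)).prod :=
    fun v => by simp [φ, hf]
  have hxu : ∀ i, IsUnit (x i) := fun i => IsUnit.of_pow_eq_one (hxn i) (hnn i).ne'
  have hyu : ∀ i, IsUnit (y i) := fun i => IsUnit.of_pow_eq_one (hyn i) (hnn i).ne'
  have hmon : ∀ c d : Fin r → ℕ, ∃ z ∈ LinearMap.range φ.toLinearMap,
      z ≠ 0 ∧ z ∈ gr (∑ i, (c i • a i + d i • b i)) := by
    intro c d
    let v : ∀ i, Dsub i := fun i => ⟨x i ^ c i * y i ^ d i, by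
      rw [hDsub]
      exact MulMemClass.mul_mem (_root_.pow_mem (Algebra.subset_adjoin (by simp)) _)
        (_root_.pow_mem (Algebra.subset_adjoin (by simp)) _)⟩
    refine ⟨_, ⟨PiTensorProduct.tprod F v, hφ v⟩, IsUnit.ne_zero ?_, hD.ofFn_prod_mem _ _ fun i =>
      hD.mul_mem (hD.pow_mem (hx i) _) (hD.pow_mem (hy i) _)⟩
    refine List.prod_isUnit fun z hz => ?_
    obtain ⟨i, rfl⟩ := (List.mem_ofFn' _ _).1 hz
    exact ((hxu i).pow _).mul ((hyu i).pow _)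
  have hsurj : Function.Surjective φ.toLinearMap := by
    rw [← LinearMap.range_eq_top, eq_top_iff, ← hD.top]
    refine iSup_le fun g w hw => ?_
    by_cases hg : gr g = ⊥
    · rw [hg, Submodule.mem_bot] at hw
      exact hw ▸ Submodule.zero_mem _
    · obtain ⟨c, d, rfl⟩ := hspan g hg
      obtain ⟨z, hzr, hz0, hz⟩ := hmon c d
      obtain ⟨l, rfl⟩ := hD.exists_smul hz hz0 hw
      exact Submodule.smul_mem _ l hzr
  have hdim1 : ∀ i, Module.finrank F (Dsub i) ≤ Fintype.card (ZMod (nn i) × ZMod (nn i)) := fun i =>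
    (Submodule.finrank_mono (hle i)).trans (finrank_range_le_card _)
  have hdimT : Module.finrank F (⨂[F] i : Fin r, (Dsub i : Type _)) =
      ∏ i, Module.finrank F (Dsub i) := by
    rw [Module.finrank_eq_card_basis
      (Basis.piTensorProduct fun i => Module.finBasis F (Dsub i)), Fintype.card_pi]
    simp
  have hfin : FiniteDimensional F (⨂[F] i : Fin r, (Dsub i : Type _)) :=
    Module.Basis.finiteDimensional_of_finite
      (Basis.piTensorProduct fun i => Module.finBasis F (Dsub i))
  -- nonzero monomials of distinct degrees are linearly independent
  have hdimD : Fintype.card (∀ i, ZMod (nn i) × ZMod (nn i)) ≤ Module.finrank F D := by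
    choose z _ hz0 hz using fun p : ∀ i, ZMod (nn i) × ZMod (nn i) =>
      hmon (fun i => (p i).1.val) (fun i => (p i).2.val)
    exact (iSupIndep.linearIndependent _ (hD.indep.comp hinj) hz hz0).fintype_card_le_finrank
  have hdim : Module.finrank F (⨂[F] i : Fin r, (Dsub i : Type _)) = Module.finrank F D := by
    refine le_antisymm ?_ (LinearMap.finrank_le_finrank_of_surjective hsurj)
    rw [hdimT]
    rw [Fintype.card_pi] at hdimD
    exact (Finset.prod_le_prod' fun i _ => hdim1 i).trans hdimD
  refine ⟨AlgEquiv.ofBijective φ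
    ⟨(LinearMap.injective_iff_surjective_of_finrank_eq_finrank hdim).2 hsurj, hsurj⟩, fun v => ?_⟩
  rw [← List.ofFn_eq_map]
  exact hφ v

/-- A finite-dimensional central graded division algebra `D` over an
algebraically closed field `F` of characteristic `0`, graded by an abelian group `G` with
support `H`, decomposes as follows: `H = H₁ × ⋯ × H_r` internally, with each `Hᵢ ≅ ℤ_{nᵢ}²`
for prime powers `nᵢ`, and there are graded subalgebras `Dᵢ = ⊕_{h∈Hᵢ} D_h`, each graded
isomorphic to `A_{nᵢ}` (i.e. generated by homogeneous invertible `x, y` whose degrees freely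
generate `Hᵢ`, with `x^{nᵢ} = y^{nᵢ} = 1` and `xy = ε yx` for a primitive `nᵢ`-th root of
unity `ε`), such that the multiplication map `D₁ ⊗ ⋯ ⊗ D_r → D` is an isomorphism of graded
algebras. -/
theorem stmt_1 (F : Type) [Field F] [IsAlgClosed F] [CharZero F]
    (D : Type) [Ring D] [Nontrivial D] [Algebra F D] [FiniteDimensional F D]
    (G : Type) [AddCommGroup G] [DecidableEq G]
    (gr : G → Submodule F D)
    (hinternal : DirectSum.IsInternal gr)
    (hmul : ∀ g h : G, ∀ a ∈ gr g, ∀ b ∈ gr h, a * b ∈ gr (g + h))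
    (hdiv : ∀ g : G, ∀ a ∈ gr g, a ≠ 0 → IsUnit a)
    (hcentral : Subalgebra.center F D = ⊥) :
    ∃ (r : ℕ) (nn : Fin r → ℕ) (H : Fin r → AddSubgroup G),
      (∀ i, IsPrimePow (nn i)) ∧
      -- `H = H₁ × ⋯ × H_r`, an internal direct product whose image is the support
      Function.Injective (fun x : ∀ i, (H i : AddSubgroup G) => ∑ i, (x i : G)) ∧
      Set.range (fun x : ∀ i, (H i : AddSubgroup G) => ∑ i, (x i : G)) =
        {g : G | gr g ≠ ⊥} ∧
      ∃ Dsub : Fin r → Subalgebra F D,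
        -- `Dᵢ = ⊕_{h ∈ Hᵢ} D_h`
        (∀ i, Subalgebra.toSubmodule (Dsub i) = ⨆ h : (H i : AddSubgroup G), gr (h : G)) ∧
        -- each `Dᵢ` is graded isomorphic to `A_{nᵢ}`
        (∀ i, ∃ (a b : G) (x y : D) (ε : F),
          a ∈ H i ∧ b ∈ H i ∧ x ∈ gr a ∧ y ∈ gr b ∧
          -- `(a, b)` freely generates `Hᵢ ≅ ℤ_{nᵢ} × ℤ_{nᵢ}`
          Function.Injective
            (fun p : ZMod (nn i) × ZMod (nn i) => p.1.val • a + p.2.val • b) ∧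
          Set.range (fun p : ZMod (nn i) × ZMod (nn i) => p.1.val • a + p.2.val • b) =
            (H i : Set G) ∧
          -- the defining relations of `A_{nᵢ}`
          x ^ nn i = 1 ∧ y ^ nn i = 1 ∧ IsPrimitiveRoot ε (nn i) ∧
          x * y = ε • (y * x) ∧
          Dsub i = Algebra.adjoin F {x, y}) ∧
        -- the multiplication map `D₁ ⊗ ⋯ ⊗ D_r → D` is an isomorphism of (graded) algebras
        ∃ Φ : (⨂[F] i : Fin r, (Dsub i : Type)) ≃ₐ[F] D,
          ∀ v : ∀ i, Dsub i,
            Φ (PiTensorProduct.tprod F fun i => v i) =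
              ((List.finRange r).map fun i => (v i : D)).prod := by
  have hD : IsGradedDivision gr :=
    ⟨hinternal.submodule_iSupIndep, hinternal.submodule_iSup_eq_top,
      fun {g h a b} ha hb => hmul g h a ha b hb, fun {g a} ha ha0 => hdiv g a ha ha0⟩
  have : Finite (supportSubgroup hD) := hD.finite_support.to_subtype
  obtain ⟨β, hβ, halt⟩ := hD.exists_bichar
  obtain ⟨r, nn, a, b, hB, -, -, hspan⟩ := exists_hyperbolicBasis β halt additive_units_cyclic ⊤
    fun g _ h => hD.nondegenerate hcentral hβ g fun t => h t trivial
  have hpos : ∀ i, 0 < nn i := fun i => (hB.primePow i).pos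
  have : ∀ i, NeZero (nn i) := fun i => ⟨(hpos i).ne'⟩
  have hna : ∀ i, nn i • (a i : G) = 0 := fun i => congrArg Subtype.val (hB.nsmul_a i)
  have hnb : ∀ i, nn i • (b i : G) = 0 := fun i => congrArg Subtype.val (hB.nsmul_b i)
  choose x hx hxn using fun i => hD.exists_root (a i).2 (hpos i) (hna i)
  choose y hy hyn using fun i => hD.exists_root (b i).2 (hpos i) (hnb i)
  have hinj : Function.Injective fun p : ∀ i, ZMod (nn i) × ZMod (nn i) =>
      ∑ i, ((p i).1.val • (a i : G) + (p i).2.val • (b i : G)) := by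
    intro p q hpq
    have hS : ∑ i, ((p i).1.val • a i + (p i).2.val • b i) =
        ∑ i, ((q i).1.val • a i + (q i).2.val • b i) := Subtype.ext (by simpa using hpq)
    funext i
    obtain ⟨h1, h2⟩ := hB.modEq halt hS i
    exact Prod.ext (ZMod.val_injective _ (h1.eq_of_lt_of_lt (ZMod.val_lt _) (ZMod.val_lt _)))
      (ZMod.val_injective _ (h2.eq_of_lt_of_lt (ZMod.val_lt _) (ZMod.val_lt _)))
  have hH := fun i => range_zmod_eq_closure (hna i) (hnb i)
  have hDs : ∀ i, Subalgebra.toSubmodule (Algebra.adjoin F {x i, y i}) =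
      ⨆ h : AddSubgroup.closure {(a i : G), (b i : G)}, gr (h : G) := fun i =>
    le_antisymm
      (hD.adjoin_le_iSup (hx i) (hy i) _ (AddSubgroup.subset_closure (by simp))
        (AddSubgroup.subset_closure (by simp)))
      ((hD.iSup_le_span (hx i) (hy i) (hna i) (hnb i) (hxn i) (hyn i)).trans
        (span_monomials_le_adjoin _ _ _))
  have hcoord : ∀ u : ∀ i, AddSubgroup.closure {(a i : G), (b i : G)},
      ∃ p : ∀ i, ZMod (nn i) × ZMod (nn i),
        ∀ i, (p i).1.val • (a i : G) + (p i).2.val • (b i : G) = u i := by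
    intro u
    have hu : ∀ i, (u i : G) ∈ Set.range fun p : ZMod (nn i) × ZMod (nn i) =>
        p.1.val • (a i : G) + p.2.val • (b i : G) := fun i => by
      rw [hH i]
      exact (u i).2
    choose p hp using hu
    exact ⟨p, hp⟩
  have hspanG : ∀ g, gr g ≠ ⊥ →
      ∃ c d : Fin r → ℕ, g = ∑ i, (c i • (a i : G) + d i • (b i : G)) := by
    intro g hg
    obtain ⟨c, d, h⟩ := hspan ⟨g, hg⟩ trivial
    exact ⟨c, d, by simpa using congrArg Subtype.val h⟩
  refine ⟨r, nn, fun i => AddSubgroup.closure {(a i : G), (b i : G)}, hB.primePow, ?_, ?_,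
    fun i => Algebra.adjoin F {x i, y i}, hDs, fun i => ⟨a i, b i, x i, y i,
      ((β (a i) (b i)).toMul : Fˣ), AddSubgroup.subset_closure (by simp),
      AddSubgroup.subset_closure (by simp), hx i, hy i, ?_, hH i, hxn i, hyn i, ?_,
      hβ _ _ _ _ (hx i) (hy i), rfl⟩, ?_⟩
  · intro u u' huu
    obtain ⟨p, hp⟩ := hcoord u
    obtain ⟨q, hq⟩ := hcoord u'
    have hpq : p = q := hinj (by simpa only [hp, hq] using huu)
    funext i
    exact Subtype.ext (by rw [← hp, ← hq, hpq])
  · ext g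
    constructor
    · rintro ⟨u, rfl⟩
      refine (supportSubgroup hD).sum_mem fun i _ => ?_
      refine (AddSubgroup.closure_le _).2 ?_ (u i).2
      rintro _ (rfl | rfl)
      exacts [(a i).2, (b i).2]
    · intro hg
      obtain ⟨c, d, rfl⟩ := hspanG g hg
      exact ⟨fun i => ⟨c i • (a i : G) + d i • (b i : G), AddSubgroup.add_mem _
        (AddSubgroup.nsmul_mem _ (AddSubgroup.subset_closure (by simp)) _)
        (AddSubgroup.nsmul_mem _ (AddSubgroup.subset_closure (by simp)) _)⟩, rfl⟩
  · intro p q hpq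
    -- the coordinates within one plane are extended by zero to all planes
    have hsingle : ∀ p : ZMod (nn i) × ZMod (nn i),
        ∑ j, ((Pi.single (M := fun j => ZMod (nn j) × ZMod (nn j)) i p j).1.val • (a j : G) +
          (Pi.single (M := fun j => ZMod (nn j) × ZMod (nn j)) i p j).2.val • (b j : G)) =
        p.1.val • (a i : G) + p.2.val • (b i : G) := by
      intro p
      rw [Finset.sum_eq_single i]
      · simp
      · intro j _ hj
        simp [Pi.single_eq_of_ne hj]
      · simp
    refine Pi.single_injective (M := fun j => ZMod (nn j) × ZMod (nn j)) i (hinj ?_)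
    simpa only [hsingle] using hpq
  · rw [IsPrimitiveRoot.coe_units_iff, ← hB.order i]
    exact IsPrimitiveRoot.orderOf (β (a i) (b i)).toMul
  · refine hD.multiplication_equiv nn hpos (fun i => a i) (fun i => b i) x y _ (fun i => rfl)
      (fun i => ?_) hx hy hxn hyn ?_ hspanG hinj
    · exact (hDs i).trans_le (hD.iSup_le_span (hx i) (hy i) (hna i) (hnb i) (hxn i) (hyn i))
    · have hc : ∀ s t : supportSubgroup hD, β s t = 0 → ∀ u ∈ gr s, ∀ v ∈ gr t, Commute u v := by
        intro s t h u hu v hv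
        have := hβ s t u v hu hv
        rw [h] at this
        exact this.trans (by simp)
      intro i j hij u hu v hv
      obtain ⟨h1, h2, h3, h4⟩ := hB.ortho i j hij
      rcases hu with rfl | rfl <;> rcases hv with rfl | rfl
      exacts [hc _ _ h1 _ (hx i) _ (hx j), hc _ _ h2 _ (hx i) _ (hy j),
        hc _ _ h3 _ (hy i) _ (hx j), hc _ _ h4 _ (hy i) _ (hy j)]
end

section
/- Let Γ: R = ⊕_{g∈G} R_g be a grading of the matrix algebra R = Mat_n(F) by an abelian group G, and let V¹ and V² be two irreducible G-graded left modules for R. Then there exists an R-module isomorphism φ: V¹ → V² that is homogeneous of some degree g ∈ G. Moreover, letting Dⁱ = End_R(Vⁱ) with the grading induced from Vⁱ (acting on the right), there is a graded algebra isomorphism ψ: D¹ → D² preserving each homogeneous component such that φ(vd) = φ(v)ψ(d) for all v ∈ V¹ and d ∈ D¹. -/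
/-!
Both modules are compared with one minimal nonzero graded left ideal `I` of `R = Mat_n(F)`, which
exists because `R` is Artinian. Since `R` is simple, a nonzero module `V` is
faithful, so `r • v ≠ 0` for some `r ∈ I` and some *homogeneous* `v ∈ V_h`. The map
`x ↦ x • v` is then an `R`-linear map `I → V` of degree `h` whose kernel and image are graded.
Minimality of `I` makes it injective and irreducibility of `V` makes it surjective
(`GradedIrred.exists_equiv_of_minimal`). Composing the isomorphism `I ≃ V²` with the inverse of
`I ≃ V¹` gives the homogeneous isomorphism `φ`, and `ψ` is conjugation by `φ`. The inverse of a
homogeneous isomorphism is homogeneous because homogeneous maps commute with the projections to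
homogeneous components (`GradedIrred.decompose_map`).
-/

namespace GradedIrred

open DirectSum

/-- A submodule is graded when it contains the homogeneous components of all its elements. -/
def IsGraded {F G R M : Type*} [Field F] [DecidableEq G] [Ring R] [AddCommGroup M] [Module F M]
    [Module R M] (A : G → Submodule F M) [Decomposition A] (W : Submodule R M) : Prop :=
  ∀ x ∈ W, ∀ g, (decompose A x g : M) ∈ W

section

variable {F G R M N : Type*} [Field F] [AddCommGroup G] [DecidableEq G] [Ring R]
  [AddCommGroup M] [Module F M] [Module R M] [AddCommGroup N] [Module F N] [Module R N]

/-- A map of degree `h` intertwines the projections to the components `k` and `k + h`. -/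
lemma decompose_map (A : G → Submodule F M) [Decomposition A] (B : G → Submodule F N)
    [Decomposition B] (f : M →+ N) (h : G) (hf : ∀ k, ∀ x ∈ A k, f x ∈ B (k + h)) (x : M) (k : G) :
    (decompose B (f x) (k + h) : N) = f (decompose A x k : M) := by
  induction x using Decomposition.inductionOn A with
  | zero => simp
  | @homogeneous i m =>
    by_cases hik : i = k
    · subst hik
      rw [decompose_of_mem_same B (hf _ _ m.2), decompose_of_mem_same A m.2]
    · rw [decompose_of_mem_ne B (hf _ _ m.2) (by simpa using hik), decompose_of_mem_ne A m.2 hik,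
        map_zero]
  | add a b ha hb => simp [decompose_add, ha, hb]

/-- An injective map of degree `h` reflects homogeneity. -/
lemma mem_of_map_mem (A : G → Submodule F M) [Decomposition A] (B : G → Submodule F N)
    [Decomposition B] (f : M →+ N) (h : G) (hf : ∀ k, ∀ x ∈ A k, f x ∈ B (k + h))
    (hinj : Function.Injective f) {x : M} {k : G} (hx : f x ∈ B (k + h)) : x ∈ A k := by
  have h1 := decompose_map A B f h hf x k
  rw [decompose_of_mem_same B hx] at h1
  rw [hinj h1]
  exact (decompose A x k).2

lemma IsGraded.restrictScalars_eq_iSup [SMul F R] [IsScalarTower F R M]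
    (A : G → Submodule F M) [Decomposition A] {W : Submodule R M} (hW : IsGraded A W) :
    W.restrictScalars F = ⨆ g : G, W.restrictScalars F ⊓ A g := by
  classical
  refine le_antisymm (fun x hx => ?_) (iSup_le fun g => inf_le_left)
  rw [← sum_support_decompose A x]
  exact Submodule.sum_mem _ fun g _ =>
    Submodule.mem_iSup_of_mem g ⟨hW x hx g, (decompose A x g).2⟩

lemma IsGraded.map (A : G → Submodule F M) [Decomposition A] (B : G → Submodule F N)
    [Decomposition B] (f : M →ₗ[R] N) (h : G) (hf : ∀ k, ∀ x ∈ A k, f x ∈ B (k + h))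
    {W : Submodule R M} (hW : IsGraded A W) : IsGraded B (W.map f) := by
  rintro _ ⟨x, hx, rfl⟩ g
  refine ⟨decompose A x (g - h), hW x hx _, ?_⟩
  have := decompose_map A B f.toAddMonoidHom h hf x (g - h)
  rw [sub_add_cancel] at this
  exact this.symm

lemma IsGraded.inf_ker (A : G → Submodule F M) [Decomposition A] (B : G → Submodule F N)
    [Decomposition B] (f : M →ₗ[R] N) (h : G) (hf : ∀ k, ∀ x ∈ A k, f x ∈ B (k + h))
    {W : Submodule R M} (hW : IsGraded A W) : IsGraded A (W ⊓ LinearMap.ker f) := by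
  rintro x ⟨hx, hx0⟩ g
  refine ⟨hW x hx _, ?_⟩
  have := decompose_map A B f.toAddMonoidHom h hf x g
  have hx0' : f.toAddMonoidHom x = 0 := hx0
  rw [hx0'] at this
  exact this.symm.trans (by simp)

end

variable {F G R V : Type*} [Field F] [AddCommGroup G] [DecidableEq G] [Ring R]
  [Module F R] [AddCommGroup V] [Module F V] [Module R V]

lemma exists_minimal_graded [IsArtinianRing R] [Nontrivial R] (A : G → Submodule F R)
    [Decomposition A] :
    ∃ I : Submodule R R, Minimal (fun J => J ≠ ⊥ ∧ IsGraded A J) I :=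
  exists_minimal_of_wellFoundedLT (fun J : Submodule R R => J ≠ ⊥ ∧ IsGraded A J)
    ⟨⊤, top_ne_bot, fun _ _ _ => trivial⟩

/-- Over a simple ring, some homogeneous vector of a nonzero graded module is not killed by a given
nonzero scalar. -/
lemma exists_homogeneous_smul_ne_zero [IsSimpleRing R] [Nontrivial V] (B : G → Submodule F V)
    [Decomposition B] {r : R} (hr : r ≠ 0) : ∃ h, ∃ v ∈ B h, r • v ≠ 0 := by
  classical
  by_contra! hcon
  have : Nontrivial (AddMonoid.End V) := by
    obtain ⟨v, hv⟩ := exists_ne (0 : V)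
    exact ⟨⟨1, 0, fun h10 => hv (DFunLike.congr_fun h10 v)⟩⟩
  have hinj : Function.Injective (Module.toAddMonoidEnd R V) := RingHom.injective _
  refine hr (hinj ?_)
  rw [map_zero]
  ext v
  change r • v = 0
  rw [← sum_support_decompose B v, Finset.smul_sum]
  exact Finset.sum_eq_zero fun g _ => hcon g _ (decompose B v g).2

/-- A minimal graded left ideal of a simple ring is isomorphic, up to a shift of degree, to every
irreducible graded module; the isomorphism is multiplication onto a homogeneous vector. -/
lemma exists_equiv_of_minimal [IsSimpleRing R] [IsScalarTower F R V] [Nontrivial V]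
    (A : G → Submodule F R) [Decomposition A] (B : G → Submodule F V) [Decomposition B]
    (hsm : ∀ g h : G, ∀ r ∈ A g, ∀ v ∈ B h, r • v ∈ B (g + h))
    (hirr : ∀ W : Submodule R V,
      (W.restrictScalars F = ⨆ g : G, W.restrictScalars F ⊓ B g) → W = ⊥ ∨ W = ⊤)
    {I : Submodule R R} (hI : Minimal (fun J => J ≠ ⊥ ∧ IsGraded A J) I) :
    ∃ (h : G) (e : I ≃ₗ[R] V), ∀ (k : G) (x : I), (x : R) ∈ A k ↔ e x ∈ B (k + h) := by
  obtain ⟨r, hrI, hr⟩ := Submodule.exists_mem_ne_zero_of_ne_bot hI.prop.1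
  obtain ⟨h, v, hv, hrv⟩ := exists_homogeneous_smul_ne_zero B hr
  let f : R →ₗ[R] V := LinearMap.toSpanSingleton R V v
  have hf : ∀ k, ∀ x ∈ A k, f x ∈ B (k + h) := fun k x hx => hsm k h x hx v hv
  have hker : I ⊓ LinearMap.ker f = ⊥ := by
    by_contra hne
    have hle := hI.le_of_le ⟨hne, hI.prop.2.inf_ker A B f h hf⟩ inf_le_left
    exact hrv (hle hrI).2
  have hrange : I.map f = ⊤ := by
    refine (hirr _ (hI.prop.2.map A B f h hf).restrictScalars_eq_iSup).resolve_left fun hbot => ?_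
    have : f r ∈ I.map f := ⟨r, hrI, rfl⟩
    rw [hbot] at this
    exact hrv this
  have hinj : ∀ x ∈ I, f x = 0 → x = 0 := fun x hx h0 =>
    (Submodule.mem_bot R).1 (hker ▸ ⟨hx, h0⟩)
  let e : I ≃ₗ[R] V := LinearEquiv.ofBijective (f.domRestrict I) <| by
    refine ⟨(injective_iff_map_eq_zero _).2 fun x hx => Subtype.ext (hinj x x.2 hx), fun w => ?_⟩
    obtain ⟨x, hx, rfl⟩ : w ∈ I.map f := hrange ▸ trivial
    exact ⟨⟨x, hx⟩, rfl⟩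
  refine ⟨h, e, fun k x => ⟨hf k x, fun hx => ?_⟩⟩
  -- `f` is injective only on `I`, so compare `x` with its component, which also lies in `I`.
  have h1 := decompose_map A B f.toAddMonoidHom h hf x k
  have h2 : f.toAddMonoidHom x ∈ B (k + h) := hx
  rw [decompose_of_mem_same B h2] at h1
  have h3 : (x : R) - decompose A (x : R) k = 0 :=
    hinj _ (I.sub_mem x.2 (hI.prop.2 x x.2 k)) (by rw [map_sub]; exact sub_eq_zero.2 h1)
  rw [sub_eq_zero.1 h3]
  exact (decompose A (x : R) k).2

end GradedIrred

/-- Let `Γ : R = ⊕_{g∈G} R_g` be a grading of `R = Mat_n(F)` by an abelian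
group `G`, and let `V¹`, `V²` be two irreducible `G`-graded left `R`-modules.  Then there is a
homogeneous `R`-module isomorphism `φ : V¹ → V²` of some degree `g`, and a graded isomorphism
`ψ : End_R(V¹) → End_R(V²)` of the centralizer algebras such that `φ(vd) = φ(v)ψ(d)`. -/
theorem stmt_3 (F : Type) [Field F] [IsAlgClosed F] [CharZero F] (n : ℕ)
    (G : Type) [AddCommGroup G] [DecidableEq G]
    (gr : G → Submodule F (Matrix (Fin n) (Fin n) F))
    (hinternal : DirectSum.IsInternal gr)
    (hmul : ∀ g h : G, ∀ a ∈ gr g, ∀ b ∈ gr h, a * b ∈ gr (g + h))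
    (V₁ V₂ : Type)
    [AddCommGroup V₁] [Module F V₁] [Module (Matrix (Fin n) (Fin n) F) V₁]
    [IsScalarTower F (Matrix (Fin n) (Fin n) F) V₁]
    [SMulCommClass (Matrix (Fin n) (Fin n) F) F V₁]
    [AddCommGroup V₂] [Module F V₂] [Module (Matrix (Fin n) (Fin n) F) V₂]
    [IsScalarTower F (Matrix (Fin n) (Fin n) F) V₂]
    [SMulCommClass (Matrix (Fin n) (Fin n) F) F V₂]
    (vgr₁ : G → Submodule F V₁) (vgr₂ : G → Submodule F V₂)
    (hint₁ : DirectSum.IsInternal vgr₁) (hint₂ : DirectSum.IsInternal vgr₂)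
    (hsm₁ : ∀ g h : G, ∀ r ∈ gr g, ∀ v ∈ vgr₁ h, r • v ∈ vgr₁ (g + h))
    (hsm₂ : ∀ g h : G, ∀ r ∈ gr g, ∀ v ∈ vgr₂ h, r • v ∈ vgr₂ (g + h))
    (hnz₁ : ∃ (r : Matrix (Fin n) (Fin n) F) (v : V₁), r • v ≠ 0)
    (hnz₂ : ∃ (r : Matrix (Fin n) (Fin n) F) (v : V₂), r • v ≠ 0)
    (hirr₁ : ∀ W : Submodule (Matrix (Fin n) (Fin n) F) V₁,
        (W.restrictScalars F = ⨆ g : G, W.restrictScalars F ⊓ vgr₁ g) → W = ⊥ ∨ W = ⊤)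
    (hirr₂ : ∀ W : Submodule (Matrix (Fin n) (Fin n) F) V₂,
        (W.restrictScalars F = ⨆ g : G, W.restrictScalars F ⊓ vgr₂ g) → W = ⊥ ∨ W = ⊤) :
    ∃ (g : G) (φ : V₁ ≃ₗ[Matrix (Fin n) (Fin n) F] V₂),
      (∀ g' : G, ∀ v ∈ vgr₁ g', φ v ∈ vgr₂ (g' + g)) ∧
      ∃ ψ : Module.End (Matrix (Fin n) (Fin n) F) V₁ ≃+*
            Module.End (Matrix (Fin n) (Fin n) F) V₂,
        (∀ (c : F) (d : Module.End (Matrix (Fin n) (Fin n) F) V₁), ψ (c • d) = c • ψ d) ∧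
        (∀ (h : G) (d : Module.End (Matrix (Fin n) (Fin n) F) V₁),
          (∀ g' : G, ∀ v ∈ vgr₁ g', d v ∈ vgr₁ (g' + h)) →
          (∀ g' : G, ∀ w ∈ vgr₂ g', ψ d w ∈ vgr₂ (g' + h))) ∧
        (∀ (v : V₁) (d : Module.End (Matrix (Fin n) (Fin n) F) V₁),
          φ (d v) = ψ d (φ v)) := by
  obtain ⟨r₁, v₁, hv₁⟩ := hnz₁
  obtain ⟨r₂, v₂, hv₂⟩ := hnz₂
  have : Nontrivial V₁ := ⟨⟨_, _, hv₁⟩⟩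
  have : Nontrivial V₂ := ⟨⟨_, _, hv₂⟩⟩
  have : Nonempty (Fin n) := by
    by_contra hn
    rw [not_nonempty_iff] at hn
    exact hv₁ (by rw [Subsingleton.elim r₁ 0, zero_smul])
  have : IsArtinianRing (Matrix (Fin n) (Fin n) F) := IsArtinianRing.of_finite F _
  let _ := hinternal.chooseDecomposition
  let _ := hint₁.chooseDecomposition
  let _ := hint₂.chooseDecomposition
  obtain ⟨I, hI⟩ := GradedIrred.exists_minimal_graded gr
  obtain ⟨h₁, e₁, he₁⟩ := GradedIrred.exists_equiv_of_minimal gr vgr₁ hsm₁ hirr₁ hI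
  obtain ⟨h₂, e₂, he₂⟩ := GradedIrred.exists_equiv_of_minimal gr vgr₂ hsm₂ hirr₂ hI
  have hφ : ∀ g' : G, ∀ v ∈ vgr₁ g', (e₁.symm.trans e₂) v ∈ vgr₂ (g' + (h₂ - h₁)) := by
    intro g' v hv
    have h3 : ((e₁.symm v : I) : Matrix (Fin n) (Fin n) F) ∈ gr (g' - h₁) :=
      (he₁ _ _).2 (by simpa using hv)
    have h4 := (he₂ _ _).1 h3
    rwa [show g' - h₁ + h₂ = g' + (h₂ - h₁) by abel] at h4
  refine ⟨h₂ - h₁, e₁.symm.trans e₂, hφ, (e₁.symm.trans e₂).conjRingEquiv, ?_, ?_, ?_⟩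
  · intro c d
    ext w
    -- `c • -` on a module is the action of the scalar matrix `c • 1`, so `φ` is `F`-linear.
    have hc : ∀ v : V₁, (e₁.symm.trans e₂) (c • v) = c • (e₁.symm.trans e₂) v := fun v => by
      rw [← smul_one_smul (Matrix (Fin n) (Fin n) F) c v, map_smul, smul_one_smul]
    exact hc _
  · intro h d hd g' w hw
    have h5 : (e₁.symm.trans e₂).symm w ∈ vgr₁ (g' - (h₂ - h₁)) :=
      GradedIrred.mem_of_map_mem vgr₁ vgr₂ (e₁.symm.trans e₂).toLinearMap.toAddMonoidHom _ hφ
        (e₁.symm.trans e₂).injective (by simpa using hw)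
    have h6 := hφ _ _ (hd _ _ h5)
    rwa [show g' - (h₂ - h₁) + h + (h₂ - h₁) = g' + h by abel] at h6
  · intro v d
    simp [LinearEquiv.conjRingEquiv]
end

section
/- Let Γ: R = ⊕_{g∈G} R_g be a grading of the matrix algebra R = Mat_n(F) by an abelian group G. Then there exists an irreducible G-graded left module V for R, unique up to homogeneous isomorphism, and with D = End_R(V) (graded via V, acting on the right) the map Φ: R → End_D(V), r ↦ (v ↦ rv), is a G-graded algebra isomorphism, where End_D(V) carries the induced grading: f has degree g iff f(V_{g'}) ⊆ V_{g+g'} for all g' ∈ G. -/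
/-!
The matrix algebra `R = Mat_n(F)` is simple and finite-dimensional, and both facts drive the proof.

*Existence.* `R` is left Artinian, so among its nonzero graded left ideals there is a minimal one,
`I`, and `I` is an irreducible graded module (`exists_irreducible`).

*Uniqueness.* A nonzero `R`-module `W` is faithful because `R` is simple (`faithful_of_nontrivial`).
Hence for a graded `W` there are `x ∈ I` and a homogeneous `w ∈ W`, say of degree `h`, with
`x w ≠ 0`, and right multiplication `y ↦ y w` is a nonzero homogeneous map `I → W` of degree `h`.
Its kernel and range are graded, so the graded version of Schur's lemma
(`bijective_of_homogeneous`) makes it an isomorphism as soon as `W` is irreducible.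

*The action map.* It is injective by faithfulness. `R` is a semisimple ring and `W ≅ I` is
finite-dimensional, so the Jacobson density theorem gives surjectivity onto `End_D(W)`. If the
action of `r` has degree `g`, then for `v` homogeneous the component of `r v` of degree
`h + deg v` is `r_h v`; it vanishes for `h ≠ g`, so `r_h = 0` by faithfulness and `r = r_g`.
-/


/-- A `G`-graded left module over the `G`-graded matrix algebra `R = Mat_n(F)` with grading
components `gr`. -/
structure GradedModule (F : Type) [Field F] (n : ℕ)
    (G : Type) [AddCommGroup G] [DecidableEq G]
    (gr : G → Submodule F (Matrix (Fin n) (Fin n) F)) where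
  V : Type
  [isAddCommGroup : AddCommGroup V]
  [isModuleF : Module F V]
  [isModuleR : Module (Matrix (Fin n) (Fin n) F) V]
  [isTower : IsScalarTower F (Matrix (Fin n) (Fin n) F) V]
  vgr : G → Submodule F V
  internal : DirectSum.IsInternal vgr
  smul_mem : ∀ (g h : G) (r : Matrix (Fin n) (Fin n) F),
    r ∈ gr g → ∀ v ∈ vgr h, r • v ∈ vgr (g + h)

attribute [instance] GradedModule.isAddCommGroup GradedModule.isModuleF
  GradedModule.isModuleR GradedModule.isTower

/-- Irreducibility of a graded module: `R • V ≠ 0` and there is no graded `R`-submodule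
other than `0` and `V`. -/
def GradedModule.Irreducible {F : Type} [Field F] {n : ℕ} {G : Type} [AddCommGroup G]
    [DecidableEq G] {gr : G → Submodule F (Matrix (Fin n) (Fin n) F)}
    (W : GradedModule F n G gr) : Prop :=
  (∃ (r : Matrix (Fin n) (Fin n) F) (v : W.V), r • v ≠ 0) ∧
  ∀ U : Submodule (Matrix (Fin n) (Fin n) F) W.V,
    (U.restrictScalars F = ⨆ g : G, U.restrictScalars F ⊓ W.vgr g) → U = ⊥ ∨ U = ⊤

/-- A homogeneous linear map (with degrees moved by an injective `σ`) commutes with taking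
homogeneous components. -/
theorem map_component {F V V' G : Type} [Field F] [DecidableEq G] [AddCommGroup V] [Module F V]
    [AddCommGroup V'] [Module F V'] (A : G → Submodule F V) (B : G → Submodule F V')
    [DirectSum.Decomposition A] [DirectSum.Decomposition B] (φ : V →ₗ[F] V') (σ : G → G)
    (hσ : Function.Injective σ) (hφ : ∀ g, ∀ v ∈ A g, φ v ∈ B (σ g)) (v : V) (g : G) :
    (DirectSum.decompose B (φ v) (σ g) : V') = φ (DirectSum.decompose A v g) := by
  induction v using DirectSum.Decomposition.inductionOn A with
  | zero => simp
  | @homogeneous i m =>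
    by_cases h : i = g
    · subst h
      rw [DirectSum.decompose_of_mem_same B (hφ _ _ m.2),
        DirectSum.decompose_of_mem_same A m.2]
    · rw [DirectSum.decompose_of_mem_ne B (hφ _ _ m.2) (fun e => h (hσ e)),
        DirectSum.decompose_of_mem_ne A m.2 h, map_zero]
  | add m m' h h' => simp [DirectSum.decompose_add, h, h']

/-- A subspace closed under taking homogeneous components is graded. -/
theorem eq_iSup_of_component_mem {F V G : Type} [Field F] [DecidableEq G] [AddCommGroup V]
    [Module F V] (A : G → Submodule F V) [DirectSum.Decomposition A] (p : Submodule F V)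
    (hp : ∀ v ∈ p, ∀ g, (DirectSum.decompose A v g : V) ∈ p) : p = ⨆ g, p ⊓ A g := by
  classical
  apply le_antisymm
  · intro v hv
    rw [← DirectSum.sum_support_decompose A v]
    exact Submodule.sum_mem _ fun g _ =>
      Submodule.mem_iSup_of_mem g ⟨hp v hv g, (DirectSum.decompose A v g).2⟩
  · exact iSup_le fun g => inf_le_left

/-- The traces of a grading on a graded subspace form a grading of that subspace. -/
theorem isInternal_comap_subtype {F V G : Type} [Field F] [DecidableEq G] [AddCommGroup V]
    [Module F V] (A : G → Submodule F V) (hA : DirectSum.IsInternal A) (p : Submodule F V)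
    (hp : p = ⨆ g, p ⊓ A g) : DirectSum.IsInternal fun g => (A g).comap p.subtype := by
  rw [DirectSum.isInternal_submodule_iff_iSupIndep_and_iSup_eq_top]
  constructor
  · intro g
    rw [Submodule.disjoint_def]
    intro x hx hx'
    have h1 := Submodule.mem_map_of_mem (f := p.subtype) hx'
    simp only [Submodule.map_iSup] at h1
    have h2 : (x : V) ∈ ⨆ j, ⨆ (_ : j ≠ g), A j :=
      (iSup₂_mono fun j _ => Submodule.map_comap_le _ _) h1
    exact Subtype.ext ((Submodule.disjoint_def.1 (hA.submodule_iSupIndep g)) x hx h2)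
  · apply Submodule.map_injective_of_injective p.injective_subtype
    rw [Submodule.map_iSup, Submodule.map_top, Submodule.range_subtype]
    conv_rhs => rw [hp]
    exact iSup_congr fun g => Submodule.map_comap_subtype _ _

section

variable {F : Type} [Field F] {n : ℕ} {G : Type} [AddCommGroup G] [DecidableEq G]
  {gr : G → Submodule F (Matrix (Fin n) (Fin n) F)}

theorem faithful_of_nontrivial (hn : 0 < n) {V : Type} [AddCommGroup V]
    [Module (Matrix (Fin n) (Fin n) F) V] [Nontrivial V] (r : Matrix (Fin n) (Fin n) F)
    (h : ∀ v : V, r • v = 0) : r = 0 := by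
  have : Nonempty (Fin n) := ⟨⟨0, hn⟩⟩
  have : Nontrivial (AddMonoid.End V) := by
    obtain ⟨v, hv⟩ := exists_ne (0 : V)
    exact ⟨0, 1, fun e => hv (DFunLike.congr_fun e v).symm⟩
  have hinj := (Module.toAddMonoidEnd (Matrix (Fin n) (Fin n) F) V).injective
  apply hinj
  ext v
  exact (h v).trans (by simp)

theorem GradedModule.Irreducible.nontrivial {W : GradedModule F n G gr} (h : W.Irreducible) :
    Nontrivial W.V := by
  obtain ⟨⟨r, v, hv⟩, -⟩ := h
  exact ⟨r • v, 0, hv⟩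

/-- An element annihilating all homogeneous vectors annihilates the module. -/
theorem GradedModule.smul_eq_zero_of_homogeneous (W : GradedModule F n G gr)
    (r : Matrix (Fin n) (Fin n) F) (h : ∀ g, ∀ v ∈ W.vgr g, r • v = 0) (v : W.V) :
    r • v = 0 := by
  let := W.internal.chooseDecomposition
  induction v using DirectSum.Decomposition.inductionOn W.vgr with
  | zero => simp
  | homogeneous m => exact h _ _ m.2
  | add m m' h h' => rw [smul_add, h, h', add_zero]

/-- A minimal nonzero graded left ideal is an irreducible graded module; it is presented here
abstractly, by its degree-preserving embedding `ι` into the algebra. -/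
theorem exists_irreducible (hn : 0 < n) (hinternal : DirectSum.IsInternal gr)
    (hmul : ∀ g h : G, ∀ a ∈ gr g, ∀ b ∈ gr h, a * b ∈ gr (g + h)) :
    ∃ W : GradedModule F n G gr, W.Irreducible ∧
      ∃ ι : W.V →ₗ[Matrix (Fin n) (Fin n) F] Matrix (Fin n) (Fin n) F,
        Function.Injective ι ∧ ∀ g, ∀ v ∈ W.vgr g, ι v ∈ gr g := by
  have : Nonempty (Fin n) := ⟨⟨0, hn⟩⟩
  let S : Set (Submodule (Matrix (Fin n) (Fin n) F) (Matrix (Fin n) (Fin n) F)) :=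
    {I | I ≠ ⊥ ∧ I.restrictScalars F = ⨆ g : G, I.restrictScalars F ⊓ gr g}
  have hS : S.Nonempty := by
    refine ⟨⊤, top_ne_bot, ?_⟩
    simp only [Submodule.restrictScalars_top, top_inf_eq]
    exact hinternal.submodule_iSup_eq_top.symm
  have : IsArtinian (Matrix (Fin n) (Fin n) F) (Matrix (Fin n) (Fin n) F) :=
    isArtinian_of_tower F inferInstance
  obtain ⟨I, ⟨hI0, hIg⟩, hmin⟩ := IsArtinian.set_has_minimal S hS
  let W : GradedModule F n G gr :=
    { V := I
      isAddCommGroup := inferInstanceAs (AddCommGroup I)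
      isModuleF := inferInstanceAs (Module F (I.restrictScalars F))
      isModuleR := inferInstanceAs (Module (Matrix (Fin n) (Fin n) F) I)
      isTower := ⟨fun c r v => Subtype.ext (smul_assoc c r (v : Matrix (Fin n) (Fin n) F))⟩
      vgr := fun g => (gr g).comap (I.restrictScalars F).subtype
      internal := isInternal_comap_subtype gr hinternal (I.restrictScalars F) hIg
      smul_mem := fun g h r hr v hv => hmul g h r hr _ hv }
  let j : W.V →ₗ[Matrix (Fin n) (Fin n) F] Matrix (Fin n) (Fin n) F := I.subtype
  have hj : Function.Injective j := I.injective_subtype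
  have hjr : LinearMap.range j = I := I.range_subtype
  have hjg : ∀ g, ∀ v ∈ W.vgr g, j v ∈ gr g := fun g v hv => hv
  refine ⟨W, ⟨?_, fun U hU => ?_⟩, j, hj, hjg⟩
  · obtain ⟨x, hx, hx0⟩ := Submodule.exists_mem_ne_zero_of_ne_bot hI0
    rw [← hjr] at hx
    obtain ⟨v, rfl⟩ := hx
    exact ⟨1, v, fun e => hx0 (by rw [← one_smul (Matrix (Fin n) (Fin n) F) v, e, map_zero])⟩
  · by_cases hU0 : U = ⊥
    · exact Or.inl hU0
    right
    have hle : U.map j ≤ I := LinearMap.map_le_range.trans hjr.le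
    have hmem : U.map j ∈ S := by
      refine ⟨fun e => hU0 (Submodule.map_injective_of_injective hj (by rw [e, Submodule.map_bot])),
        le_antisymm ?_ (iSup_le fun g => inf_le_left)⟩
      rintro _ ⟨u, hu, rfl⟩
      have hu' : u ∈ U.restrictScalars F := hu
      rw [hU] at hu'
      have h1 := Submodule.mem_map_of_mem (f := j.restrictScalars F) hu'
      rw [Submodule.map_iSup] at h1
      refine (iSup_mono fun g => ?_ : (_ : Submodule F _) ≤ _) h1
      rintro _ ⟨y, ⟨hy, hy'⟩, rfl⟩
      exact ⟨⟨y, hy, rfl⟩, hjg g y hy'⟩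
    have heq : U.map j = I := by
      by_contra hne
      exact hmin _ hmem (lt_of_le_of_ne hle hne)
    apply Submodule.map_injective_of_injective hj
    rw [heq, Submodule.map_top, hjr]

/-- Graded Schur's lemma: a nonzero homogeneous map between irreducible graded modules is
bijective. -/
theorem bijective_of_homogeneous {W₁ W₂ : GradedModule F n G gr} (h₁ : W₁.Irreducible)
    (h₂ : W₂.Irreducible) (h : G) (φ : W₁.V →ₗ[Matrix (Fin n) (Fin n) F] W₂.V)
    (hφ : ∀ g, ∀ v ∈ W₁.vgr g, φ v ∈ W₂.vgr (g + h)) (hne : φ ≠ 0) : Function.Bijective φ := by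
  let := W₁.internal.chooseDecomposition
  let := W₂.internal.chooseDecomposition
  constructor
  · rw [← LinearMap.ker_eq_bot]
    refine (h₁.2 (LinearMap.ker φ) ?_).resolve_right fun e => hne (LinearMap.ker_eq_top.1 e)
    apply eq_iSup_of_component_mem
    intro v hv g
    have hv' : φ v = 0 := hv
    have := map_component W₁.vgr W₂.vgr (φ.restrictScalars F) (· + h) (add_left_injective h) hφ v g
    simp only [LinearMap.coe_restrictScalars, hv', DirectSum.decompose_zero] at this
    exact this.symm
  · rw [← LinearMap.range_eq_top]
    refine (h₂.2 (LinearMap.range φ) ?_).resolve_left fun e => hne (LinearMap.range_eq_bot.1 e)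
    apply le_antisymm
    · rintro _ ⟨v, rfl⟩
      have hv : v ∈ ⨆ g, W₁.vgr g := W₁.internal.submodule_iSup_eq_top ▸ Submodule.mem_top
      have h1 := Submodule.mem_map_of_mem (f := φ.restrictScalars F) hv
      rw [Submodule.map_iSup] at h1
      refine (iSup_le fun g => ?_ : (_ : Submodule F W₂.V) ≤ _) h1
      rintro _ ⟨y, hy, rfl⟩
      exact Submodule.mem_iSup_of_mem (g + h) ⟨⟨y, rfl⟩, hφ g y hy⟩
    · exact iSup_le fun g => inf_le_left

theorem symm_homogeneous {W₁ W₂ : GradedModule F n G gr} (h : G)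
    (e : W₁.V ≃ₗ[Matrix (Fin n) (Fin n) F] W₂.V)
    (he : ∀ g, ∀ v ∈ W₁.vgr g, e v ∈ W₂.vgr (g + h)) (g : G) (w : W₂.V)
    (hw : w ∈ W₂.vgr (g + h)) : e.symm w ∈ W₁.vgr g := by
  let := W₁.internal.chooseDecomposition
  let := W₂.internal.chooseDecomposition
  have := map_component W₁.vgr W₂.vgr (e.toLinearMap.restrictScalars F) (· + h)
    (add_left_injective h) he (e.symm w) g
  simp only [LinearMap.coe_restrictScalars, LinearEquiv.coe_coe, LinearEquiv.apply_symm_apply,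
    DirectSum.decompose_of_mem_same W₂.vgr hw] at this
  rw [this, LinearEquiv.symm_apply_apply]
  exact (DirectSum.decompose W₁.vgr _ g).2

/-- Every irreducible graded module is, up to a shift, the irreducible graded module embedded in
the algebra by `ι`; the isomorphism is `x ↦ ι x • w` for a suitable homogeneous `w`. -/
theorem exists_equiv_of_embedding (hn : 0 < n) {W₀ W : GradedModule F n G gr}
    (h₀ : W₀.Irreducible) (hW : W.Irreducible)
    (ι : W₀.V →ₗ[Matrix (Fin n) (Fin n) F] Matrix (Fin n) (Fin n) F)
    (hι : Function.Injective ι) (hιg : ∀ g, ∀ v ∈ W₀.vgr g, ι v ∈ gr g) :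
    ∃ (h : G) (e : W₀.V ≃ₗ[Matrix (Fin n) (Fin n) F] W.V),
      ∀ g, ∀ v ∈ W₀.vgr g, e v ∈ W.vgr (g + h) := by
  have := h₀.nontrivial
  have := hW.nontrivial
  obtain ⟨x, hx⟩ := exists_ne (0 : W₀.V)
  have hιx : ι x ≠ 0 := fun e => hx (hι (e.trans (map_zero ι).symm))
  obtain ⟨h, w, hw, hxw⟩ : ∃ h, ∃ w ∈ W.vgr h, ι x • w ≠ 0 := by
    by_contra! hcon
    exact hιx (faithful_of_nontrivial hn _ (W.smul_eq_zero_of_homogeneous _ hcon))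
  let φ : W₀.V →ₗ[Matrix (Fin n) (Fin n) F] W.V := (LinearMap.toSpanSingleton _ _ w).comp ι
  have hφ : ∀ g, ∀ v ∈ W₀.vgr g, φ v ∈ W.vgr (g + h) :=
    fun g v hv => W.smul_mem g h _ (hιg g v hv) w hw
  have hne : φ ≠ 0 := fun e => hxw (DFunLike.congr_fun e x)
  exact ⟨h, LinearEquiv.ofBijective φ (bijective_of_homogeneous h₀ hW h φ hφ hne), hφ⟩

/-- Jacobson density for a module of finite dimension over `F`: every linear map commuting with
`End_R(V)` is the action of an algebra element. -/
theorem exists_smul_of_commute {V : Type} [AddCommGroup V] [Module F V]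
    [Module (Matrix (Fin n) (Fin n) F) V] [IsScalarTower F (Matrix (Fin n) (Fin n) F) V]
    [Module.Finite F V] (f : V →ₗ[F] V)
    (hf : ∀ (d : Module.End (Matrix (Fin n) (Fin n) F) V) (v : V), f (d v) = d (f v)) :
    ∃ r : Matrix (Fin n) (Fin n) F, ∀ v : V, f v = r • v := by
  obtain ⟨s, hs⟩ := Module.Finite.fg_top (R := F) (M := V)
  let f' : Module.End (Module.End (Matrix (Fin n) (Fin n) F) V) V :=
    { toFun := f, map_add' := f.map_add, map_smul' := hf }
  obtain ⟨r, hr⟩ := jacobson_density f' s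
  refine ⟨r, fun v => ?_⟩
  have key : f = Module.toModuleEnd F (S := Matrix (Fin n) (Fin n) F) V r :=
    LinearMap.ext_on hs fun m hm => hr m hm
  rw [key]
  rfl

/-- An element whose action is homogeneous of degree `g` on a nonzero graded module has
degree `g`. -/
theorem mem_of_homogeneous_action (hn : 0 < n) (hinternal : DirectSum.IsInternal gr)
    {W : GradedModule F n G gr} [Nontrivial W.V] (g : G) (r : Matrix (Fin n) (Fin n) F)
    (hr : ∀ g', ∀ v ∈ W.vgr g', r • v ∈ W.vgr (g + g')) : r ∈ gr g := by
  let := hinternal.chooseDecomposition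
  let := W.internal.chooseDecomposition
  classical
  have hzero : ∀ h, h ≠ g → (DirectSum.decompose gr r h : Matrix (Fin n) (Fin n) F) = 0 := by
    intro h hh
    apply faithful_of_nontrivial hn (V := W.V)
    apply W.smul_eq_zero_of_homogeneous
    intro k v hv
    -- The map `a ↦ a • v` shifts degrees by `k`, so `r_h • v` is a component of `r • v`.
    have := map_component gr W.vgr
      ((LinearMap.toSpanSingleton (Matrix (Fin n) (Fin n) F) W.V v).restrictScalars F)
      (· + k) (add_left_injective k) (fun l a ha => W.smul_mem l k a ha v hv) r h
    simp only [LinearMap.coe_restrictScalars, LinearMap.toSpanSingleton_apply] at this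
    rw [← this]
    exact DirectSum.decompose_of_mem_ne W.vgr (hr k v hv)
      fun e => hh (add_right_cancel e).symm
  rw [← DirectSum.sum_support_decompose gr r]
  refine Submodule.sum_mem _ fun h _ => ?_
  by_cases hh : h = g
  · subst hh
    exact (DirectSum.decompose gr r h).2
  · rw [hzero h hh]
    exact Submodule.zero_mem _

end

/-- For any grading of `R = Mat_n(F)` by an abelian group `G` there is an
irreducible `G`-graded left `R`-module `V`, unique up to homogeneous isomorphism, and for any
such `V`, with `D = End_R(V)`, the action map `Φ : R → End_D(V)`, `r ↦ (v ↦ r • v)`, is a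
`G`-graded algebra isomorphism onto `End_D(V)` with the induced grading. -/
theorem stmt_4 (F : Type) [Field F] [IsAlgClosed F] [CharZero F] (n : ℕ) (hn : 0 < n)
    (G : Type) [AddCommGroup G] [DecidableEq G]
    (gr : G → Submodule F (Matrix (Fin n) (Fin n) F))
    (hinternal : DirectSum.IsInternal gr)
    (hmul : ∀ g h : G, ∀ a ∈ gr g, ∀ b ∈ gr h, a * b ∈ gr (g + h)) :
    -- existence
    (∃ W : GradedModule F n G gr, W.Irreducible) ∧
    -- uniqueness up to homogeneous isomorphism
    (∀ W₁ W₂ : GradedModule F n G gr, W₁.Irreducible → W₂.Irreducible →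
      ∃ (g : G) (φ : W₁.V ≃ₗ[Matrix (Fin n) (Fin n) F] W₂.V),
        ∀ g' : G, ∀ v ∈ W₁.vgr g', φ v ∈ W₂.vgr (g' + g)) ∧
    -- the action map is a graded isomorphism onto `End_D(V)`
    (∀ W : GradedModule F n G gr, W.Irreducible →
      -- injectivity of `Φ`
      (∀ r : Matrix (Fin n) (Fin n) F, (∀ v : W.V, r • v = 0) → r = 0) ∧
      -- surjectivity of `Φ` onto `End_D(V)` (the `D`-linear endomorphisms of `V`)
      (∀ f : W.V →ₗ[F] W.V,
        (∀ (d : Module.End (Matrix (Fin n) (Fin n) F) W.V) (v : W.V), f (d v) = d (f v)) →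
        ∃ r : Matrix (Fin n) (Fin n) F, ∀ v : W.V, f v = r • v) ∧
      -- `Φ` maps each `R_g` into the degree-`g` component of the induced grading
      (∀ g : G, ∀ r ∈ gr g, ∀ g' : G, ∀ v ∈ W.vgr g', r • v ∈ W.vgr (g + g')) ∧
      -- and onto it
      (∀ (g : G) (f : W.V →ₗ[F] W.V),
        (∀ (d : Module.End (Matrix (Fin n) (Fin n) F) W.V) (v : W.V), f (d v) = d (f v)) →
        (∀ g' : G, ∀ v ∈ W.vgr g', f v ∈ W.vgr (g + g')) →
        ∃ r ∈ gr g, ∀ v : W.V, f v = r • v)) := by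
  obtain ⟨W₀, h₀, ι, hι, hιg⟩ := exists_irreducible hn hinternal hmul
  refine ⟨⟨W₀, h₀⟩, ?_, ?_⟩
  · intro W₁ W₂ h₁ h₂
    obtain ⟨k₁, e₁, he₁⟩ := exists_equiv_of_embedding hn h₀ h₁ ι hι hιg
    obtain ⟨k₂, e₂, he₂⟩ := exists_equiv_of_embedding hn h₀ h₂ ι hι hιg
    refine ⟨k₂ - k₁, e₁.symm.trans e₂, fun g v hv => ?_⟩
    have h1 : e₁.symm v ∈ W₀.vgr (g - k₁) :=
      symm_homogeneous k₁ e₁ he₁ (g - k₁) v (by rwa [sub_add_cancel])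
    have h2 := he₂ _ _ h1
    rwa [show g - k₁ + k₂ = g + (k₂ - k₁) by abel] at h2
  · intro W hW
    have := hW.nontrivial
    have : Module.Finite F W₀.V :=
      Module.Finite.of_injective (ι.restrictScalars F) hι
    obtain ⟨-, e, -⟩ := exists_equiv_of_embedding hn h₀ hW ι hι hιg
    have : Module.Finite F W.V :=
      Module.Finite.of_surjective (e.toLinearMap.restrictScalars F) e.surjective
    refine ⟨faithful_of_nontrivial hn, exists_smul_of_commute,
      fun g r hr g' v hv => W.smul_mem g g' r hr v hv, fun g f hf hfg => ?_⟩
    obtain ⟨r, hr⟩ := exists_smul_of_commute f hf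
    refine ⟨r, mem_of_homogeneous_action hn hinternal (W := W) g r fun g' v hv => ?_, hr⟩
    rw [← hr]
    exact hfg g' v hv
end

section
/- Let Γ₁ and Γ₂ be two fine abelian group gradings of the matrix algebra R = Mat_n(F), and let e₁ and e₂ be graded primitive idempotents of (R,Γ₁) and (R,Γ₂) respectively (such idempotents always exist). Then Γ₁ and Γ₂ are equivalent if and only if the graded division algebras e₁Re₁ and e₂Re₂ are equivalent as graded algebras, i.e., there is an algebra isomorphism e₁Re₁ → e₂Re₂ mapping each homogeneous component onto a homogeneous component. -/
/-!
Write `R = Mat_n(F)` and `D = eRe` for a graded primitive idempotent `e`.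

If `φ` is an equivalence of the gradings, `φ e₁` is a nonzero homogeneous idempotent, hence of
degree `0`.  Since `R` is prime and `e₂` is graded primitive, there are homogeneous
`a ∈ φ(e₁) R e₂` and `b ∈ e₂ R φ(e₁)` of opposite degrees with `b a = e₂`
(`IsGrading.exists_link_pair`).  Then `a b` is a nonzero idempotent of degree `0` in
`φ(e₁) R φ(e₁)`, so it equals `φ e₁` by primitivity of `e₁`, and `r ↦ b (φ r) a` is the required
isomorphism of corners (`corner_equiv_of_gradEquiv`).

For the converse, repeated use of the same linking argument produces homogeneous `x i ∈ Re`,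
`y i ∈ eR` with `y i * x j = δ_ij e` and `∑ x i * y i = 1` (`IsGrading.exists_frame`), which
identifies `R` with the `k × k` matrices over `D`.  The grading of `R` can be intersected with the
`ℤ^k`-grading in which the `(i,j)` position has degree `ε_i - ε_j`; the result is a refinement, so
in a fine grading each component lies in a single off-diagonal position or on the diagonal
(`IsFrame.exists_le_peirce`).  Given `ψ : D₁ → D₂`, the two frames have equal size by a dimension
count, and applying `ψ` to every matrix entry is an automorphism `φ` of `R`.  By the previous
remark `φ` maps each component of the first grading into a component of the second, that is,
the image of the first grading refines the second; fineness of the second makes these inclusions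
equalities (`gradEquiv_of_corner_equiv`).
-/

/-- An abelian group grading of an associative `F`-algebra. -/
def IsGrading {F A : Type} [Field F] [Ring A] [Algebra F A]
    {G : Type} [AddCommGroup G] [DecidableEq G] (gr : G → Submodule F A) : Prop :=
  DirectSum.IsInternal gr ∧ ∀ g h : G, ∀ a ∈ gr g, ∀ b ∈ gr h, a * b ∈ gr (g + h)

/-- `gr₂` refines `gr₁`. -/
def Refines {F A : Type} [Field F] [Ring A] [Algebra F A]
    {G₂ G₁ : Type} [AddCommGroup G₂] [AddCommGroup G₁]
    (gr₂ : G₂ → Submodule F A) (gr₁ : G₁ → Submodule F A) : Prop :=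
  ∀ g : G₂, gr₂ g ≠ ⊥ → ∃ g' : G₁, gr₂ g ≤ gr₁ g'

/-- A grading is fine if every abelian group grading refining it has the same set of
(nonzero) homogeneous components. -/
def IsFine {F A : Type} [Field F] [Ring A] [Algebra F A]
    {G : Type} [AddCommGroup G] [DecidableEq G] (gr : G → Submodule F A) : Prop :=
  ∀ (G₂ : Type) [AddCommGroup G₂] [DecidableEq G₂],
    ∀ gr₂ : G₂ → Submodule F A, IsGrading gr₂ → Refines gr₂ gr →
      {S : Submodule F A | S ≠ ⊥ ∧ ∃ g, gr₂ g = S} = {S : Submodule F A | S ≠ ⊥ ∧ ∃ g, gr g = S}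

/-- Equivalence of gradings: an algebra isomorphism carrying every nonzero homogeneous
component onto a homogeneous component. -/
def GradEquiv {F A B : Type} [Field F] [Ring A] [Algebra F A] [Ring B] [Algebra F B]
    {G₁ G₂ : Type} [AddCommGroup G₁] [AddCommGroup G₂]
    (gr₁ : G₁ → Submodule F A) (gr₂ : G₂ → Submodule F B) : Prop :=
  ∃ φ : A ≃ₐ[F] B, ∀ g : G₁, gr₁ g ≠ ⊥ →
    ∃ g' : G₂, Submodule.map φ.toLinearMap (gr₁ g) = gr₂ g'

/-- The subspace `eRe` of `R`, for an idempotent `e`. -/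
noncomputable def corner (F : Type) {A : Type} [Field F] [Ring A] [Algebra F A] (e : A) :
    Submodule F A :=
  LinearMap.range (LinearMap.mulLeft F e ∘ₗ LinearMap.mulRight F e)

/-! ### Gradings: projections and the unit -/

section Grading

set_option linter.unusedSectionVars false

variable {F A G : Type} [Field F] [Ring A] [Algebra F A] [AddCommGroup G] [DecidableEq G]
  {gr : G → Submodule F A}

/-- The projections onto the homogeneous components of a grading. -/
lemma IsGrading.exists_proj (h : IsGrading gr) :
    ∃ Q : G → A →ₗ[F] A, (∀ g r, Q g r ∈ gr g) ∧ (∀ g, ∀ r ∈ gr g, Q g r = r) ∧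
      (∀ g g', g' ≠ g → ∀ r ∈ gr g, Q g' r = 0) := by
  let _ := h.1.chooseDecomposition
  refine ⟨fun g => (gr g).subtype ∘ₗ DirectSum.component F G (fun g => gr g) g ∘ₗ
    (DirectSum.decomposeLinearEquiv gr).toLinearMap, ?_, ?_, ?_⟩
  · intro g r
    simp
  · intro g r hr
    exact DirectSum.decompose_of_mem_same gr hr
  · intro g g' hg r hr
    exact DirectSum.decompose_of_mem_ne gr hr hg.symm

lemma IsGrading.iSup_eq_top (h : IsGrading gr) : ⨆ g, gr g = ⊤ :=
  h.1.submodule_iSup_eq_top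

/-- Linear maps that agree on all homogeneous elements are equal. -/
lemma IsGrading.linearMap_ext (h : IsGrading gr) {M : Type} [AddCommGroup M] [Module F M]
    {f f' : A →ₗ[F] M} (hf : ∀ g, ∀ r ∈ gr g, f r = f' r) : f = f' := by
  have : (⊤ : Submodule F A) ≤ LinearMap.eqLocus f f' := by
    rw [← h.iSup_eq_top]
    exact iSup_le fun g r hr => hf g r hr
  exact LinearMap.ext fun r => this (Submodule.mem_top (x := r))

lemma IsGrading.deg_unique (h : IsGrading gr) {g g' : G} {r : A} (hr : r ∈ gr g)
    (hr' : r ∈ gr g') (h0 : r ≠ 0) : g = g' := by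
  obtain ⟨Q, -, hQ1, hQ2⟩ := h.exists_proj
  by_contra hne
  exact h0 (by rw [← hQ1 g r hr, hQ2 g' g hne r hr'])

lemma IsGrading.one_mem (h : IsGrading gr) : (1 : A) ∈ gr 0 := by
  obtain ⟨Q, hQ, hQ1, hQ2⟩ := h.exists_proj
  -- Right multiplication by a homogeneous `r` shifts degrees, so the degree-zero part of
  -- `1` is a left identity.
  have key : ∀ g, ∀ r ∈ gr g, ∀ a, Q g (a * r) = Q 0 a * r := by
    intro g r hr a
    have : Q g ∘ₗ LinearMap.mulRight F r = LinearMap.mulRight F r ∘ₗ Q 0 := by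
      refine h.linearMap_ext fun g' a ha => ?_
      have hm := h.2 _ _ a ha r hr
      simp only [LinearMap.comp_apply, LinearMap.mulRight_apply]
      by_cases h0 : g' = 0
      · subst h0
        rw [zero_add] at hm
        rw [hQ1 _ _ hm, hQ1 _ _ ha]
      · rw [hQ2 (g' + g) g (by simpa using h0) _ hm, hQ2 g' 0 (Ne.symm h0) _ ha, zero_mul]
    exact LinearMap.congr_fun this a
  have h1 : LinearMap.mulLeft F (Q 0 1) = LinearMap.id := by
    refine h.linearMap_ext fun g r hr => ?_
    have := key g r hr 1
    rw [one_mul, hQ1 g r hr] at this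
    simpa using this.symm
  have h2 : Q 0 1 * 1 = 1 := LinearMap.congr_fun h1 1
  rw [mul_one] at h2
  rw [← h2]
  exact hQ 0 1

/-- A left inverse `u` of a homogeneous `d` relative to a degree-zero element `e` may be taken
homogeneous. -/
lemma IsGrading.exists_homogeneous_inv (h : IsGrading gr) {e u d : A} {s : G} (he : e ∈ gr 0)
    (hd : d ∈ gr s) (hu : u * d = e) : ∃ u' ∈ gr (-s), u' * d = e := by
  obtain ⟨Q, hQ, hQ1, hQ2⟩ := h.exists_proj
  refine ⟨Q (-s) u, hQ _ _, ?_⟩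
  have : Q 0 ∘ₗ LinearMap.mulRight F d = LinearMap.mulRight F d ∘ₗ Q (-s) := by
    refine h.linearMap_ext fun g a ha => ?_
    have hm := h.2 _ _ a ha d hd
    simp only [LinearMap.comp_apply, LinearMap.mulRight_apply]
    by_cases h0 : g = -s
    · subst h0
      rw [neg_add_cancel] at hm
      rw [hQ1 _ _ hm, hQ1 _ _ ha]
    · rw [hQ2 (g + s) 0 (fun h' => h0 (eq_neg_of_add_eq_zero_left h'.symm)) _ hm,
        hQ2 g (-s) (Ne.symm h0) _ ha, zero_mul]
  have h2 := LinearMap.congr_fun this u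
  simp only [LinearMap.comp_apply, LinearMap.mulRight_apply, hu] at h2
  rw [← h2, hQ1 _ _ he]

lemma mem_corner_iff {e x : A} (he : e * e = e) : x ∈ corner F e ↔ e * x = x ∧ x * e = x := by
  constructor
  · rintro ⟨y, rfl⟩
    simp only [LinearMap.comp_apply, LinearMap.mulLeft_apply, LinearMap.mulRight_apply]
    refine ⟨by rw [← mul_assoc, he], by rw [mul_assoc, mul_assoc, he]⟩
  · rintro ⟨h1, h2⟩
    exact ⟨x, by simp [h1, h2]⟩

/-- If two elements can be linked by some `r`, they can be linked by a homogeneous one. -/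
lemma IsGrading.exists_link (h : IsGrading gr) {a b : A} (hab : ∃ r, a * r * b ≠ 0) :
    ∃ g, ∃ r ∈ gr g, a * r * b ≠ 0 := by
  by_contra! hc
  obtain ⟨r, hr⟩ := hab
  have : LinearMap.mulRight F b ∘ₗ LinearMap.mulLeft F a = 0 :=
    h.linearMap_ext fun g r hr => by simpa using hc g r hr
  exact hr (by simpa using LinearMap.congr_fun this r)

/-- If `e` is graded primitive and `q` is a nonzero degree-zero idempotent, there are homogeneous
`x ∈ qAe` and `y ∈ eAq` of opposite degrees with `y * x = e`. -/
lemma IsGrading.exists_link_pair (h : IsGrading gr)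
    (hP : ∀ a b : A, a ≠ 0 → b ≠ 0 → ∃ r, a * r * b ≠ 0)
    {e q : A} (he : e ∈ gr 0) (hidem : e * e = e) (hne : e ≠ 0)
    (hprim : ∀ (g : G) (x : A), x ∈ gr g → x ∈ corner F e → x ≠ 0 →
      ∃ y ∈ corner F e, x * y = e ∧ y * x = e)
    (hq : q ∈ gr 0) (hqq : q * q = q) (hq0 : q ≠ 0) :
    ∃ (g : G) (x y : A), x ∈ gr g ∧ y ∈ gr (-g) ∧ q * x = x ∧ x * e = x ∧ e * y = y ∧ y * q = y ∧
      y * x = e := by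
  obtain ⟨g, a, ha, hne1⟩ := h.exists_link (hP q e hq0 hne)
  obtain ⟨g', b, hb, hne2⟩ := h.exists_link (hP e (q * a * e) hne hne1)
  have hx : q * a * e ∈ gr g := by
    have := h.2 _ _ _ (h.2 _ _ _ hq _ ha) _ he
    simpa using this
  have hd : e * b * (q * a * e) ∈ gr (g' + g) := by
    have := h.2 _ _ _ (h.2 _ _ _ he _ hb) _ hx
    simpa using this
  obtain ⟨u, -, -, hu⟩ := hprim _ _ hd ((mem_corner_iff hidem).2
    ⟨by simp only [← mul_assoc, hidem], by simp only [mul_assoc, hidem]⟩) hne2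
  obtain ⟨u', hu', hud⟩ := h.exists_homogeneous_inv he hd hu
  refine ⟨g, q * a * e, e * u' * e * b * q, hx, ?_, ?_, ?_, ?_, ?_, ?_⟩
  · have := h.2 _ _ _ (h.2 _ _ _ (h.2 _ _ _ (h.2 _ _ _ he _ hu') _ he) _ hb) _ hq
    convert this using 2
    abel
  · simp only [← mul_assoc, hqq]
  · simp only [mul_assoc, hidem]
  · simp only [← mul_assoc, hidem]
  · simp only [mul_assoc, hqq]
  · have h1 : e * u' * e * b * q * (q * a * e) = e * (u' * (e * b * (q * a * e))) := by
      simp only [mul_assoc]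
      rw [← mul_assoc q q, hqq]
    rw [h1, hud, hidem]

/-! ### Homogeneous matrix frames -/

/-- A homogeneous frame over `e`: elements `x i ∈ Ae` of degree `d i` and `y i ∈ eA` of degree
`-d i` with `y i * x j = δ_ij e`.  The `x i` are a homogeneous basis of a graded free right
`eAe`-submodule of `Ae`, and the `y i` are the dual basis. -/
structure IsFrame (gr : G → Submodule F A) (e : A) {k : ℕ} (x y : Fin k → A) (d : Fin k → G) :
    Prop where
  xe : ∀ i, x i * e = x i
  ey : ∀ i, e * y i = y i
  hx : ∀ i, x i ∈ gr (d i)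
  hy : ∀ i, y i ∈ gr (-d i)
  yx : ∀ i j, y i * x j = if i = j then e else 0

variable {e : A} {k : ℕ} {x y : Fin k → A} {d : Fin k → G}

lemma IsFrame.card_le [FiniteDimensional F A] (hf : IsFrame gr e x y d) (hne : e ≠ 0) :
    k ≤ Module.finrank F A := by
  have : LinearIndependent F x := by
    rw [Fintype.linearIndependent_iff]
    intro c hc i
    have h1 : y i * ∑ j, c j • x j = c i • e := by
      simp [Finset.mul_sum, hf.yx]
    rw [hc, mul_zero] at h1
    exact (smul_eq_zero.1 h1.symm).resolve_right hne
  simpa using this.fintype_card_le_finrank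

/-- A frame that does not sum to `1` can be enlarged, by linking `e` with the complementary
idempotent `1 - ∑ x i * y i`. -/
lemma IsFrame.extend (h : IsGrading gr)
    (hP : ∀ a b : A, a ≠ 0 → b ≠ 0 → ∃ r, a * r * b ≠ 0)
    (he : e ∈ gr 0) (hidem : e * e = e) (hne : e ≠ 0)
    (hprim : ∀ (g : G) (x : A), x ∈ gr g → x ∈ corner F e → x ≠ 0 →
      ∃ y ∈ corner F e, x * y = e ∧ y * x = e)
    (hf : IsFrame gr e x y d) (hsum : ∑ i, x i * y i ≠ 1) :
    ∃ (x' y' : Fin (k + 1) → A) (d' : Fin (k + 1) → G), IsFrame gr e x' y' d' := by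
  set p := ∑ i, x i * y i with hp
  have hyp : ∀ i, y i * p = y i := by
    intro i
    rw [hp, Finset.mul_sum]
    simp [← mul_assoc, hf.yx, hf.ey]
  have hpx : ∀ i, p * x i = x i := by
    intro i
    rw [hp, Finset.sum_mul]
    simp [mul_assoc, hf.yx, hf.xe]
  have hpp : p * p = p := by
    calc p * p = ∑ i, x i * y i * p := by rw [hp, Finset.sum_mul]
      _ = ∑ i, x i * y i := by simp only [mul_assoc, hyp]
  have hp0 : p ∈ gr 0 := Submodule.sum_mem _ fun i _ => by
    simpa using h.2 _ _ _ (hf.hx i) _ (hf.hy i)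
  obtain ⟨g, a, b, ha, hb, hqa, hae, heb, hbq, hba⟩ :=
    h.exists_link_pair hP he hidem hne hprim (q := 1 - p) (Submodule.sub_mem _ h.one_mem hp0)
      (by simp [mul_sub, sub_mul, hpp]) (sub_ne_zero.2 (Ne.symm hsum))
  have hya : ∀ i, y i * a = 0 := fun i => by
    rw [← hqa, ← mul_assoc, mul_sub, hyp, mul_one, sub_self, zero_mul]
  have hbx : ∀ i, b * x i = 0 := fun i => by
    rw [← hbq, mul_assoc, sub_mul, hpx, one_mul, sub_self, mul_zero]
  refine ⟨Fin.cons a x, Fin.cons b y, Fin.cons g d, ⟨?_, ?_, ?_, ?_, ?_⟩⟩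
  · exact Fin.cases (by simpa using hae) (by simpa using hf.xe)
  · exact Fin.cases (by simpa using heb) (by simpa using hf.ey)
  · exact Fin.cases (by simpa using ha) (by simpa using hf.hx)
  · exact Fin.cases (by simpa using hb) (by simpa using hf.hy)
  · intro i j
    cases i using Fin.cases with
    | zero =>
      cases j using Fin.cases with
      | zero => simpa using hba
      | succ j => simpa [(Fin.succ_ne_zero j).symm] using hbx j
    | succ i =>
      cases j using Fin.cases with
      | zero => simpa using hya i
      | succ j => simpa using hf.yx i j

/-- A complete frame exists: extend until the dimension bound stops the process. -/
lemma IsGrading.exists_frame [FiniteDimensional F A] (h : IsGrading gr)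
    (hP : ∀ a b : A, a ≠ 0 → b ≠ 0 → ∃ r, a * r * b ≠ 0)
    (he : e ∈ gr 0) (hidem : e * e = e) (hne : e ≠ 0)
    (hprim : ∀ (g : G) (x : A), x ∈ gr g → x ∈ corner F e → x ≠ 0 →
      ∃ y ∈ corner F e, x * y = e ∧ y * x = e) :
    ∃ (k : ℕ) (x y : Fin k → A) (d : Fin k → G), IsFrame gr e x y d ∧ ∑ i, x i * y i = 1 := by
  by_contra! hc
  have : ∀ m : ℕ, ∃ (x y : Fin m → A) (d : Fin m → G), IsFrame gr e x y d := by
    intro m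
    induction m with
    | zero =>
      exact ⟨Fin.elim0, Fin.elim0, Fin.elim0, ⟨fun i => i.elim0, fun i => i.elim0,
        fun i => i.elim0, fun i => i.elim0, fun i => i.elim0⟩⟩
    | succ m ih =>
      obtain ⟨x, y, d, hf⟩ := ih
      exact hf.extend h hP he hidem hne hprim (hc m x y d hf)
  obtain ⟨x, y, d, hf⟩ := this (Module.finrank F A + 1)
  have := hf.card_le hne
  omega

lemma IsFrame.mem_corner (hf : IsFrame gr e x y d) (hidem : e * e = e) (r : A) (i j : Fin k) :
    y i * r * x j ∈ corner F e := by
  rw [mem_corner_iff hidem]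
  exact ⟨by rw [← mul_assoc, ← mul_assoc, hf.ey], by rw [mul_assoc, hf.xe]⟩

/-- Recovery of an element from its matrix entries `y i * r * x j`. -/
lemma IsFrame.expand (hsum : ∑ i, x i * y i = 1) (r : A) :
    r = ∑ i, ∑ j, x i * (y i * r * x j) * y j := by
  calc r = (∑ i, x i * y i) * r * ∑ j, x j * y j := by rw [hsum, one_mul, mul_one]
    _ = _ := by
      simp only [Finset.sum_mul, Finset.mul_sum, mul_assoc]
      exact Finset.sum_comm

/-- The matrix entries of `∑ x i * c i j * y j` are the `c i j`. -/
lemma IsFrame.entry_sum (hf : IsFrame gr e x y d) (hidem : e * e = e) (c : Fin k → Fin k → A)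
    (hc : ∀ i j, c i j ∈ corner F e) (i j : Fin k) :
    y i * (∑ i, ∑ j, x i * c i j * y j) * x j = c i j := by
  have hc' := fun i j => (mem_corner_iff hidem).1 (hc i j)
  have : ∀ a b, y i * (x a * c a b * y b) * x j = (y i * x a) * c a b * (y b * x j) := by
    intro a b; simp only [mul_assoc]
  simp only [Finset.sum_mul, Finset.mul_sum, this, hf.yx]
  simp [hc']

/-- `A` is the algebra of `k × k` matrices over `eAe`; only the dimension count is recorded. -/
lemma IsFrame.finrank_eq (hf : IsFrame gr e x y d) (hidem : e * e = e)
    (hsum : ∑ i, x i * y i = 1) :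
    Module.finrank F A = k * k * Module.finrank F (corner F e) := by
  let L : A →ₗ[F] Matrix (Fin k) (Fin k) (corner F e) :=
    { toFun := fun r i j => ⟨y i * r * x j, hf.mem_corner hidem r i j⟩
      map_add' := fun r s => by
        ext i j
        change y i * (r + s) * x j = y i * r * x j + y i * s * x j
        rw [mul_add, add_mul]
      map_smul' := fun c r => by
        ext i j
        change y i * (c • r) * x j = c • (y i * r * x j)
        rw [mul_smul_comm, smul_mul_assoc] }
  have hL : Function.Bijective L := by
    constructor
    · intro r s hrs
      have h1 : ∀ i j, y i * r * x j = y i * s * x j := fun i j =>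
        congrArg Subtype.val (congrFun (congrFun hrs i) j)
      rw [IsFrame.expand hsum r, IsFrame.expand hsum s]
      simp only [h1]
    · intro c
      refine ⟨∑ i, ∑ j, x i * (c i j : A) * y j, ?_⟩
      ext i j
      exact hf.entry_sum hidem (fun i j => (c i j : A)) (fun i j => (c i j).2) i j
  rw [(LinearEquiv.ofBijective L hL).finrank_eq, Module.finrank_matrix]
  simp

/-! ### The Peirce refinement and fineness -/

/-- `ε_i - ε_j` in `ℤ^k`, the degree of the matrix unit `E_ij` in the universal elementary
grading. -/
def rootVec {k : ℕ} (i j : Fin k) : Fin k → ℤ := Pi.single i 1 - Pi.single j 1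

lemma rootVec_self (i : Fin k) : rootVec i i = 0 := sub_self _

lemma rootVec_add (i j l : Fin k) : rootVec i j + rootVec j l = rootVec i l :=
  sub_add_sub_cancel _ _ _

lemma rootVec_inj {i j a b : Fin k} (hij : i ≠ j) (h : rootVec i j = rootVec a b) :
    a = i ∧ b = j := by
  have h1 := congrFun h i
  have h2 := congrFun h j
  simp only [rootVec, Pi.sub_apply, Pi.single_apply] at h1 h2
  grind

lemma rootVec_eq_zero {i j : Fin k} (h : rootVec i j = 0) : i = j := by
  have h1 := congrFun h i
  simp only [rootVec, Pi.sub_apply, Pi.single_apply] at h1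
  by_contra hne
  simp [hne] at h1

/-- The component of degree `α ∈ ℤ^k` in the grading by matrix position: the elements whose
`(i,j)` entry vanishes unless `ε_i - ε_j = α`. -/
def peirceComp (F : Type) {A : Type} [Field F] [Ring A] [Algebra F A] {k : ℕ} (x y : Fin k → A)
    (α : Fin k → ℤ) : Submodule F A where
  carrier := {r | ∀ i j, rootVec i j ≠ α → y i * r * x j = 0}
  zero_mem' := by simp
  add_mem' := fun {r s} hr hs i j hij => by
    rw [mul_add, add_mul, hr i j hij, hs i j hij, add_zero]
  smul_mem' := fun c r hr i j hij => by
    rw [mul_smul_comm, smul_mul_assoc, hr i j hij, smul_zero]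

lemma mem_peirce {α : Fin k → ℤ} {r : A} :
    r ∈ peirceComp F x y α ↔ ∀ i j, rootVec i j ≠ α → y i * r * x j = 0 := Iff.rfl

/-- The projection of `A` onto `peirceComp F x y α`. -/
noncomputable def peirceProj (F : Type) {A : Type} [Field F] [Ring A] [Algebra F A] {k : ℕ}
    (x y : Fin k → A) (α : Fin k → ℤ) : A →ₗ[F] A :=
  ∑ i, ∑ j, if rootVec i j = α then
    LinearMap.mulLeft F (x i * y i) ∘ₗ LinearMap.mulRight F (x j * y j) else 0

lemma peirceProj_apply (α : Fin k → ℤ) (r : A) : peirceProj F x y α r =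
    ∑ i, ∑ j, if rootVec i j = α then x i * (y i * r * x j) * y j else 0 := by
  simp only [peirceProj, LinearMap.sum_apply]
  refine Finset.sum_congr rfl fun i _ => Finset.sum_congr rfl fun j _ => ?_
  split_ifs
  · simp [mul_assoc]
  · rfl

lemma peirceProj_of_mem (hsum : ∑ i, x i * y i = 1) {α : Fin k → ℤ} {r : A}
    (hr : r ∈ peirceComp F x y α) : peirceProj F x y α r = r := by
  rw [peirceProj_apply]
  conv_rhs => rw [IsFrame.expand hsum r]
  refine Finset.sum_congr rfl fun i _ => Finset.sum_congr rfl fun j _ => ?_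
  split_ifs with hij
  · rfl
  · rw [hr i j hij, mul_zero, zero_mul]

lemma peirceProj_of_mem_ne {α β : Fin k → ℤ} (hne : α ≠ β) {r : A}
    (hr : r ∈ peirceComp F x y β) : peirceProj F x y α r = 0 := by
  rw [peirceProj_apply]
  refine Finset.sum_eq_zero fun i _ => Finset.sum_eq_zero fun j _ => ?_
  split_ifs with hij
  · rw [hr i j (hij ▸ hne), mul_zero, zero_mul]
  · rfl

/-- Intersecting a grading with the grading by matrix position of a complete frame yields a
grading by `ℤ^k × G`. -/
lemma IsFrame.isGrading_refinement (h : IsGrading gr) (hf : IsFrame gr e x y d)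
    (hsum : ∑ i, x i * y i = 1) :
    IsGrading (fun a : (Fin k → ℤ) × G => gr a.2 ⊓ peirceComp F x y a.1) := by
  constructor
  · obtain ⟨Q, hQ, hQ1, hQ2⟩ := h.exists_proj
    rw [DirectSum.isInternal_submodule_iff_iSupIndep_and_iSup_eq_top]
    constructor
    · rw [iSupIndep_def]
      intro a
      rw [Submodule.disjoint_def]
      intro r hr hr'
      have hle : (⨆ b, ⨆ (_ : b ≠ a), gr b.2 ⊓ peirceComp F x y b.1) ≤
          LinearMap.ker (Q a.2 ∘ₗ peirceProj F x y a.1) := by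
        refine iSup_le fun b => iSup_le fun hb s hs => ?_
        rw [LinearMap.mem_ker, LinearMap.comp_apply]
        by_cases h1 : a.1 = b.1
        · rw [h1, peirceProj_of_mem hsum hs.2]
          exact hQ2 b.2 a.2 (fun h2 => hb (Prod.ext h1 h2).symm) s hs.1
        · rw [peirceProj_of_mem_ne h1 hs.2, map_zero]
      have h0 := hle hr'
      rw [LinearMap.mem_ker, LinearMap.comp_apply, peirceProj_of_mem hsum hr.2,
        hQ1 _ _ hr.1] at h0
      exact h0
    · rw [eq_top_iff, ← h.iSup_eq_top]
      refine iSup_le fun g r hr => ?_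
      rw [IsFrame.expand hsum r]
      refine Submodule.sum_mem _ fun i _ => Submodule.sum_mem _ fun j _ => ?_
      refine Submodule.mem_iSup_of_mem (rootVec i j, g) ⟨?_, ?_⟩
      · have := h.2 _ _ _ (h.2 _ _ _ (hf.hx i) _ (h.2 _ _ _ (h.2 _ _ _ (hf.hy i) _ hr) _
          (hf.hx j))) _ (hf.hy j)
        rwa [show d i + (-d i + g + d j) + -d j = g by abel] at this
      · intro a b hab
        have h1 : y a * (x i * (y i * r * x j) * y j) * x b =
            (y a * x i) * (y i * r * x j) * (y j * x b) := by simp only [mul_assoc]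
        rw [h1, hf.yx, hf.yx]
        by_cases hai : a = i
        · by_cases hbj : j = b
          · exact absurd (by rw [hai, hbj]) hab
          · simp [hbj]
        · simp [hai]
  · rintro ⟨α, g⟩ ⟨β, g'⟩ r hr s hs
    refine ⟨h.2 _ _ _ hr.1 _ hs.1, ?_⟩
    intro i j hij
    have h1 : y i * (r * s) * x j = ∑ l, (y i * r * x l) * (y l * s * x j) := by
      calc y i * (r * s) * x j = y i * (r * (∑ l, x l * y l) * s) * x j := by
            rw [hsum, mul_one]
        _ = _ := by simp only [Finset.sum_mul, Finset.mul_sum, mul_assoc]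
    rw [h1]
    refine Finset.sum_eq_zero fun l _ => ?_
    by_cases h2 : rootVec i l = α
    · have h3 : rootVec l j ≠ β := fun h3 => hij (by rw [← rootVec_add i l j, h2, h3]; rfl)
      rw [hs.2 l j h3, mul_zero]
    · rw [hr.2 i l h2, zero_mul]

/-- In a fine grading every component is concentrated in a single matrix position or on the
diagonal. -/
lemma IsFrame.exists_le_peirce (h : IsGrading gr) (hfine : IsFine gr) (hf : IsFrame gr e x y d)
    (hsum : ∑ i, x i * y i = 1) {g : G} (hg : gr g ≠ ⊥) :
    ∃ α, gr g ≤ peirceComp F x y α := by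
  have := hfine _ _ (hf.isGrading_refinement h hsum) (fun a _ => ⟨a.2, inf_le_left⟩)
  have hmem : gr g ∈ {S : Submodule F A | S ≠ ⊥ ∧ ∃ g, gr g = S} := ⟨hg, g, rfl⟩
  rw [← this] at hmem
  obtain ⟨-, a, ha⟩ := hmem
  exact ⟨a.1, ha ▸ inf_le_right⟩

lemma IsFrame.entry_mem (h : IsGrading gr) (hf : IsFrame gr e x y d) (hidem : e * e = e)
    {g : G} {r : A} (hr : r ∈ gr g) (i j : Fin k) :
    y i * r * x j ∈ corner F e ⊓ gr (-d i + g + d j) :=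
  ⟨hf.mem_corner hidem r i j, h.2 _ _ _ (h.2 _ _ _ (hf.hy i) _ hr) _ (hf.hx j)⟩

end Grading

/-! ### The transported isomorphism -/

section Transport

set_option linter.unusedSectionVars false

variable {F A G G' : Type} [Field F] [Ring A] [Algebra F A] [AddCommGroup G] [DecidableEq G]
  [AddCommGroup G'] [DecidableEq G'] {gr : G → Submodule F A} {gr' : G' → Submodule F A}

/-- Applying `ψ : eAe → e'Ae'` to every matrix entry with respect to complete frames of equal
size. -/
noncomputable def entrywise {k : ℕ} (ψ : A →ₗ[F] A) (x y x' y' : Fin k → A) : A →ₗ[F] A :=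
  ∑ i, ∑ j, LinearMap.mulRight F (y' j) ∘ₗ LinearMap.mulLeft F (x' i) ∘ₗ ψ ∘ₗ
    LinearMap.mulRight F (x j) ∘ₗ LinearMap.mulLeft F (y i)

lemma entrywise_apply {k : ℕ} (ψ : A →ₗ[F] A) (x y x' y' : Fin k → A) (r : A) :
    entrywise ψ x y x' y' r = ∑ i, ∑ j, x' i * ψ (y i * r * x j) * y' j := by
  simp [entrywise, LinearMap.sum_apply]

/-- The forward direction, for prime algebras: conjugating `φ` by a homogeneous link between `φ e`
and `e'` gives the isomorphism of corners. -/
lemma corner_equiv_of_gradEquiv (h' : IsGrading gr')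
    (hP : ∀ a b : A, a ≠ 0 → b ≠ 0 → ∃ r, a * r * b ≠ 0)
    {e e' : A} (he : e ∈ gr 0) (hidem : e * e = e) (hne : e ≠ 0)
    (he' : e' ∈ gr' 0) (hidem' : e' * e' = e') (hne' : e' ≠ 0)
    (hprim : ∀ (g : G) (x : A), x ∈ gr g → x ∈ corner F e → x ≠ 0 →
      ∃ y ∈ corner F e, x * y = e ∧ y * x = e)
    (hprim' : ∀ (g : G') (x : A), x ∈ gr' g → x ∈ corner F e' → x ≠ 0 →
      ∃ y ∈ corner F e', x * y = e' ∧ y * x = e')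
    (hφ : GradEquiv gr gr') :
    ∃ ψ : A →ₗ[F] A,
        Set.BijOn ψ (corner F e : Set A) (corner F e' : Set A) ∧
        (∀ x ∈ corner F e, ∀ y ∈ corner F e, ψ (x * y) = ψ x * ψ y) ∧
        (∀ g : G, corner F e ⊓ gr g ≠ ⊥ →
          ∃ g' : G', Submodule.map ψ (corner F e ⊓ gr g) = corner F e' ⊓ gr' g') := by
  obtain ⟨φ, hφ⟩ := hφ
  have hq0 : φ e ≠ 0 := by simpa using hne
  have hqq : φ e * φ e = φ e := by rw [← map_mul, hidem]
  -- `φ e` is a nonzero homogeneous idempotent, hence of degree zero.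
  have hzero : Submodule.map φ.toLinearMap (gr 0) = gr' 0 := by
    obtain ⟨g', hg'⟩ := hφ 0 (fun h0 => hne (by simpa [h0] using he))
    have h1 : φ e ∈ gr' g' := hg' ▸ Submodule.mem_map_of_mem he
    have h2 : φ e ∈ gr' (g' + g') := by
      have := h'.2 _ _ _ h1 _ h1
      rwa [hqq] at this
    have h3 := h'.deg_unique h1 h2 hq0
    have h4 : g' = 0 := by simpa using h3
    rw [hg', h4]
  have hq : φ e ∈ gr' 0 := hzero ▸ Submodule.mem_map_of_mem he
  obtain ⟨s, a, b, ha, hb, hqa, hae, heb, hbq, hba⟩ :=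
    h'.exists_link_pair hP he' hidem' hne' hprim' hq hqq hq0
  -- `a * b` is a nonzero degree-zero idempotent below `φ e`; primitivity of `e` forces equality.
  have hab : a * b = φ e := by
    have hab0 : a * b ∈ gr' 0 := by simpa using h'.2 _ _ _ ha _ hb
    rw [← hzero] at hab0
    obtain ⟨u, hu, hua⟩ := hab0
    change φ u = a * b at hua
    have huu : u * u = u := φ.injective (by
      rw [map_mul, hua]
      calc a * b * (a * b) = a * (b * a) * b := by simp only [mul_assoc]
        _ = a * b := by rw [hba, hae])
    have hune : u ≠ 0 := by
      rintro rfl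
      rw [map_zero] at hua
      apply hne'
      calc e' = b * a * (b * a) := by rw [hba, hidem']
        _ = b * (a * b) * a := by simp only [mul_assoc]
        _ = 0 := by rw [← hua]; simp
    have heu : e * u = u := φ.injective (by rw [map_mul, hua, ← mul_assoc, hqa])
    have hue : u * e = u := φ.injective (by rw [map_mul, hua, mul_assoc, hbq])
    obtain ⟨v, -, huv, -⟩ := hprim 0 u hu ((mem_corner_iff hidem).2 ⟨heu, hue⟩) hune
    rw [← hua]
    congr 1
    rw [← hue]
    calc u * e = u * (u * v) := by rw [huv]
      _ = u * u * v := by rw [mul_assoc]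
      _ = e := by rw [huu, huv]
  have hψ : ∀ r, (LinearMap.mulLeft F b ∘ₗ LinearMap.mulRight F a ∘ₗ φ.toLinearMap) r =
      b * φ r * a := fun r => by simp [mul_assoc]
  have hback : ∀ r ∈ corner F e, a * (b * φ r * a) * b = φ r := by
    intro r hr
    rw [mem_corner_iff hidem] at hr
    calc a * (b * φ r * a) * b = (a * b) * φ r * (a * b) := by simp only [mul_assoc]
      _ = φ r := by rw [hab, ← map_mul, ← map_mul, hr.1, hr.2]
  have hmaps : ∀ r, b * φ r * a ∈ corner F e' := fun r => (mem_corner_iff hidem').2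
    ⟨by rw [← mul_assoc, ← mul_assoc, heb], by rw [mul_assoc, hae]⟩
  have hsurj : ∀ t ∈ corner F e', ∀ r, φ r = a * t * b → r ∈ corner F e ∧ b * φ r * a = t := by
    intro t ht r hr
    rw [mem_corner_iff hidem'] at ht
    refine ⟨(mem_corner_iff hidem).2 ⟨φ.injective ?_, φ.injective ?_⟩, ?_⟩
    · rw [map_mul, hr, ← mul_assoc, ← mul_assoc, hqa]
    · rw [map_mul, hr, mul_assoc, hbq]
    · calc b * φ r * a = (b * a) * t * (b * a) := by rw [hr]; simp only [mul_assoc]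
        _ = t := by rw [hba, ht.1, ht.2]
  refine ⟨LinearMap.mulLeft F b ∘ₗ LinearMap.mulRight F a ∘ₗ φ.toLinearMap, ⟨?_, ?_, ?_⟩, ?_, ?_⟩
  · intro r _
    rw [hψ]
    exact hmaps r
  · intro r hr r' hr' hrr
    rw [hψ, hψ] at hrr
    exact φ.injective (by rw [← hback r hr, ← hback r' hr', hrr])
  · intro t ht
    obtain ⟨h1, h2⟩ := hsurj t ht (φ.symm (a * t * b)) (by simp)
    exact ⟨_, h1, by rw [hψ, h2]⟩
  · intro r hr r' hr'
    rw [mem_corner_iff hidem] at hr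
    rw [hψ, hψ, hψ]
    calc b * φ (r * r') * a = b * (φ r * φ e * φ r') * a := by
          rw [← map_mul, ← map_mul, hr.2]
      _ = b * φ r * a * (b * φ r' * a) := by rw [← hab]; simp only [mul_assoc]
  · intro g hg
    obtain ⟨g', hg'⟩ := hφ g (fun h0 => hg (by rw [h0, inf_bot_eq]))
    refine ⟨g', le_antisymm ?_ ?_⟩
    · rintro _ ⟨r, hr, rfl⟩
      rw [hψ]
      have h1 : φ r ∈ gr' g' := hg' ▸ Submodule.mem_map_of_mem hr.2
      refine ⟨hmaps r, ?_⟩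
      have := h'.2 _ _ _ (h'.2 _ _ _ hb _ h1) _ ha
      rwa [show -s + g' + s = g' by abel] at this
    · rintro t ⟨ht1, ht2⟩
      have h1 : a * t * b ∈ gr' g' := by
        have := h'.2 _ _ _ (h'.2 _ _ _ ha _ ht2) _ hb
        convert this using 2
        abel
      rw [← hg'] at h1
      obtain ⟨r, hr, hrt⟩ := h1
      obtain ⟨h2, h3⟩ := hsurj t ht1 r hrt
      exact ⟨r, ⟨h2, hr⟩, by rw [hψ, h3]⟩

/-- The image of a grading under an algebra automorphism is a grading. -/
lemma IsGrading.map (h : IsGrading gr) (φ : A ≃ₐ[F] A) :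
    IsGrading (fun g => Submodule.map φ.toLinearMap (gr g)) := by
  constructor
  · rw [DirectSum.isInternal_submodule_iff_iSupIndep_and_iSup_eq_top]
    constructor
    · exact (h.1.submodule_iSupIndep).map_orderIso
        (Submodule.orderIsoMapComap φ.toLinearEquiv)
    · rw [← Submodule.map_iSup, h.iSup_eq_top, Submodule.map_top]
      exact LinearMap.range_eq_top.2 φ.surjective
  · rintro g g' _ ⟨r, hr, rfl⟩ _ ⟨s, hs, rfl⟩
    exact ⟨r * s, h.2 _ _ _ hr _ hs, map_mul φ r s⟩

/-- The converse direction, for finite-dimensional simple algebras: an isomorphism of corners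
applied entrywise is an automorphism of `A`, and fineness makes it an equivalence of gradings. -/
lemma gradEquiv_of_corner_equiv [FiniteDimensional F A] [IsSimpleRing A]
    (h : IsGrading gr) (hfine : IsFine gr) (h' : IsGrading gr') (hfine' : IsFine gr')
    {e e' : A} (hidem : e * e = e) (hne : e ≠ 0) (hidem' : e' * e' = e')
    {k k' : ℕ} {x y : Fin k → A} {d : Fin k → G} {x' y' : Fin k' → A} {d' : Fin k' → G'}
    (hf : IsFrame gr e x y d) (hsum : ∑ i, x i * y i = 1)
    (hf' : IsFrame gr' e' x' y' d') (hsum' : ∑ i, x' i * y' i = 1)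
    (ψ : A →ₗ[F] A) (hbij : Set.BijOn ψ (corner F e : Set A) (corner F e' : Set A))
    (hmul : ∀ x ∈ corner F e, ∀ y ∈ corner F e, ψ (x * y) = ψ x * ψ y)
    (hcomp : ∀ g : G, corner F e ⊓ gr g ≠ ⊥ →
          ∃ g' : G', Submodule.map ψ (corner F e ⊓ gr g) = corner F e' ⊓ gr' g') :
    GradEquiv gr gr' := by
  have hec : e ∈ corner F e := (mem_corner_iff hidem).2 ⟨hidem, hidem⟩
  have hec' : e' ∈ corner F e' := (mem_corner_iff hidem').2 ⟨hidem', hidem'⟩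
  -- The frames have the same size because the corners have the same dimension.
  have hk : k = k' := by
    have hdim : Module.finrank F (corner F e) = Module.finrank F (corner F e') := by
      refine (LinearEquiv.ofBijective (ψ.restrict fun r hr => hbij.mapsTo hr) ⟨?_, ?_⟩).finrank_eq
      · intro r s hrs
        exact Subtype.ext (hbij.injOn r.2 s.2 (congrArg Subtype.val hrs))
      · intro t
        obtain ⟨r, hr, hrt⟩ := hbij.surjOn t.2
        exact ⟨⟨r, hr⟩, Subtype.ext hrt⟩
    have hpos : 0 < Module.finrank F (corner F e) := by
      have : Nontrivial (corner F e) := ⟨⟨e, hec⟩, 0, fun h0 => hne (congrArg Subtype.val h0)⟩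
      exact Module.finrank_pos
    have h1 := hf.finrank_eq hidem hsum
    rw [hf'.finrank_eq hidem' hsum', ← hdim] at h1
    exact (Nat.mul_self_inj.1 (Nat.eq_of_mul_eq_mul_right hpos h1)).symm
  subst hk
  have hψe : ψ e = e' := by
    obtain ⟨u, hu, hue⟩ := hbij.surjOn hec'
    have h1 := hmul e hec u hu
    rw [((mem_corner_iff hidem).1 hu).1, hue, ((mem_corner_iff hidem').1 (hbij.mapsTo hec)).2] at h1
    exact h1.symm
  have hmem : ∀ r i j, ψ (y i * r * x j) ∈ corner F e' := fun r i j =>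
    hbij.mapsTo (hf.mem_corner hidem r i j)
  set Φ := entrywise ψ x y x' y' with hΦ
  have hΦ1 : Φ 1 = 1 := by
    rw [hΦ, entrywise_apply]
    simp only [mul_one, hf.yx]
    rw [← hsum']
    refine Finset.sum_congr rfl fun i _ => ?_
    rw [Finset.sum_eq_single i]
    · simp [hψe, hf'.xe]
    · intro j _ hj
      simp [hj.symm]
    · simp
  have hΦm : ∀ r s, Φ (r * s) = Φ r * Φ s := by
    intro r s
    rw [IsFrame.expand hsum' (Φ r * Φ s), hΦ, entrywise_apply]
    refine Finset.sum_congr rfl fun i _ => Finset.sum_congr rfl fun j _ => ?_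
    congr 2
    have h1 : y' i * (entrywise ψ x y x' y' r * entrywise ψ x y x' y' s) * x' j =
        ∑ l, (y' i * entrywise ψ x y x' y' r * x' l) * (y' l * entrywise ψ x y x' y' s * x' j) := by
      calc _ = y' i * (entrywise ψ x y x' y' r * (∑ l, x' l * y' l) *
              entrywise ψ x y x' y' s) * x' j := by rw [hsum', mul_one]
        _ = _ := by simp only [Finset.sum_mul, Finset.mul_sum, mul_assoc]
    have h2 : y i * (r * s) * x j = ∑ l, (y i * r * x l) * (y l * s * x j) := by
      calc y i * (r * s) * x j = y i * (r * (∑ l, x l * y l) * s) * x j := by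
            rw [hsum, mul_one]
        _ = _ := by simp only [Finset.sum_mul, Finset.mul_sum, mul_assoc]
    rw [h1, h2, map_sum]
    refine Finset.sum_congr rfl fun l _ => ?_
    rw [hmul _ (hf.mem_corner hidem r i l) _ (hf.mem_corner hidem s l j), entrywise_apply,
      entrywise_apply, hf'.entry_sum hidem' _ (hmem r), hf'.entry_sum hidem' _ (hmem s)]
  let φ₀ : A →ₐ[F] A := AlgHom.ofLinearMap Φ hΦ1 hΦm
  have hinj : Function.Injective φ₀ := RingHom.injective (φ₀ : A →+* A)
  have hsurj : Function.Surjective φ₀ :=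
    (LinearMap.injective_iff_surjective (f := φ₀.toLinearMap)).1 hinj
  let φ : A ≃ₐ[F] A := AlgEquiv.ofBijective φ₀ ⟨hinj, hsurj⟩
  have hφ : ∀ r, φ r = ∑ i, ∑ j, x' i * ψ (y i * r * x j) * y' j :=
    fun r => entrywise_apply ψ x y x' y' r
  have hψdeg : ∀ t : G, ∃ t' : G', ∀ c ∈ corner F e ⊓ gr t, ψ c ∈ gr' t' := by
    intro t
    by_cases ht : corner F e ⊓ gr t = ⊥
    · refine ⟨0, fun c hc => ?_⟩
      rw [ht, Submodule.mem_bot] at hc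
      simp [hc]
    · obtain ⟨t', ht'⟩ := hcomp t ht
      refine ⟨t', fun c hc => ?_⟩
      have : ψ c ∈ corner F e' ⊓ gr' t' := ht' ▸ Submodule.mem_map_of_mem hc
      exact this.2
  -- The transported grading refines `gr'`: a component supported off the diagonal sits in one
  -- matrix position, and one supported on the diagonal has all entries of the same degree.
  have hle : ∀ g, gr g ≠ ⊥ → ∃ g', Submodule.map φ.toLinearMap (gr g) ≤ gr' g' := by
    intro g hg
    obtain ⟨α, hα⟩ := hf.exists_le_peirce h hfine hsum hg
    by_cases hex : ∃ i j, i ≠ j ∧ rootVec i j = α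
    · obtain ⟨i, j, hij, rfl⟩ := hex
      obtain ⟨t', ht'⟩ := hψdeg (-d i + g + d j)
      refine ⟨d' i + t' + -d' j, ?_⟩
      rintro _ ⟨r, hr, rfl⟩
      change φ r ∈ _
      rw [hφ]
      refine Submodule.sum_mem _ fun a _ => Submodule.sum_mem _ fun b _ => ?_
      by_cases hab : rootVec a b = rootVec i j
      · obtain ⟨rfl, rfl⟩ := rootVec_inj hij hab.symm
        exact h'.2 _ _ _ (h'.2 _ _ _ (hf'.hx a) _ (ht' _ (hf.entry_mem h hidem hr a b))) _
          (hf'.hy b)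
      · rw [hα hr a b hab]
        simp
    · push Not at hex
      obtain ⟨t', ht'⟩ := hψdeg g
      refine ⟨t', ?_⟩
      rintro _ ⟨r, hr, rfl⟩
      change φ r ∈ _
      rw [hφ]
      refine Submodule.sum_mem _ fun a _ => Submodule.sum_mem _ fun b _ => ?_
      by_cases hab : a = b
      · subst hab
        have h1 := hf.entry_mem h hidem hr a a
        rw [show -d a + g + d a = g by abel] at h1
        have := h'.2 _ _ _ (h'.2 _ _ _ (hf'.hx a) _ (ht' _ h1)) _ (hf'.hy a)
        convert this using 2
        abel
      · rw [hα hr a b (hex a b hab)]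
        simp
  refine ⟨φ, fun g hg => ?_⟩
  have hmapne : Submodule.map φ.toLinearMap (gr g) ≠ ⊥ := fun h0 =>
    hg ((Submodule.map_eq_bot_iff (e := φ.toLinearEquiv)).1 h0)
  have hset := hfine' G _ (h.map φ) (fun g hg => hle g fun h0 => hg (by simp [h0]))
  have hm : Submodule.map φ.toLinearMap (gr g) ∈
      {S : Submodule F A | S ≠ ⊥ ∧ ∃ g, Submodule.map φ.toLinearMap (gr g) = S} :=
    ⟨hmapne, g, rfl⟩
  rw [hset] at hm
  obtain ⟨-, g', hg'⟩ := hm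
  exact ⟨g', hg'.symm⟩

end Transport

/-- Matrix algebras over a field are prime. -/
lemma matrix_exists_mul_mul_ne_zero {F : Type} [Field F] {n : ℕ} (a b : Matrix (Fin n) (Fin n) F)
    (ha : a ≠ 0) (hb : b ≠ 0) : ∃ r, a * r * b ≠ 0 := by
  obtain ⟨i, j, hij⟩ : ∃ i j, a i j ≠ 0 := by
    by_contra! hc
    exact ha (Matrix.ext hc)
  obtain ⟨k, l, hkl⟩ : ∃ i j, b i j ≠ 0 := by
    by_contra! hc
    exact hb (Matrix.ext hc)
  refine ⟨Matrix.single j k 1, fun h0 => mul_ne_zero hij hkl ?_⟩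
  have := congrFun (congrFun h0 i) l
  simpa [Matrix.mul_apply, Matrix.single, Finset.sum_ite_eq, ite_and] using this

/-- Two fine gradings `Γ₁`, `Γ₂` of `R = Mat_n(F)`, with graded primitive
idempotents `e₁`, `e₂`, are equivalent if and only if the graded division algebras `e₁Re₁`
and `e₂Re₂` are equivalent as graded algebras, i.e. there is an algebra isomorphism
`e₁Re₁ → e₂Re₂` mapping each nonzero homogeneous component onto a homogeneous component. -/
theorem stmt_6 (F : Type) [Field F] [IsAlgClosed F] [CharZero F] (n : ℕ)
    (G₁ G₂ : Type) [AddCommGroup G₁] [DecidableEq G₁] [AddCommGroup G₂] [DecidableEq G₂]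
    (gr₁ : G₁ → Submodule F (Matrix (Fin n) (Fin n) F))
    (gr₂ : G₂ → Submodule F (Matrix (Fin n) (Fin n) F))
    (hgr₁ : IsGrading gr₁) (hfine₁ : IsFine gr₁)
    (hgr₂ : IsGrading gr₂) (hfine₂ : IsFine gr₂)
    (e₁ e₂ : Matrix (Fin n) (Fin n) F)
    (he₁ : e₁ ∈ gr₁ 0) (hidem₁ : e₁ * e₁ = e₁) (hne₁ : e₁ ≠ 0)
    (he₂ : e₂ ∈ gr₂ 0) (hidem₂ : e₂ * e₂ = e₂) (hne₂ : e₂ ≠ 0)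
    -- e₁, e₂ are graded primitive idempotents
    (hprim₁ : ∀ (g : G₁) (x : Matrix (Fin n) (Fin n) F), x ∈ gr₁ g → x ∈ corner F e₁ →
      x ≠ 0 → ∃ y ∈ corner F e₁, x * y = e₁ ∧ y * x = e₁)
    (hprim₂ : ∀ (g : G₂) (x : Matrix (Fin n) (Fin n) F), x ∈ gr₂ g → x ∈ corner F e₂ →
      x ≠ 0 → ∃ y ∈ corner F e₂, x * y = e₂ ∧ y * x = e₂) :
    GradEquiv gr₁ gr₂ ↔
      ∃ ψ : Matrix (Fin n) (Fin n) F →ₗ[F] Matrix (Fin n) (Fin n) F,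
        Set.BijOn ψ (corner F e₁ : Set (Matrix (Fin n) (Fin n) F))
          (corner F e₂ : Set (Matrix (Fin n) (Fin n) F)) ∧
        (∀ x ∈ corner F e₁, ∀ y ∈ corner F e₁, ψ (x * y) = ψ x * ψ y) ∧
        (∀ g : G₁, corner F e₁ ⊓ gr₁ g ≠ ⊥ →
          ∃ g' : G₂, Submodule.map ψ (corner F e₁ ⊓ gr₁ g) = corner F e₂ ⊓ gr₂ g') := by
  have hP := matrix_exists_mul_mul_ne_zero (F := F) (n := n)
  constructor
  · exact corner_equiv_of_gradEquiv hgr₂ hP he₁ hidem₁ hne₁ he₂ hidem₂ hne₂ hprim₁ hprim₂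
  · rintro ⟨ψ, hbij, hmul, hcomp⟩
    have : Nonempty (Fin n) := by
      by_contra hemp
      rw [not_nonempty_iff] at hemp
      exact hne₁ (Subsingleton.elim _ _)
    obtain ⟨k, x, y, d, hf, hsum⟩ := hgr₁.exists_frame hP he₁ hidem₁ hne₁ hprim₁
    obtain ⟨k', x', y', d', hf', hsum'⟩ := hgr₂.exists_frame hP he₂ hidem₂ hne₂ hprim₂
    exact gradEquiv_of_corner_equiv hgr₁ hfine₁ hgr₂ hfine₂ hidem₁ hne₁ hidem₂ hf hsum hf' hsum'
      ψ hbij hmul hcomp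
end

section
/- Let D = ⊕_{h∈H} D_h be a finite-dimensional central graded division algebra over F with support H, and let τ be a graded antiautomorphism of D (an F-linear bijective antiautomorphism with τ(D_h) = D_h for all h ∈ H). Then every element of H has order dividing 2 (H is a 2-elementary abelian group) and τ is an involution, i.e., τ² = id. -/
/-!
Over an algebraically closed field every homogeneous component is at most one-dimensional: for
`a ≠ 0` and `b` in the same component, `a⁻¹ b` has an eigenvalue `c`, so the homogeneous element
`b - c a` is not invertible and must vanish. Hence `τ` acts on each component by a scalar.

Let `a`, `b` be nonzero homogeneous, with `τ a = l a`, `τ b = m b`, and let `n` be the scalar by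
which `τ` acts on the component containing both `a b` and `b a`. Applying `τ` to these products
gives `n (a b) = l m (b a)` and `n (b a) = l m (a b)`, so `b a = c (a b)` with `c² = 1`. Thus `a²`
commutes with every homogeneous element, so it is a nonzero scalar `s`. If `a` has degree `g`, then
`1` lies in degree `2g`, and `1 = 1 * 1` lies in degree `4g`, which forces `2g = 0`. Finally
`τ (a²) = l² a²` and `τ 1 = 1` give `l² = 1`, so `τ²` fixes every homogeneous element.
-/

/-- In a nontrivial finite-dimensional algebra over an algebraically closed field, a subspace whose
nonzero elements are all invertible is at most one-dimensional. -/
theorem exists_smul_of_isUnit {F D : Type} [Field F] [IsAlgClosed F] [Ring D] [Nontrivial D]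
    [Algebra F D] [FiniteDimensional F D] (S : Submodule F D)
    (hS : ∀ a ∈ S, a ≠ 0 → IsUnit a) {a b : D} (ha : a ∈ S) (ha0 : a ≠ 0) (hb : b ∈ S) :
    ∃ c : F, b = c • a := by
  obtain ⟨u, rfl⟩ := hS a ha ha0
  obtain ⟨c, hc⟩ := spectrum.nonempty_of_isAlgClosed_of_finiteDimensional F ((↑u⁻¹ : D) * b)
  refine ⟨c, ?_⟩
  by_contra hne
  have hunit : IsUnit (c • (u : D) - b) :=
    hS _ (S.sub_mem (S.smul_mem c ha) hb) (fun h => hne (sub_eq_zero.mp h).symm)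
  apply spectrum.mem_iff.mp hc
  have hfactor : algebraMap F D c - (↑u⁻¹ : D) * b = (↑u⁻¹ : D) * (c • (u : D) - b) := by
    rw [mul_sub, mul_smul_comm, Units.inv_mul, Algebra.algebraMap_eq_smul_one]
  rw [hfactor]
  exact (Units.isUnit u⁻¹).mul hunit


/-- Let `D = ⊕_{h∈H} D_h` be a finite-dimensional central graded division
algebra over an algebraically closed field `F` of characteristic `0`, and let `τ` be a graded
antiautomorphism of `D`.  Then every element of the support has order dividing `2`
(the support is a `2`-elementary abelian group) and `τ` is an involution. -/
theorem stmt_7 (F : Type) [Field F] [IsAlgClosed F] [CharZero F]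
    (D : Type) [Ring D] [Nontrivial D] [Algebra F D] [FiniteDimensional F D]
    (G : Type) [AddCommGroup G] [DecidableEq G]
    (gr : G → Submodule F D)
    (hinternal : DirectSum.IsInternal gr)
    (hmul : ∀ g h : G, ∀ a ∈ gr g, ∀ b ∈ gr h, a * b ∈ gr (g + h))
    (hdiv : ∀ g : G, ∀ a ∈ gr g, a ≠ 0 → IsUnit a)
    (hcentral : Subalgebra.center F D = ⊥)
    (τ : D →ₗ[F] D)
    (hbij : Function.Bijective τ)
    (hanti : ∀ x y : D, τ (x * y) = τ y * τ x)
    (hgraded : ∀ g : G, Submodule.map τ (gr g) = gr g) :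
    (∀ g : G, gr g ≠ ⊥ → g + g = 0) ∧ (∀ x : D, τ (τ x) = x) := by
  have hscalar : ∀ g : G, ∃ l : F, ∀ x ∈ gr g, τ x = l • x := by
    intro g
    by_cases hg : gr g = ⊥
    · refine ⟨0, fun x hx => ?_⟩
      rw [hg, Submodule.mem_bot] at hx
      simp [hx]
    obtain ⟨a, ha, ha0⟩ := Submodule.exists_mem_ne_zero_of_ne_bot hg
    have hτa : τ a ∈ gr g := hgraded g ▸ Submodule.mem_map_of_mem ha
    obtain ⟨l, hl⟩ := exists_smul_of_isUnit (gr g) (hdiv g) ha ha0 hτa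
    refine ⟨l, fun x hx => ?_⟩
    obtain ⟨c, rfl⟩ := exists_smul_of_isUnit (gr g) (hdiv g) ha ha0 hx
    rw [map_smul, hl, smul_comm]
  choose l hl using hscalar
  have hτ1 : τ 1 = 1 := by
    obtain ⟨x, hx⟩ := hbij.2 1
    simpa [hx] using (hanti 1 x).symm
  have hspan : ∀ x : D, x ∈ ⨆ g, gr g := fun x =>
    hinternal.submodule_iSup_eq_top ▸ Submodule.mem_top
  have hsq_comm : ∀ g, ∀ a ∈ gr g, ∀ h, ∀ b ∈ gr h, b * (a * a) = (a * a) * b := by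
    intro g a ha h b hb
    by_cases ha0 : a = 0
    · simp [ha0]
    by_cases hb0 : b = 0
    · simp [hb0]
    have hab := hl (g + h) _ (hmul g h a ha b hb)
    have hba := hl (g + h) _ (add_comm h g ▸ hmul h g b hb a ha)
    rw [hanti, hl g a ha, hl h b hb, smul_mul_smul_comm] at hab hba
    have hk : l h * l g ≠ 0 := by
      apply mul_ne_zero
      · intro h0
        exact hb0 (hbij.1 (by rw [hl h b hb, h0, zero_smul, map_zero]))
      · intro h0
        exact ha0 (hbij.1 (by rw [hl g a ha, h0, zero_smul, map_zero]))
    rw [mul_comm (l g)] at hba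
    generalize l h * l g = k at hab hba hk
    generalize l (g + h) = n at hab hba
    have hba' : b * a = (k⁻¹ * n) • (a * b) := by
      rw [mul_smul, ← hab, smul_smul, inv_mul_cancel₀ hk, one_smul]
    have hab' : a * b = (k⁻¹ * n) • (b * a) := by
      rw [mul_smul, ← hba, smul_smul, inv_mul_cancel₀ hk, one_smul]
    calc b * (a * a) = (b * a) * a := (mul_assoc _ _ _).symm
      _ = ((k⁻¹ * n) • (a * b)) * a := by rw [← hba']
      _ = a * ((k⁻¹ * n) • (b * a)) := by
        rw [smul_mul_assoc, mul_smul_comm, mul_assoc]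
      _ = (a * a) * b := by rw [← hab', mul_assoc]
  have hsq : ∀ g, ∀ a ∈ gr g, a ≠ 0 → ∃ s : F, s ≠ 0 ∧ a * a = s • (1 : D) := by
    intro g a ha ha0
    have hcen : a * a ∈ Subalgebra.center F D := by
      rw [Subalgebra.mem_center_iff]
      intro x
      induction hspan x using Submodule.iSup_induction' with
      | mem h b hb => exact hsq_comm g a ha h b hb
      | zero => simp
      | add x y _ _ hx hy => rw [add_mul, mul_add, hx, hy]
    rw [hcentral, Algebra.mem_bot] at hcen
    obtain ⟨s, hs⟩ := hcen
    rw [Algebra.algebraMap_eq_smul_one] at hs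
    refine ⟨s, ?_, hs.symm⟩
    rintro rfl
    have hu := hdiv g a ha ha0
    rw [zero_smul] at hs
    exact (hu.mul hu).ne_zero hs.symm
  refine ⟨fun g hg => ?_, fun x => ?_⟩
  · obtain ⟨a, ha, ha0⟩ := Submodule.exists_mem_ne_zero_of_ne_bot hg
    obtain ⟨s, hs0, hs⟩ := hsq g a ha ha0
    have h1 : (1 : D) ∈ gr (g + g) := by
      have hmem := (gr (g + g)).smul_mem s⁻¹ (hmul g g a ha a ha)
      rwa [hs, smul_smul, inv_mul_cancel₀ hs0, one_smul] at hmem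
    have h2 : (1 : D) ∈ gr (g + g + (g + g)) := by
      simpa using hmul _ _ 1 h1 1 h1
    by_contra hne
    -- Distinct components meet trivially, and `4g ≠ 2g` when `2g ≠ 0`.
    have hdisj := hinternal.submodule_iSupIndep.pairwiseDisjoint
      (show g + g ≠ g + g + (g + g) from fun h => hne (left_eq_add.mp h))
    exact one_ne_zero (Submodule.disjoint_def.mp hdisj 1 h1 h2)
  · induction hspan x using Submodule.iSup_induction' with
    | mem g a ha =>
      by_cases ha0 : a = 0
      · simp [ha0]
      obtain ⟨s, hs0, hs⟩ := hsq g a ha ha0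
      have hτsq := hanti a a
      rw [hl g a ha, smul_mul_smul_comm, hs, map_smul, hτ1, smul_smul] at hτsq
      have hs' : s = l g * l g * s := smul_left_injective F (one_ne_zero (α := D)) hτsq
      have hl1 : l g * l g = 1 := mul_right_cancel₀ hs0 (by rw [one_mul, ← hs'])
      rw [hl g a ha, map_smul, hl g a ha, smul_smul, hl1, one_smul]
    | zero => simp
    | add x y _ _ hx hy => rw [map_add, map_add, hx, hy]
end

section
/- Let D be a finite-dimensional central graded division algebra over F endowed with a graded involution τ. If τ is orthogonal then (D,τ) is graded isomorphic to (Q,τ_o)^{⊗n} for some n ≥ 0, i.e., D is graded isomorphic to the ℤ₂^{2n}-graded algebra Q^{⊗n} through an isomorphism carrying τ to τ_o^{⊗n}. If τ is symplectic then (D,τ) is graded isomorphic to (Q,τ_s) ⊗ (Q,τ_o)^{⊗n} for some n ≥ 0. -/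
/-!
The identity component of `D` is a finite-dimensional division algebra over an algebraically closed
field, so it is `F`, and every nonzero component is a line. Hence `τ` acts on the component of
degree `g` by a sign `(-1)^{q(g)}`, and applying `τ` to a product of homogeneous elements shows that
they commute up to `(-1)^{b(g,h)}`, where `b` is the polar form of `q`. Squares of homogeneous
elements are therefore central, so by centrality the support is an elementary abelian `2`-group, `q`
is a quadratic form on it over `𝔽₂`, and `b` is nondegenerate.

The form `q` splits as an orthogonal sum of planes (`exists_darboux`): a nonzero vector with `q = 0`
lies in a hyperbolic plane, which splits off; if there is no such vector then the space is zero or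
an elliptic plane. So at most one plane is elliptic. Choosing homogeneous square roots of `1` along
the basis of these planes gives a basis of `D` that multiplies like the tensor products of Pauli
matrices (`exists_pauli_system`), and this is the isomorphism (`IsGradedDivInv.exists_iso`):
hyperbolic planes correspond to `(Q, τ_o)` and the elliptic one to `(Q, τ_s)`.

The trace of `τ` is `2^m` without an elliptic plane and `-2^m` with one
(`IsGradedDivInv.trace_eq`), and it is also twice the dimension of the symmetric elements minus
`dim D`. This quantity is positive for orthogonal and negative for symplectic involutions.
-/


open scoped TensorProduct

noncomputable section

def qone (F : Type) [Field F] : Matrix (Fin 2) (Fin 2) F := !![1, 0; 0, -1]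
def qtwo (F : Type) [Field F] : Matrix (Fin 2) (Fin 2) F := !![0, 1; 1, 0]
def qthree (F : Type) [Field F] : Matrix (Fin 2) (Fin 2) F := !![0, 1; -1, 0]

/-- The Pauli (division) grading of the quaternion algebra `Q = Mat_2(F)` over `ℤ₂ × ℤ₂`. -/
def qGrading (F : Type) [Field F] : ZMod 2 × ZMod 2 → Submodule F (Matrix (Fin 2) (Fin 2) F) :=
  fun a =>
    if a = (0, 0) then Submodule.span F {(1 : Matrix (Fin 2) (Fin 2) F)}
    else if a = (1, 0) then Submodule.span F {qone F}
    else if a = (0, 1) then Submodule.span F {qtwo F}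
    else Submodule.span F {qthree F}

/-- The transpose (orthogonal) involution `τ_o` of `Q`. -/
def tauO (F : Type) [Field F] :
    Matrix (Fin 2) (Fin 2) F →ₗ[F] Matrix (Fin 2) (Fin 2) F where
  toFun := Matrix.transpose
  map_add' := fun _ _ => Matrix.transpose_add _ _
  map_smul' := fun _ _ => Matrix.transpose_smul _ _

/-- The standard (symplectic) involution `τ_s` of `Q`:  `x ↦ tr(x)·1 - x`
(it sends `q₁, q₂, q₃` to their negatives). -/
def tauS (F : Type) [Field F] :
    Matrix (Fin 2) (Fin 2) F →ₗ[F] Matrix (Fin 2) (Fin 2) F where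
  toFun := fun x => Matrix.trace x • (1 : Matrix (Fin 2) (Fin 2) F) - x
  map_add' := by
    intro x y
    simp only [Matrix.trace_add, add_smul]
    abel
  map_smul' := by
    intro c x
    simp only [Matrix.trace_smul, smul_sub, smul_smul, smul_eq_mul, RingHom.id_apply]

/-- The homogeneous component of degree `a ∈ ℤ₂^{2m}` of the grading of `Q^{⊗m}`:
the span of the decomposable tensors of homogeneous elements of the indicated degrees. -/
def qpowComp (F : Type) [Field F] (m : ℕ) (a : Fin m → ZMod 2 × ZMod 2) :
    Submodule F (⨂[F] _i : Fin m, Matrix (Fin 2) (Fin 2) F) :=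
  Submodule.span F {x | ∃ v : Fin m → Matrix (Fin 2) (Fin 2) F,
    (∀ i, v i ∈ qGrading F (a i)) ∧ x = PiTensorProduct.tprod F v}

/-! ### Quadratic forms over `𝔽₂` -/

/-- The polar form of a `ZMod 2`-valued function, `q (x + y) - q x - q y` with the signs dropped. -/
def polar2 {V : Type} [AddCommGroup V] (q : V → ZMod 2) (x y : V) : ZMod 2 :=
  q (x + y) + q x + q y

/-- The two nonsingular quadratic forms on the plane `ℤ₂²`: `qk 0` is hyperbolic and `qk 1` is
elliptic. They record the signs of `τ_o` and of `τ_s` on the Pauli matrices. -/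
def qk (k : ZMod 2) (p : ZMod 2 × ZMod 2) : ZMod 2 := p.1 * p.2 + k * (p.1 + p.2)

section Quadratic

variable {V : Type} [AddCommGroup V] {q : V → ZMod 2}

lemma zmod2_cases : ∀ a : ZMod 2, a = 0 ∨ a = 1 := by decide

lemma zmod2_add_self (a : ZMod 2) : a + a = 0 := CharTwo.add_self_eq_zero a

lemma polar2_comm (x y : V) : polar2 q x y = polar2 q y x := by
  unfold polar2; rw [add_comm x y]; ring

lemma q_add (q : V → ZMod 2) (x y : V) : q (x + y) = q x + q y + polar2 q x y := by
  unfold polar2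
  linear_combination (-1 : ZMod 2) * zmod2_add_self (q x) - zmod2_add_self (q y)

lemma polar2_add_left
    (hb : ∀ x y z, polar2 q x (y + z) = polar2 q x y + polar2 q x z)
    (x y z : V) : polar2 q (x + y) z = polar2 q x z + polar2 q y z := by
  rw [polar2_comm, hb, polar2_comm z x, polar2_comm z y]

lemma polar2_zero_right
    (hb : ∀ x y z, polar2 q x (y + z) = polar2 q x y + polar2 q x z)
    (x : V) : polar2 q x 0 = 0 := by
  have := hb x 0 0
  simpa using this

lemma q_zero
    (hb : ∀ x y z, polar2 q x (y + z) = polar2 q x y + polar2 q x z) : q 0 = 0 := by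
  have := polar2_zero_right hb 0
  unfold polar2 at this
  rw [add_zero, zmod2_add_self, zero_add] at this
  exact this

lemma polar2_self
    (hb : ∀ x y z, polar2 q x (y + z) = polar2 q x y + polar2 q x z)
    (h2 : ∀ x : V, x + x = 0) (x : V) : polar2 q x x = 0 := by
  unfold polar2
  rw [h2, q_zero hb, zero_add, zmod2_add_self]

/-- The orthogonal complement of the plane spanned by `e` and `f`. -/
def perp2 (hb : ∀ x y z, polar2 q x (y + z) = polar2 q x y + polar2 q x z) (e f : V) :
    AddSubgroup V where
  carrier := {v | polar2 q v e = 0 ∧ polar2 q v f = 0}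
  zero_mem' := by
    simp only [Set.mem_ofPred_eq, polar2_comm (0 : V), polar2_zero_right hb, and_self]
  add_mem' := by
    rintro a b ⟨h1, h2⟩ ⟨h3, h4⟩
    simp [polar2_add_left hb, h1, h2, h3, h4]
  neg_mem' := by
    rintro a ⟨h1, h2⟩
    have key : ∀ z, polar2 q (-a) z = polar2 q a z := by
      intro z
      have := polar2_add_left hb a (-a) z
      rw [add_neg_cancel, polar2_comm, polar2_zero_right hb] at this
      exact (CharTwo.add_eq_zero.mp this.symm).symm
    simp [key, h1, h2]

/-- Scalar multiplication by `ZMod 2`, usable without a module instance. -/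
def zs (k : ZMod 2) (e : V) : V := if k = 0 then 0 else e

lemma zs_add (h2 : ∀ x : V, x + x = 0) (k l : ZMod 2) (e : V) :
    zs (k + l) e = zs k e + zs l e := by
  obtain rfl | rfl := zmod2_cases k <;> obtain rfl | rfl := zmod2_cases l <;>
    simp [zs, h2, zmod2_add_self]

lemma polar2_zs
    (hb : ∀ x y z, polar2 q x (y + z) = polar2 q x y + polar2 q x z)
    (k : ZMod 2) (x e : V) : polar2 q x (zs k e) = k * polar2 q x e := by
  obtain rfl | rfl := zmod2_cases k <;> simp [zs, polar2_zero_right hb]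

lemma polar2_zs_left
    (hb : ∀ x y z, polar2 q x (y + z) = polar2 q x y + polar2 q x z)
    (k : ZMod 2) (x e : V) : polar2 q (zs k e) x = k * polar2 q e x := by
  rw [polar2_comm, polar2_zs hb, polar2_comm]

lemma q_zs
    (hb : ∀ x y z, polar2 q x (y + z) = polar2 q x y + polar2 q x z)
    (k : ZMod 2) (e : V) : q (zs k e) = k * q e := by
  obtain rfl | rfl := zmod2_cases k <;> simp [zs, q_zero hb]

/-- Projecting along a nonsingular plane: each vector differs from one of `perp2` by an element
of the plane, with coefficients read off from the polar form. -/
lemma proj_mem_perp2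
    (hb : ∀ x y z, polar2 q x (y + z) = polar2 q x y + polar2 q x z)
    (h2 : ∀ x : V, x + x = 0) {e f : V} (hef : polar2 q e f = 1) (v : V) :
    v + zs (polar2 q v f) e + zs (polar2 q v e) f ∈ perp2 hb e f := by
  have hfe : polar2 q f e = 1 := by rw [polar2_comm, hef]
  constructor <;>
  simp only [polar2_add_left hb, polar2_zs_left hb, polar2_self hb h2, hef, hfe] <;>
  simp [CharTwo.add_self_eq_zero]

/-- A Darboux-type decomposition of the complement of a nonsingular plane extends by that plane. -/
lemma split_plane
    (hb : ∀ x y z, polar2 q x (y + z) = polar2 q x y + polar2 q x z)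
    (h2 : ∀ x : V, x + x = 0) {e f : V} (hef : polar2 q e f = 1)
    (s : ZMod 2) (he : q e = s) (hf : q f = s) (m : ℕ) (k : Fin m → ZMod 2)
    (ψ : (Fin m → ZMod 2 × ZMod 2) ≃+ perp2 hb e f)
    (hψ : ∀ a, q (ψ a) = ∑ i, qk (k i) (a i)) :
    ∃ ψ' : (Fin (m + 1) → ZMod 2 × ZMod 2) ≃+ V,
      ∀ a, q (ψ' a) = ∑ i, qk (Fin.snoc (α := fun _ => ZMod 2) k s i) (a i) := by
  have hfe : polar2 q f e = 1 := by rw [polar2_comm, hef]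
  let φ : (Fin (m + 1) → ZMod 2 × ZMod 2) →+ V :=
    { toFun := fun a => (ψ (fun i => a i.castSucc) : V)
        + (zs (a (Fin.last m)).1 e + zs (a (Fin.last m)).2 f)
      map_zero' := by
        have : (fun i : Fin m => (0 : Fin (m + 1) → ZMod 2 × ZMod 2) i.castSucc) = 0 := rfl
        rw [this]; simp [zs]
      map_add' := by
        intro a b
        have : (fun i : Fin m => (a + b) i.castSucc)
          = (fun i : Fin m => a i.castSucc) + (fun i : Fin m => b i.castSucc) := rfl
        rw [this]
        simp only [map_add, Pi.add_apply, Prod.fst_add, Prod.snd_add, zs_add h2,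
          AddSubgroup.coe_add]
        abel }
  have hφ : ∀ a, φ a = (ψ (fun i => a i.castSucc) : V)
        + (zs (a (Fin.last m)).1 e + zs (a (Fin.last m)).2 f) := fun a => rfl
  have hpe : ∀ a, polar2 q (φ a) e = (a (Fin.last m)).2 := by
    intro a
    have := (ψ (fun i => a i.castSucc)).2.1
    simp only [hφ, polar2_add_left hb, polar2_zs_left hb, polar2_self hb h2, hfe, this]
    simp
  have hpf : ∀ a, polar2 q (φ a) f = (a (Fin.last m)).1 := by
    intro a
    have := (ψ (fun i => a i.castSucc)).2.2
    simp only [hφ, polar2_add_left hb, polar2_zs_left hb, polar2_self hb h2, hef, this]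
    simp
  have hinj : Function.Injective φ := by
    rw [injective_iff_map_eq_zero]
    intro a ha
    have h1 := hpe a
    have h3 := hpf a
    rw [ha, polar2_comm, polar2_zero_right hb] at h1 h3
    have h4 := hφ a
    rw [ha, ← h1, ← h3] at h4
    simp only [zs, if_true, add_zero] at h4
    have h5 : (fun i : Fin m => a i.castSucc) = 0 := by
      apply ψ.injective
      rw [map_zero]
      exact Subtype.ext h4.symm
    funext i
    refine Fin.lastCases ?_ (fun j => ?_) i
    · exact Prod.ext h3.symm h1.symm
    · exact congrFun h5 j
  have hsurj : Function.Surjective φ := by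
    intro v
    obtain ⟨a, ha⟩ := ψ.surjective ⟨_, proj_mem_perp2 hb h2 hef v⟩
    refine ⟨Fin.snoc (α := fun _ => ZMod 2 × ZMod 2) a (polar2 q v f, polar2 q v e), ?_⟩
    rw [hφ]
    simp only [Fin.snoc_castSucc, Fin.snoc_last, ha]
    have h3 := h2 (zs (polar2 q v f) e)
    have h4 := h2 (zs (polar2 q v e) f)
    calc _ = v + (zs (polar2 q v f) e + zs (polar2 q v f) e)
        + (zs (polar2 q v e) f + zs (polar2 q v e) f) := by abel
      _ = v := by rw [h3, h4]; simp
  refine ⟨AddEquiv.ofBijective φ ⟨hinj, hsurj⟩, fun a => ?_⟩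
  change q (φ a) = _
  rw [Fin.sum_univ_castSucc]
  simp only [Fin.snoc_castSucc, Fin.snoc_last]
  have hp := (ψ (fun i => a i.castSucc)).2
  rw [← hψ (fun i => a i.castSucc), hφ, q_add q, q_add q (zs _ _)]
  simp only [hb, polar2_zs hb, polar2_zs_left hb, q_zs hb, hef, he, hf, hp.1, hp.2, qk]
  ring

end Quadratic

/-- Classification of nonsingular quadratic forms over `𝔽₂`: an orthogonal sum of planes, all of
them hyperbolic except possibly the one with index `0`. A hyperbolic plane can be split off as soon
as some nonzero vector is isotropic; without such a vector the space is zero or an elliptic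
plane. -/
lemma exists_darboux (n : ℕ) : ∀ (V : Type) [AddCommGroup V] [Finite V] (q : V → ZMod 2),
    Nat.card V = n → (∀ x : V, x + x = 0) →
    (∀ x y z, polar2 q x (y + z) = polar2 q x y + polar2 q x z) →
    (∀ x, x ≠ 0 → ∃ y, polar2 q x y ≠ 0) →
    ∃ (m : ℕ) (s : ZMod 2) (ψ : (Fin m → ZMod 2 × ZMod 2) ≃+ V), (s ≠ 0 → 0 < m) ∧
      ∀ a, q (ψ a) = ∑ i : Fin m, qk (if (i : ℕ) = 0 then s else 0) (a i) := by
  induction n using Nat.strong_induction_on with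
  | _ n ih =>
  intro V _ _ q hn h2 hb hnd
  have h01 : ∀ a : ZMod 2, a ≠ 0 → a = 1 := by decide
  by_cases hiso : ∃ e : V, e ≠ 0 ∧ q e = 0
  · obtain ⟨e, he0, hqe⟩ := hiso
    obtain ⟨f, hqf, hef⟩ : ∃ f, q f = 0 ∧ polar2 q e f = 1 := by
      obtain ⟨f, hf⟩ := hnd e he0
      have hf := h01 _ hf
      by_cases h : q f = 0
      · exact ⟨f, h, hf⟩
      · refine ⟨f + e, ?_, ?_⟩
        · rw [q_add q, h01 _ h, hqe, polar2_comm, hf]; decide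
        · rw [hb, hf, polar2_self hb h2, add_zero]
    have hlt : Nat.card (perp2 hb e f) < n := by
      rw [← hn]
      refine lt_of_le_of_ne (Nat.card_le_card_of_injective _ Subtype.val_injective) fun h => ?_
      have : e ∈ perp2 hb e f := by
        rw [AddSubgroup.eq_top_of_card_eq _ h]; trivial
      have := this.2
      rw [hef] at this
      exact one_ne_zero this
    obtain ⟨m, s, ψ, hs, hψ⟩ := ih _ hlt (perp2 hb e f) (fun v => q v) rfl
      (fun x => Subtype.ext (h2 x)) (fun x y z => hb x y z) (by
        intro x hx
        obtain ⟨w, hw⟩ := hnd x (fun h => hx (Subtype.ext h))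
        refine ⟨⟨_, proj_mem_perp2 hb h2 hef w⟩, ?_⟩
        change polar2 q (x : V) _ ≠ 0
        rw [hb, hb, polar2_zs hb, polar2_zs hb, x.2.1, x.2.2]
        simpa using hw)
    obtain ⟨ψ', hψ'⟩ := split_plane hb h2 hef 0 hqe hqf m _ ψ hψ
    refine ⟨m + 1, s, ψ', fun _ => Nat.succ_pos m, fun a => ?_⟩
    rw [hψ', Fin.sum_univ_castSucc, Fin.sum_univ_castSucc]
    simp only [Fin.snoc_castSucc, Fin.snoc_last, Fin.val_castSucc, Fin.val_last]
    congr 2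
    by_cases hs0 : s = 0
    · simp [hs0]
    · rw [if_neg (hs hs0).ne']
  · push Not at hiso
    by_cases htriv : ∃ e : V, e ≠ 0
    · obtain ⟨e, he0⟩ := htriv
      obtain ⟨f, hf⟩ := hnd e he0
      have hef := h01 _ hf
      have hf0 : f ≠ 0 := by
        rintro rfl
        exact hf (polar2_zero_right hb e)
      have hperp : ∀ v ∈ perp2 hb e f, v = 0 := by
        intro v hv
        by_contra hv0
        have h3 : q (v + e) = 0 := by
          rw [q_add q, h01 _ (hiso v hv0), h01 _ (hiso e he0), hv.1]; decide
        have h4 : v + e = 0 := by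
          by_contra h
          exact hiso _ h h3
        have h5 : v = e := by
          calc v = v + e + e := by rw [add_assoc, h2, add_zero]
            _ = e := by rw [h4, zero_add]
        have := hv.2
        rw [h5] at this
        exact hf this
      have hsub : Subsingleton (perp2 hb e f) :=
        ⟨fun a b => Subtype.ext ((hperp a a.2).trans (hperp b b.2).symm)⟩
      let ψ : (Fin 0 → ZMod 2 × ZMod 2) ≃+ perp2 hb e f :=
        { toFun := fun _ => 0
          invFun := fun _ => 0
          left_inv := fun _ => Subsingleton.elim _ _
          right_inv := fun _ => Subsingleton.elim _ _
          map_add' := fun _ _ => Subsingleton.elim _ _ }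
      obtain ⟨ψ', hψ'⟩ := split_plane hb h2 hef 1 (h01 _ (hiso e he0)) (h01 _ (hiso f hf0)) 0
        (fun _ => 0) ψ (fun a => by
          rw [hperp _ (ψ a).2, q_zero hb]; simp)
      refine ⟨1, 1, ψ', fun _ => Nat.one_pos, fun a => ?_⟩
      rw [hψ']
      simp [Fin.snoc]
    · push Not at htriv
      have hsub : Subsingleton V := ⟨fun a b => (htriv a).trans (htriv b).symm⟩
      refine ⟨0, 0,
        { toFun := fun _ => 0
          invFun := fun _ => 0
          left_inv := fun _ => Subsingleton.elim _ _
          right_inv := fun _ => Subsingleton.elim _ _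
          map_add' := fun _ _ => Subsingleton.elim _ _ }, fun h => absurd rfl h, fun a => ?_⟩
      change q 0 = _
      rw [q_zero hb]; simp

/-! ### Systems of Pauli elements -/

/-- The character `ZMod 2 → {±1} ⊆ F`. -/
def sg (F : Type) [Field F] (k : ZMod 2) : F := if k = 0 then 1 else -1

section Sign

variable (F : Type) [Field F]

@[simp] lemma sg_zero : sg F 0 = 1 := by simp [sg]

@[simp] lemma sg_one : sg F 1 = -1 := by simp [sg]

lemma sg_add (k l : ZMod 2) : sg F (k + l) = sg F k * sg F l := by
  obtain rfl | rfl := zmod2_cases k <;> obtain rfl | rfl := zmod2_cases l <;>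
    simp [zmod2_add_self]

lemma sg_sum {m : ℕ} (k : Fin m → ZMod 2) : sg F (∑ i, k i) = ∏ i, sg F (k i) := by
  induction m with
  | zero => simp
  | succ m ih => rw [Fin.sum_univ_succ, Fin.prod_univ_succ, sg_add, ih]

lemma sg_mul_self (k : ZMod 2) : sg F k * sg F k = 1 := by
  rw [← sg_add, zmod2_add_self, sg_zero]

lemma sg_injective [CharZero F] : Function.Injective (sg F) := by
  intro k l h
  have h1 : (1 : F) ≠ -1 := by
    intro h
    have : (2 : F) = 0 := by linear_combination h
    exact two_ne_zero this
  obtain rfl | rfl := zmod2_cases k <;> obtain rfl | rfl := zmod2_cases l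
  · rfl
  · exact absurd (by simpa using h) h1
  · exact absurd (by simpa using h.symm) h1
  · rfl

end Sign

/-- A pair of anticommuting square roots of `1` multiplies by the same rule as `q₁, q₂`. -/
lemma pair_mul {F D : Type} [Field F] [Ring D] [Algebra F D] {x y : D} (hx : x * x = 1)
    (hy : y * y = 1) (hxy : y * x = -(x * y)) (p r : ZMod 2 × ZMod 2) :
    (x ^ p.1.val * y ^ p.2.val) * (x ^ r.1.val * y ^ r.2.val) =
      sg F (p.2 * r.1) • (x ^ (p + r).1.val * y ^ (p + r).2.val) := by
  have h1 : ∀ z, x * (x * z) = z := fun z => by rw [← mul_assoc, hx, one_mul]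
  have h3 : ∀ z, y * (x * z) = -(x * (y * z)) := fun z => by
    rw [← mul_assoc, hxy, neg_mul, mul_assoc]
  have hv : (1 : ZMod 2).val = 1 := rfl
  obtain ⟨p1, p2⟩ := p
  obtain ⟨r1, r2⟩ := r
  obtain rfl | rfl := zmod2_cases p1 <;> obtain rfl | rfl := zmod2_cases p2 <;>
  obtain rfl | rfl := zmod2_cases r1 <;> obtain rfl | rfl := zmod2_cases r2 <;>
  simp [hv, mul_assoc, h1, h3, hx, hy, hxy, zmod2_add_self]

/-- A commuting-up-to-signs grading contains a system of homogeneous elements that multiply by the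
rule of the tensor products of Pauli matrices; `ψ` is a Darboux parametrization of degrees. -/
lemma exists_pauli_system {F D V : Type} [Field F] [Ring D] [Algebra F D] [AddCommGroup V]
    (gr : V → Submodule F D) (q : V → ZMod 2)
    (hsq : ∀ v, ∃ x ∈ gr v, x * x = 1) (hone : (1 : D) ∈ gr 0)
    (hmul : ∀ v w, ∀ x ∈ gr v, ∀ y ∈ gr w, x * y ∈ gr (v + w))
    (hcomm : ∀ v w, ∀ x ∈ gr v, ∀ y ∈ gr w, x * y = sg F (polar2 q v w) • (y * x))
    (m : ℕ) : ∀ (k : Fin m → ZMod 2) (ψ : (Fin m → ZMod 2 × ZMod 2) →+ V)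
      (_ : ∀ a, q (ψ a) = ∑ i, qk (k i) (a i)),
    ∃ Y : (Fin m → ZMod 2 × ZMod 2) → D, Y 0 = 1 ∧ (∀ a, Y a ∈ gr (ψ a)) ∧
      ∀ a b, Y a * Y b = sg F (∑ i, (a i).2 * (b i).1) • Y (a + b) := by
  induction m with
  | zero =>
    intro k ψ hψ
    refine ⟨fun _ => 1, rfl, fun a => ?_, fun a b => by simp⟩
    rw [Subsingleton.elim a 0, map_zero]
    exact hone
  | succ m ih =>
    intro k ψ hψ
    let ι : (Fin m → ZMod 2 × ZMod 2) →+ (Fin (m + 1) → ZMod 2 × ZMod 2) :=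
      { toFun := fun a => Fin.snoc (α := fun _ => ZMod 2 × ZMod 2) a 0
        map_zero' := by
          funext i
          refine Fin.lastCases ?_ (fun j => ?_) i <;> simp
        map_add' := by
          intro a b
          funext i
          refine Fin.lastCases ?_ (fun j => ?_) i <;> simp }
    let l : ZMod 2 × ZMod 2 →+ (Fin (m + 1) → ZMod 2 × ZMod 2) :=
      AddMonoidHom.single (fun _ => ZMod 2 × ZMod 2) (Fin.last m)
    have hιc : ∀ a (i : Fin m), ι a i.castSucc = a i := fun a i =>
      Fin.snoc_castSucc (α := fun _ => ZMod 2 × ZMod 2) _ _ _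
    have hιl : ∀ a, ι a (Fin.last m) = 0 := fun a =>
      Fin.snoc_last (α := fun _ => ZMod 2 × ZMod 2) _ _
    have hlc : ∀ p (i : Fin m), l p i.castSucc = 0 := fun p i => by
      simp [l, AddMonoidHom.single_apply, (Fin.castSucc_lt_last i).ne]
    have hll : ∀ p, l p (Fin.last m) = p := fun p => by
      simp [l, AddMonoidHom.single_apply]
    have hqk0 : ∀ j, qk j 0 = 0 := fun j => by simp [qk]
    obtain ⟨Y, hY0, hYg, hYm⟩ := ih (fun i => k i.castSucc) (ψ.comp ι) (fun a => by
      rw [AddMonoidHom.comp_apply, hψ, Fin.sum_univ_castSucc]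
      simp [hιc, hιl, hqk0])
    have hpol : ∀ p r, polar2 q (ψ (l p)) (ψ (l r)) =
        qk (k (Fin.last m)) (p + r) + qk (k (Fin.last m)) p + qk (k (Fin.last m)) r := by
      intro p r
      unfold polar2
      rw [← map_add, ← map_add, hψ, hψ, hψ]
      simp [Fin.sum_univ_castSucc, hlc, hll, hqk0]
    have hpol0 : ∀ a p, polar2 q (ψ (ι a)) (ψ (l p)) = 0 := by
      intro a p
      unfold polar2
      rw [← map_add, hψ, hψ, hψ]
      simp only [Fin.sum_univ_castSucc, Pi.add_apply, hlc, hll, hιc, hιl, hqk0, add_zero, zero_add,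
        Finset.sum_const_zero]
      rw [add_assoc, zmod2_add_self]
    obtain ⟨x, hxg, hx⟩ := hsq (ψ (l (1, 0)))
    obtain ⟨y, hyg, hy⟩ := hsq (ψ (l (0, 1)))
    have hyx : y * x = -(x * y) := by
      rw [hcomm _ _ y hyg x hxg, hpol]
      have : qk (k (Fin.last m)) ((0, 1) + (1, 0)) + qk (k (Fin.last m)) (0, 1)
          + qk (k (Fin.last m)) (1, 0) = 1 := by
        generalize k (Fin.last m) = j
        revert j; decide
      rw [this]; simp
    let Z : ZMod 2 × ZMod 2 → D := fun p => x ^ p.1.val * y ^ p.2.val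
    have hZg : ∀ p, Z p ∈ gr (ψ (l p)) := by
      have hv : (1 : ZMod 2).val = 1 := rfl
      rintro ⟨p1, p2⟩
      obtain rfl | rfl := zmod2_cases p1 <;> obtain rfl | rfl := zmod2_cases p2
      · have : ((0, 0) : ZMod 2 × ZMod 2) = 0 := rfl
        simpa [Z, this] using hone
      · simpa [Z, hv] using hyg
      · simpa [Z, hv] using hxg
      · have : ((1, 1) : ZMod 2 × ZMod 2) = (1, 0) + (0, 1) := by simp
        rw [this, map_add, map_add]
        simpa [Z, hv] using hmul _ _ x hxg y hyg
    have hZm : ∀ p r, Z p * Z r = sg F (p.2 * r.1) • Z (p + r) := pair_mul hx hy hyx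
    have hYZ : ∀ a p, Z p * Y a = Y a * Z p := by
      intro a p
      have := hcomm _ _ (Y a) (hYg a) (Z p) (hZg p)
      rw [AddMonoidHom.comp_apply, hpol0, sg_zero, one_smul] at this
      exact this.symm
    have hdec : ∀ a : Fin (m + 1) → ZMod 2 × ZMod 2,
        a = ι (fun i => a i.castSucc) + l (a (Fin.last m)) := by
      intro a
      funext i
      refine Fin.lastCases ?_ (fun j => ?_) i
      · simp [hιl, hll]
      · simp [hιc, hlc]
    refine ⟨fun a => Y (fun i => a i.castSucc) * Z (a (Fin.last m)), ?_, ?_, ?_⟩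
    · change Y 0 * Z 0 = 1
      rw [hY0]
      simp [Z]
    · intro a
      have := hmul _ _ _ (hYg (fun i => a i.castSucc)) _ (hZg (a (Fin.last m)))
      rwa [AddMonoidHom.comp_apply, ← map_add, ← hdec] at this
    · intro a b
      change Y _ * Z _ * (Y _ * Z _) =
        _ • (Y ((fun i => a i.castSucc) + fun i => b i.castSucc)
          * Z (a (Fin.last m) + b (Fin.last m)))
      rw [mul_assoc, ← mul_assoc (Z _) (Y _), hYZ, mul_assoc, ← mul_assoc (Y _) (Y _), hYm,
        Fin.sum_univ_castSucc, sg_add, hZm, smul_mul_smul_comm]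

/-! ### Graded division algebras with involution -/

/-- `gr` is a central graded-division grading of `D`, and `τ` is a graded involution. -/
structure IsGradedDivInv {F D G : Type} [Field F] [Ring D] [Algebra F D] [AddCommGroup G]
    [DecidableEq G] (gr : G → Submodule F D) (τ : D →ₗ[F] D) : Prop where
  internal : DirectSum.IsInternal gr
  mul : ∀ g h : G, ∀ a ∈ gr g, ∀ b ∈ gr h, a * b ∈ gr (g + h)
  div : ∀ g : G, ∀ a ∈ gr g, a ≠ 0 → IsUnit a
  central : Subalgebra.center F D = ⊥
  anti : ∀ x y : D, τ (x * y) = τ y * τ x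
  inv : ∀ x : D, τ (τ x) = x
  map : ∀ g : G, Submodule.map τ (gr g) = gr g

namespace IsGradedDivInv

variable {F D G : Type} [Field F] [Ring D] [Algebra F D] [AddCommGroup G]
    [DecidableEq G] {gr : G → Submodule F D} {τ : D →ₗ[F] D}

lemma mul_ne (H : IsGradedDivInv gr τ) {g : G} {a b : D} (ha : a ∈ gr g) (ha0 : a ≠ 0)
    (hb0 : b ≠ 0) : a * b ≠ 0 := by
  intro h
  exact hb0 (((H.div g a ha ha0).mul_right_eq_zero).mp h)

/-- A nonzero homogeneous left factor can be cancelled from degrees. -/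
lemma cancel (H : IsGradedDivInv gr τ) {g h : G} {a x : D} (ha : a ∈ gr g) (ha0 : a ≠ 0)
    (hax : a * x ∈ gr (g + h)) : x ∈ gr h := by
  have hx : x ∈ gr h ⊔ ⨆ (k) (_ : k ≠ h), gr k := by
    rw [← iSup_split_single gr h, H.internal.submodule_iSup_eq_top]
    trivial
  obtain ⟨u, hu, v, hv, rfl⟩ := Submodule.mem_sup.mp hx
  have hav : a * v ∈ ⨆ (k) (_ : k ≠ g + h), gr k := by
    have hle : (⨆ (k) (_ : k ≠ h), gr k) ≤
        (⨆ (k) (_ : k ≠ g + h), gr k).comap (LinearMap.mulLeft F a) := by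
      refine iSup₂_le fun k hk y hy => ?_
      refine Submodule.mem_iSup_of_mem (g + k) (Submodule.mem_iSup_of_mem ?_ (H.mul _ _ _ ha _ hy))
      exact fun h => hk (add_left_cancel h)
    exact hle hv
  have hav' : a * v ∈ gr (g + h) := by
    have := (gr (g + h)).sub_mem hax (H.mul _ _ _ ha _ hu)
    rwa [mul_add, add_sub_cancel_left] at this
  have h0 : a * v = 0 :=
    Submodule.disjoint_def.mp (H.internal.submodule_iSupIndep (g + h)) _ hav' hav
  have hv0 : v = 0 := ((H.div g a ha ha0).mul_right_eq_zero).mp h0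
  rw [hv0, add_zero]
  exact hu

lemma one_mem [Nontrivial D] (H : IsGradedDivInv gr τ) : (1 : D) ∈ gr 0 := by
  obtain ⟨g, hg⟩ : ∃ g, gr g ≠ ⊥ := by
    by_contra! h
    have h1 := H.internal.submodule_iSup_eq_top
    rw [iSup_eq_bot.mpr h] at h1
    exact bot_ne_top h1
  obtain ⟨a, ha, ha0⟩ := Submodule.exists_mem_ne_zero_of_ne_bot hg
  exact H.cancel ha ha0 (by simpa using ha)

/-- The identity component is a finite-dimensional division algebra over an algebraically closed
field, hence consists of scalars. -/
lemma zero_scalar [Nontrivial D] [IsAlgClosed F] [FiniteDimensional F D]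
    (H : IsGradedDivInv gr τ) {x : D} (hx : x ∈ gr 0) : ∃ c : F, x = c • (1 : D) := by
  obtain ⟨c, hc⟩ := spectrum.nonempty_of_isAlgClosed_of_finiteDimensional F x
  refine ⟨c, ?_⟩
  by_contra hne
  refine hc (H.div 0 _ ?_ ?_)
  · rw [Algebra.algebraMap_eq_smul_one]
    exact (gr 0).sub_mem ((gr 0).smul_mem _ H.one_mem) hx
  · rw [Algebra.algebraMap_eq_smul_one]
    exact fun h => hne (sub_eq_zero.mp h).symm

lemma line [Nontrivial D] [IsAlgClosed F] [FiniteDimensional F D]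
    (H : IsGradedDivInv gr τ) {g : G} {a b : D} (ha : a ∈ gr g) (ha0 : a ≠ 0) (hb : b ∈ gr g) :
    ∃ c : F, b = c • a := by
  obtain ⟨u, hu⟩ := H.div g a ha ha0
  have h1 : a * (↑u⁻¹ * b) = b := by rw [← mul_assoc, ← hu, Units.mul_inv, one_mul]
  obtain ⟨c, hc⟩ := H.zero_scalar (H.cancel (h := 0) ha ha0 (by rwa [h1, add_zero]))
  exact ⟨c, by rw [← h1, hc, mul_smul_comm, mul_one]⟩

lemma scalar_of_comm (H : IsGradedDivInv gr τ) {x : D}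
    (hx : ∀ g, ∀ y ∈ gr g, x * y = y * x) : ∃ c : F, x = c • (1 : D) := by
  have hle : (⊤ : Submodule F D) ≤
      LinearMap.ker (LinearMap.mulLeft F x - LinearMap.mulRight F x) := by
    rw [← H.internal.submodule_iSup_eq_top]
    refine iSup_le fun g y hy => ?_
    simp [hx g y hy]
  have hc : x ∈ Subalgebra.center F D := by
    rw [Subalgebra.mem_center_iff]
    intro y
    have : y ∈ LinearMap.ker (LinearMap.mulLeft F x - LinearMap.mulRight F x) := hle trivial
    simp only [LinearMap.mem_ker, LinearMap.sub_apply, LinearMap.mulLeft_apply,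
      LinearMap.mulRight_apply, sub_eq_zero] at this
    exact this.symm
  rw [H.central, Algebra.mem_bot] at hc
  obtain ⟨c, rfl⟩ := hc
  exact ⟨c, Algebra.algebraMap_eq_smul_one c⟩

lemma eq_of_mem (H : IsGradedDivInv gr τ) {g h : G} {x : D} (hx0 : x ≠ 0) (hg : x ∈ gr g)
    (hh : x ∈ gr h) : g = h := by
  by_contra hne
  have := H.internal.submodule_iSupIndep.pairwiseDisjoint hne
  exact hx0 (Submodule.disjoint_def.mp this _ hg hh)

variable [Nontrivial D] [IsAlgClosed F] [FiniteDimensional F D]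

/-- The involution acts on each component by a sign, the components being lines. -/
lemma exists_sign (H : IsGradedDivInv gr τ) (g : G) :
    ∃ k : ZMod 2, ∀ a ∈ gr g, τ a = sg F k • a := by
  by_cases hg : gr g = ⊥
  · refine ⟨0, fun a ha => ?_⟩
    rw [hg, Submodule.mem_bot] at ha
    simp [ha]
  obtain ⟨a, ha, ha0⟩ := Submodule.exists_mem_ne_zero_of_ne_bot hg
  obtain ⟨c, hc⟩ := H.line ha ha0 (H.map g ▸ Submodule.mem_map_of_mem ha : τ a ∈ gr g)
  have hcc : c * c = 1 := by
    have h1 := H.inv a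
    rw [hc, map_smul, hc, smul_smul] at h1
    have h2 : (c * c - 1) • a = 0 := by rw [sub_smul, h1, one_smul, sub_self]
    exact sub_eq_zero.mp ((smul_eq_zero.mp h2).resolve_right ha0)
  have hsg : ∃ k, sg F k = c := by
    rcases mul_self_eq_one_iff.mp hcc with h | h
    · exact ⟨0, by simp [h]⟩
    · exact ⟨1, by simp [h]⟩
  obtain ⟨k, rfl⟩ := hsg
  refine ⟨k, fun b hb => ?_⟩
  obtain ⟨d, rfl⟩ := H.line ha ha0 hb
  rw [map_smul, hc, smul_comm]

/-- The exponent of the sign by which `τ` acts on the component of degree `g`. -/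
def q (H : IsGradedDivInv gr τ) (g : G) : ZMod 2 := (H.exists_sign g).choose

lemma tau_apply (H : IsGradedDivInv gr τ) {g : G} {a : D} (ha : a ∈ gr g) :
    τ a = sg F (H.q g) • a := (H.exists_sign g).choose_spec a ha

/-- Applying `τ` to a product of homogeneous elements shows that they commute up to the sign given
by the polar form of `q`. -/
lemma comm (H : IsGradedDivInv gr τ) {g h : G} {a b : D} (ha : a ∈ gr g) (hb : b ∈ gr h) :
    a * b = sg F (polar2 H.q g h) • (b * a) := by
  have h1 := H.tau_apply (H.mul _ _ _ ha _ hb)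
  rw [H.anti, H.tau_apply ha, H.tau_apply hb, smul_mul_smul_comm] at h1
  have h2 := congrArg (fun z => sg F (H.q (g + h)) • z) h1
  simp only [smul_smul, sg_mul_self, one_smul] at h2
  rw [← h2, polar2, sg_add, sg_add]
  congr 1
  ring

/-- A homogeneous square commutes with every homogeneous element up to the square of a sign, so it
is central. -/
lemma exists_sq_eq_one (H : IsGradedDivInv gr τ) {g : G} (hg : gr g ≠ ⊥) :
    g + g = 0 ∧ ∃ x ∈ gr g, x * x = 1 := by
  obtain ⟨a, ha, ha0⟩ := Submodule.exists_mem_ne_zero_of_ne_bot hg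
  obtain ⟨c, hc⟩ := H.scalar_of_comm (x := a * a) (fun h y hy => by
    rw [mul_assoc, H.comm ha hy, mul_smul_comm, ← mul_assoc, H.comm ha hy, smul_mul_assoc,
      smul_smul, sg_mul_self, one_smul, mul_assoc])
  have haa : a * a ≠ 0 := H.mul_ne ha ha0 ha0
  refine ⟨H.eq_of_mem haa (H.mul _ _ _ ha _ ha) (hc ▸ (gr 0).smul_mem _ H.one_mem), ?_⟩
  obtain ⟨d, hd⟩ := IsAlgClosed.exists_pow_nat_eq c (n := 2) two_pos
  have hd0 : d ≠ 0 := by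
    rintro rfl
    apply haa
    rw [hc, ← hd]
    simp
  refine ⟨d⁻¹ • a, (gr g).smul_mem _ ha, ?_⟩
  rw [smul_mul_smul_comm, hc, ← hd, smul_smul]
  have : d⁻¹ * d⁻¹ * d ^ 2 = 1 := by field_simp
  rw [this, one_smul]

/-- The support of the grading. -/
def supp (H : IsGradedDivInv gr τ) : AddSubgroup G where
  carrier := {g | gr g ≠ ⊥}
  zero_mem' := by
    intro h
    have h1 := H.one_mem
    rw [h, Submodule.mem_bot] at h1
    exact one_ne_zero h1
  add_mem' := by
    intro g h hg hh hgh
    obtain ⟨a, ha, ha0⟩ := Submodule.exists_mem_ne_zero_of_ne_bot hg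
    obtain ⟨b, hb, hb0⟩ := Submodule.exists_mem_ne_zero_of_ne_bot hh
    have := H.mul _ _ _ ha _ hb
    rw [hgh, Submodule.mem_bot] at this
    exact H.mul_ne ha ha0 hb0 this
  neg_mem' := by
    intro g hg
    have : -g = g := neg_eq_of_add_eq_zero_left (H.exists_sq_eq_one hg).1
    rw [this]
    exact hg

lemma mem_supp (H : IsGradedDivInv gr τ) {g : G} : g ∈ H.supp ↔ gr g ≠ ⊥ := Iff.rfl

lemma finite_supp (H : IsGradedDivInv gr τ) : Finite H.supp :=
  (WellFoundedGT.finite_ne_bot_of_iSupIndep H.internal.submodule_iSupIndep).to_subtype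

lemma polar_add [CharZero F] (H : IsGradedDivInv gr τ) (x y z : H.supp) :
    polar2 (fun v : H.supp => H.q v) x (y + z) =
      polar2 (fun v : H.supp => H.q v) x y + polar2 (fun v : H.supp => H.q v) x z := by
  change polar2 H.q (x : G) (y + z) = polar2 H.q (x : G) y + polar2 H.q (x : G) z
  obtain ⟨a, ha, ha0⟩ := Submodule.exists_mem_ne_zero_of_ne_bot x.2
  obtain ⟨b, hb, hb0⟩ := Submodule.exists_mem_ne_zero_of_ne_bot y.2
  obtain ⟨c, hc, hc0⟩ := Submodule.exists_mem_ne_zero_of_ne_bot z.2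
  apply sg_injective F
  have h1 := H.comm ha (H.mul _ _ _ hb _ hc)
  rw [← mul_assoc, H.comm ha hb, smul_mul_assoc, mul_assoc, H.comm ha hc, mul_smul_comm,
    smul_smul, ← sg_add, ← mul_assoc] at h1
  have h0 : b * c * a ≠ 0 := H.mul_ne (H.mul _ _ _ hb _ hc) (H.mul_ne hb hb0 hc0) ha0
  exact (smul_left_injective F h0 h1).symm

/-- A homogeneous element in the radical of the commutation form is central, hence a scalar. -/
lemma polar_nondeg (H : IsGradedDivInv gr τ) (x : H.supp) (hx : x ≠ 0) :
    ∃ y, polar2 (fun v : H.supp => H.q v) x y ≠ 0 := by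
  by_contra! h
  apply hx
  obtain ⟨a, ha, ha0⟩ := Submodule.exists_mem_ne_zero_of_ne_bot x.2
  obtain ⟨c, hc⟩ := H.scalar_of_comm (x := a) (fun g y hy => by
    by_cases hg : gr g = ⊥
    · rw [hg, Submodule.mem_bot] at hy
      simp [hy]
    · have h1 : polar2 H.q (x : G) g = 0 := h ⟨g, hg⟩
      rw [H.comm ha hy, h1, sg_zero, one_smul])
  exact Subtype.ext (H.eq_of_mem ha0 ha (hc ▸ (gr 0).smul_mem _ H.one_mem))

/-- The structure of `(D, τ)` in coordinates: a parametrization of the support by `ℤ₂^{2m}` and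
homogeneous elements `Y a` multiplying as tensor products of Pauli matrices, on which `τ` acts by
the signs of `m` planes that are hyperbolic except possibly for the one with index `0`. -/
lemma exists_coords [CharZero F] (H : IsGradedDivInv gr τ) :
    ∃ (m : ℕ) (s : ZMod 2) (ψ : (Fin m → ZMod 2 × ZMod 2) ≃+ H.supp)
      (Y : (Fin m → ZMod 2 × ZMod 2) → D), (s ≠ 0 → 0 < m) ∧ (∀ a, Y a ∈ gr (ψ a)) ∧
      (∀ a, Y a ≠ 0) ∧ (∀ a b, Y a * Y b = sg F (∑ i, (a i).2 * (b i).1) • Y (a + b)) ∧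
      ∀ a, τ (Y a) = sg F (∑ i : Fin m, qk (if (i : ℕ) = 0 then s else 0) (a i)) • Y a := by
  have := H.finite_supp
  obtain ⟨m, s, ψ, hs, hψ⟩ := exists_darboux _ H.supp (fun v => H.q v) rfl
    (fun x => Subtype.ext (H.exists_sq_eq_one x.2).1) H.polar_add H.polar_nondeg
  obtain ⟨Y, hY0, hYg, hYm⟩ := exists_pauli_system (fun v : H.supp => gr v) (fun v => H.q v)
    (fun v => (H.exists_sq_eq_one v.2).2) H.one_mem (fun v w => H.mul v w)
    (fun v w x hx y hy => H.comm hx hy) m _ ψ.toAddMonoidHom hψ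
  refine ⟨m, s, ψ, Y, hs, hYg, fun a ha => ?_, hYm, fun a => ?_⟩
  · have h1 := hYm a a
    have h2 : a + a = 0 := by
      funext i
      exact Prod.ext (zmod2_add_self _) (zmod2_add_self _)
    have h3 := congrArg (fun z => sg F (∑ i, (a i).2 * (a i).1) • z) h1
    simp only [smul_smul, sg_mul_self, h2, hY0, ha, mul_zero, smul_zero, one_smul] at h3
    exact zero_ne_one h3
  · rw [← hψ a]
    exact H.tau_apply (hYg a)

end IsGradedDivInv

/-! ### Pauli matrices and their tensor products -/

section Pauli

variable (F : Type) [Field F]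

/-- The Pauli matrices `1, q₁, q₂, q₃`, indexed by their degrees. -/
def qb (p : ZMod 2 × ZMod 2) : Matrix (Fin 2) (Fin 2) F :=
  if p = (0, 0) then 1 else if p = (1, 0) then qone F else if p = (0, 1) then qtwo F else qthree F

lemma qb00 : qb F (0, 0) = 1 := by simp [qb]

lemma qb10 : qb F (1, 0) = qone F := by simp [qb]

lemma qb01 : qb F (0, 1) = qtwo F := by simp [qb]

lemma qb11 : qb F (1, 1) = qthree F := by simp [qb]

lemma qGrading_eq (p : ZMod 2 × ZMod 2) : qGrading F p = Submodule.span F {qb F p} := by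
  unfold qGrading qb
  split_ifs <;> rfl

lemma qb_eq (p : ZMod 2 × ZMod 2) : qb F p = qone F ^ p.1.val * qtwo F ^ p.2.val := by
  have hv : (1 : ZMod 2).val = 1 := rfl
  obtain ⟨p1, p2⟩ := p
  obtain rfl | rfl := zmod2_cases p1 <;> obtain rfl | rfl := zmod2_cases p2 <;>
  simp [hv, qb00, qb01, qb10, qb11]
  simp [qone, qtwo, qthree]

lemma qb_mul (p r : ZMod 2 × ZMod 2) : qb F p * qb F r = sg F (p.2 * r.1) • qb F (p + r) := by
  simp only [qb_eq]
  refine pair_mul ?_ ?_ ?_ p r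
  · simp [qone, Matrix.one_fin_two]
  · simp [qtwo, Matrix.one_fin_two]
  · simp [qone, qtwo]

lemma tauO_qb (p : ZMod 2 × ZMod 2) : tauO F (qb F p) = sg F (qk 0 p) • qb F p := by
  obtain ⟨p1, p2⟩ := p
  obtain rfl | rfl := zmod2_cases p1 <;> obtain rfl | rfl := zmod2_cases p2 <;>
  simp only [qb00, qb01, qb10, qb11, qk, tauO, LinearMap.coe_mk, AddHom.coe_mk] <;>
  ext i j <;> fin_cases i <;> fin_cases j <;> simp [qone, qtwo, qthree]

lemma tauS_qb (p : ZMod 2 × ZMod 2) : tauS F (qb F p) = sg F (qk 1 p) • qb F p := by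
  have h2 : (1 : ZMod 2) + (1 + 1) = 1 := by decide
  obtain ⟨p1, p2⟩ := p
  obtain rfl | rfl := zmod2_cases p1 <;> obtain rfl | rfl := zmod2_cases p2 <;>
  simp only [qb00, qb01, qb10, qb11, qk, tauS, LinearMap.coe_mk, AddHom.coe_mk] <;>
  ext i j <;> fin_cases i <;> fin_cases j <;>
  simp [qone, qtwo, qthree, h2, Matrix.trace_fin_two] <;> norm_num

lemma qb_linearIndependent [CharZero F] : LinearIndependent F (qb F) := by
  rw [Fintype.linearIndependent_iff]
  intro g hg
  have huniv : (Finset.univ : Finset (ZMod 2)) = {0, 1} := rfl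
  rw [Fintype.sum_prod_type] at hg
  simp only [huniv, Finset.sum_pair (zero_ne_one : (0 : ZMod 2) ≠ 1), qb00, qb01, qb10, qb11] at hg
  have e00 := congrFun (congrFun hg 0) 0
  have e01 := congrFun (congrFun hg 0) 1
  have e10 := congrFun (congrFun hg 1) 0
  have e11 := congrFun (congrFun hg 1) 1
  simp [qone, qtwo, qthree] at e00 e01 e10 e11
  have h2 : (2 : F) ≠ 0 := two_ne_zero
  rintro ⟨p1, p2⟩
  obtain rfl | rfl := zmod2_cases p1 <;> obtain rfl | rfl := zmod2_cases p2 <;>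
    apply mul_left_cancel₀ h2
  · linear_combination e00 + e11
  · linear_combination e01 + e10
  · linear_combination e00 - e11
  · linear_combination e01 - e10

/-- The Pauli basis of `Q`. -/
def qBasis [CharZero F] : Module.Basis (ZMod 2 × ZMod 2) F (Matrix (Fin 2) (Fin 2) F) :=
  basisOfLinearIndependentOfCardEqFinrank (qb_linearIndependent F) (by
    rw [Module.finrank_matrix]; simp)

@[simp] lemma qBasis_apply [CharZero F] (p : ZMod 2 × ZMod 2) : qBasis F p = qb F p := by
  simp [qBasis]

lemma qpowComp_eq (m : ℕ) (a : Fin m → ZMod 2 × ZMod 2) :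
    qpowComp F m a = Submodule.span F {PiTensorProduct.tprod F (fun i => qb F (a i))} := by
  unfold qpowComp
  apply le_antisymm
  · rw [Submodule.span_le]
    rintro x ⟨v, hv, rfl⟩
    simp only [qGrading_eq, Submodule.mem_span_singleton] at hv
    choose c hc using hv
    have : v = fun i => c i • qb F (a i) := funext fun i => (hc i).symm
    rw [this, MultilinearMap.map_smul_univ]
    exact Submodule.smul_mem _ _ (Submodule.mem_span_singleton_self _)
  · rw [Submodule.span_le, Set.singleton_subset_iff]
    refine Submodule.subset_span ⟨_, fun i => ?_, rfl⟩
    rw [qGrading_eq]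
    exact Submodule.mem_span_singleton_self _

/-- The trace of the sign action of the plane with index `k`: the Arf invariant, scaled by `2`. -/
lemma sum_sg_qk (k : ZMod 2) : ∑ p : ZMod 2 × ZMod 2, sg F (qk k p) = 2 * sg F k := by
  have huniv : (Finset.univ : Finset (ZMod 2)) = {0, 1} := rfl
  have h2 : (1 : ZMod 2) + (1 + 1) = 1 := by decide
  rw [Fintype.sum_prod_type]
  simp only [huniv, Finset.sum_pair (zero_ne_one : (0 : ZMod 2) ≠ 1), qk]
  obtain rfl | rfl := zmod2_cases k <;> simp [h2] <;> norm_num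

end Pauli

/-! ### Trace of the involution and the isomorphism -/

/-- The trace of an involution is the difference of the dimensions of its eigenspaces. -/
lemma trace_involution {F D : Type} [Field F] [CharZero F] [AddCommGroup D] [Module F D]
    [FiniteDimensional F D] (τ : D →ₗ[F] D) (hτ : ∀ x, τ (τ x) = x) :
    LinearMap.trace F D τ + Module.finrank F D =
      2 * Module.finrank F (LinearMap.ker (τ - LinearMap.id)) := by
  have h2 : (2 : F) ≠ 0 := two_ne_zero
  have hp : LinearMap.IsProj (LinearMap.ker (τ - LinearMap.id))
      ((2 : F)⁻¹ • (τ + LinearMap.id)) := by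
    constructor
    · intro x
      simp [hτ, add_comm]
    · intro x hx
      have hx' : τ x = x := by simpa [sub_eq_zero] using hx
      simp only [LinearMap.smul_apply, LinearMap.add_apply, hx', LinearMap.id_apply, ← two_smul F x,
        smul_smul, inv_mul_cancel₀ h2, one_smul]
  have := hp.trace
  rw [map_smul, map_add, LinearMap.trace_id, smul_eq_mul] at this
  rw [← this, mul_inv_cancel_left₀ h2]

namespace IsGradedDivInv

variable {F D G : Type} [Field F] [Ring D] [Algebra F D] [AddCommGroup G]
    [DecidableEq G] {gr : G → Submodule F D} {τ : D →ₗ[F] D}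
    [Nontrivial D] [IsAlgClosed F] [FiniteDimensional F D]

/-- Homogeneous elements parametrized bijectively by the support form a basis. -/
lemma exists_basis (H : IsGradedDivInv gr τ) {m : ℕ}
    (ψ : (Fin m → ZMod 2 × ZMod 2) ≃+ H.supp) (Y : (Fin m → ZMod 2 × ZMod 2) → D)
    (hYg : ∀ a, Y a ∈ gr (ψ a)) (hY0 : ∀ a, Y a ≠ 0) :
    ∃ B : Module.Basis (Fin m → ZMod 2 × ZMod 2) F D, ∀ a, B a = Y a := by
  have hli : LinearIndependent F Y :=
    (H.internal.submodule_iSupIndep.comp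
      (Subtype.val_injective.comp ψ.injective)).linearIndependent _ hYg hY0
  have hsp : ⊤ ≤ Submodule.span F (Set.range Y) := by
    rw [← H.internal.submodule_iSup_eq_top]
    refine iSup_le fun g x hx => ?_
    by_cases hg : gr g = ⊥
    · rw [hg, Submodule.mem_bot] at hx
      rw [hx]; exact Submodule.zero_mem _
    · obtain ⟨a, ha⟩ := ψ.surjective ⟨g, hg⟩
      have h1 := hYg a
      rw [ha] at h1
      obtain ⟨c, rfl⟩ := H.line h1 (hY0 a) hx
      exact Submodule.smul_mem _ _ (Submodule.subset_span ⟨a, rfl⟩)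
  exact ⟨Module.Basis.mk hli hsp, fun a => Module.Basis.mk_apply hli hsp a⟩

lemma trace_eq (H : IsGradedDivInv gr τ) {m : ℕ} (k : Fin m → ZMod 2)
    (ψ : (Fin m → ZMod 2 × ZMod 2) ≃+ H.supp) (Y : (Fin m → ZMod 2 × ZMod 2) → D)
    (hYg : ∀ a, Y a ∈ gr (ψ a)) (hY0 : ∀ a, Y a ≠ 0)
    (hYτ : ∀ a, τ (Y a) = sg F (∑ i, qk (k i) (a i)) • Y a) :
    LinearMap.trace F D τ = 2 ^ m * sg F (∑ i, k i) := by
  obtain ⟨B, hB⟩ := H.exists_basis ψ Y hYg hY0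
  have h1 : ∀ a, LinearMap.toMatrix B B τ a a = ∏ i, sg F (qk (k i) (a i)) := by
    intro a
    rw [LinearMap.toMatrix_apply, hB, hYτ, ← hB, map_smul, Module.Basis.repr_self, sg_sum]
    simp
  rw [LinearMap.trace_eq_matrix_trace F B, Matrix.trace]
  simp only [Matrix.diag_apply, h1]
  rw [← Fintype.prod_sum (fun i p => sg F (qk (k i) p))]
  simp only [sum_sg_qk, Finset.prod_mul_distrib, Finset.prod_const, Finset.card_univ,
    Fintype.card_fin, sg_sum]

/-- Sending each `Y a` to the tensor product of Pauli matrices of degree `a` is a graded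
isomorphism compatible with the involutions. -/
lemma exists_iso [CharZero F] (H : IsGradedDivInv gr τ) {m : ℕ} (k : Fin m → ZMod 2)
    (ψ : (Fin m → ZMod 2 × ZMod 2) ≃+ H.supp) (Y : (Fin m → ZMod 2 × ZMod 2) → D)
    (hYg : ∀ a, Y a ∈ gr (ψ a)) (hY0 : ∀ a, Y a ≠ 0)
    (hYm : ∀ a b, Y a * Y b = sg F (∑ i, (a i).2 * (b i).1) • Y (a + b))
    (hYτ : ∀ a, τ (Y a) = sg F (∑ i, qk (k i) (a i)) • Y a)
    (T : Fin m → (Matrix (Fin 2) (Fin 2) F →ₗ[F] Matrix (Fin 2) (Fin 2) F))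
    (hT : ∀ i p, T i (qb F p) = sg F (qk (k i) p) • qb F p) :
    ∃ (Φ : D →ₗ[F] ⨂[F] _i : Fin m, Matrix (Fin 2) (Fin 2) F)
        (α : G → Fin m → ZMod 2 × ZMod 2),
        Function.Bijective Φ ∧
        (∀ x y : D, Φ (x * y) = Φ x * Φ y) ∧
        (∀ x : D, Φ (τ x) = PiTensorProduct.map T (Φ x)) ∧
        (∀ g₁ g₂ : G, gr g₁ ≠ ⊥ → gr g₂ ≠ ⊥ → α (g₁ + g₂) = α g₁ + α g₂) ∧
        (∀ g₁ g₂ : G, gr g₁ ≠ ⊥ → gr g₂ ≠ ⊥ → α g₁ = α g₂ → g₁ = g₂) ∧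
        (∀ a : Fin m → ZMod 2 × ZMod 2, ∃ g : G, gr g ≠ ⊥ ∧ α g = a) ∧
        (∀ g : G, gr g ≠ ⊥ → Submodule.map Φ (gr g) = qpowComp F m (α g)) := by
  classical
  obtain ⟨B, hB⟩ := H.exists_basis ψ Y hYg hY0
  let C := Basis.piTensorProduct (fun _ : Fin m => qBasis F)
  have hC : ∀ a, C a = PiTensorProduct.tprod F (fun i => qb F (a i)) := fun a => by
    simp [C, Basis.piTensorProduct_apply]
  let Φ := B.equiv C (Equiv.refl _)
  have hΦ : ∀ a, Φ (Y a) = PiTensorProduct.tprod F (fun i => qb F (a i)) := fun a => by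
    rw [← hB, ← hC]
    simp [Φ]
  let α : G → Fin m → ZMod 2 × ZMod 2 := fun g =>
    if hg : gr g ≠ ⊥ then ψ.symm ⟨g, hg⟩ else 0
  have hα : ∀ g (hg : gr g ≠ ⊥), α g = ψ.symm ⟨g, hg⟩ := fun g hg => dif_pos hg
  refine ⟨Φ.toLinearMap, α, Φ.bijective, ?_, ?_, ?_, ?_, ?_, ?_⟩
  · have h : (LinearMap.mul F D).compr₂ Φ.toLinearMap =
        (PiTensorProduct.mul : (⨂[F] _i : Fin m, Matrix (Fin 2) (Fin 2) F) →ₗ[F] _).compl₁₂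
          Φ.toLinearMap Φ.toLinearMap := by
      refine LinearMap.ext_basis B B fun a b => ?_
      simp only [LinearMap.compr₂_apply, LinearMap.compl₁₂_apply, LinearMap.mul_apply', hB,
        LinearEquiv.coe_coe, hYm, map_smul, hΦ, PiTensorProduct.mul_tprod_tprod]
      rw [sg_sum, ← MultilinearMap.map_smul_univ]
      congr 1
      funext i
      exact (qb_mul F (a i) (b i)).symm
    intro x y
    exact LinearMap.congr_fun₂ h x y
  · have h : Φ.toLinearMap ∘ₗ τ = PiTensorProduct.map T ∘ₗ Φ.toLinearMap := by
      refine B.ext fun a => ?_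
      simp only [LinearMap.comp_apply, hB, LinearEquiv.coe_coe, hYτ, map_smul, hΦ,
        PiTensorProduct.map_tprod, hT]
      rw [sg_sum, ← MultilinearMap.map_smul_univ]
    intro x
    exact LinearMap.congr_fun h x
  · intro g₁ g₂ h₁ h₂
    rw [hα _ h₁, hα _ h₂, hα _ (H.supp.add_mem h₁ h₂), ← map_add]
    rfl
  · intro g₁ g₂ h₁ h₂ h
    rw [hα _ h₁, hα _ h₂] at h
    exact congrArg Subtype.val (ψ.symm.injective h)
  · intro a
    refine ⟨ψ a, (ψ a).2, ?_⟩
    rw [hα _ (ψ a).2]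
    exact ψ.symm_apply_apply a
  · intro g hg
    have hYα : Y (α g) ∈ gr g := by
      have := hYg (ψ.symm ⟨g, hg⟩)
      rw [ψ.apply_symm_apply] at this
      rw [hα _ hg]
      exact this
    have hspan : gr g = Submodule.span F {Y (α g)} := by
      apply le_antisymm
      · intro x hx
        obtain ⟨c, rfl⟩ := H.line hYα (hY0 _) hx
        exact Submodule.smul_mem _ _ (Submodule.mem_span_singleton_self _)
      · rw [Submodule.span_le, Set.singleton_subset_iff]
        exact hYα
    rw [hspan, Submodule.map_span, Set.image_singleton, qpowComp_eq, LinearEquiv.coe_coe, hΦ]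

end IsGradedDivInv

/-- Let `D` be a finite-dimensional central graded division algebra over an
algebraically closed field `F` of characteristic `0`, with a graded involution `τ`.  If `τ` is
orthogonal then `(D,τ)` is graded isomorphic to `(Q,τ_o)^{⊗m}` for some `m ≥ 0`; if `τ` is
symplectic then `(D,τ)` is graded isomorphic to `(Q,τ_s) ⊗ (Q,τ_o)^{⊗m}` for some `m ≥ 0`
(realized as `Q^{⊗(m+1)}` where the involution acts as `τ_s` in the `0`-th slot and as `τ_o`
elsewhere).  Graded isomorphisms are algebra isomorphisms together with a degree
correspondence `α`, additive and injective on the support and onto `ℤ₂^{2m}`, matching the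
homogeneous components, and intertwining the involutions. -/
theorem stmt_8 (F : Type) [Field F] [IsAlgClosed F] [CharZero F]
    (D : Type) [Ring D] [Nontrivial D] [Algebra F D] [FiniteDimensional F D]
    (G : Type) [AddCommGroup G] [DecidableEq G]
    (gr : G → Submodule F D)
    (hinternal : DirectSum.IsInternal gr)
    (hmul : ∀ g h : G, ∀ a ∈ gr g, ∀ b ∈ gr h, a * b ∈ gr (g + h))
    (hdiv : ∀ g : G, ∀ a ∈ gr g, a ≠ 0 → IsUnit a)
    (hcentral : Subalgebra.center F D = ⊥)
    (τ : D →ₗ[F] D)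
    (hτanti : ∀ x y : D, τ (x * y) = τ y * τ x)
    (hτinv : ∀ x : D, τ (τ x) = x)
    (hτgr : ∀ g : G, Submodule.map τ (gr g) = gr g) :
    -- orthogonal case
    ((∃ r : ℕ, Module.finrank F D = r * r ∧
        2 * Module.finrank F (LinearMap.ker (τ - LinearMap.id)) = r * (r + 1)) →
      ∃ (m : ℕ) (Φ : D →ₗ[F] ⨂[F] _i : Fin m, Matrix (Fin 2) (Fin 2) F)
        (α : G → Fin m → ZMod 2 × ZMod 2),
        Function.Bijective Φ ∧
        (∀ x y : D, Φ (x * y) = Φ x * Φ y) ∧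
        (∀ x : D, Φ (τ x) = PiTensorProduct.map (fun _ => tauO F) (Φ x)) ∧
        (∀ g₁ g₂ : G, gr g₁ ≠ ⊥ → gr g₂ ≠ ⊥ → α (g₁ + g₂) = α g₁ + α g₂) ∧
        (∀ g₁ g₂ : G, gr g₁ ≠ ⊥ → gr g₂ ≠ ⊥ → α g₁ = α g₂ → g₁ = g₂) ∧
        (∀ a : Fin m → ZMod 2 × ZMod 2, ∃ g : G, gr g ≠ ⊥ ∧ α g = a) ∧
        (∀ g : G, gr g ≠ ⊥ → Submodule.map Φ (gr g) = qpowComp F m (α g))) ∧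
    -- symplectic case
    ((∃ r : ℕ, Module.finrank F D = r * r ∧
        2 * Module.finrank F (LinearMap.ker (τ - LinearMap.id)) = r * (r - 1)) →
      ∃ (m : ℕ) (Φ : D →ₗ[F] ⨂[F] _i : Fin (m + 1), Matrix (Fin 2) (Fin 2) F)
        (α : G → Fin (m + 1) → ZMod 2 × ZMod 2),
        Function.Bijective Φ ∧
        (∀ x y : D, Φ (x * y) = Φ x * Φ y) ∧
        (∀ x : D, Φ (τ x) =
          PiTensorProduct.map (fun i : Fin (m + 1) =>
            if i = 0 then tauS F else tauO F) (Φ x)) ∧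
        (∀ g₁ g₂ : G, gr g₁ ≠ ⊥ → gr g₂ ≠ ⊥ → α (g₁ + g₂) = α g₁ + α g₂) ∧
        (∀ g₁ g₂ : G, gr g₁ ≠ ⊥ → gr g₂ ≠ ⊥ → α g₁ = α g₂ → g₁ = g₂) ∧
        (∀ a : Fin (m + 1) → ZMod 2 × ZMod 2, ∃ g : G, gr g ≠ ⊥ ∧ α g = a) ∧
        (∀ g : G, gr g ≠ ⊥ → Submodule.map Φ (gr g) = qpowComp F (m + 1) (α g))) := by
  have H : IsGradedDivInv gr τ := ⟨hinternal, hmul, hdiv, hcentral, hτanti, hτinv, hτgr⟩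
  obtain ⟨m, s, ψ, Y, hs, hYg, hY0, hYm, hYτ⟩ := H.exists_coords
  have htr := H.trace_eq _ ψ Y hYg hY0 hYτ
  have htr2 := trace_involution τ hτinv
  have hpos : 0 < Module.finrank F D := Module.finrank_pos
  have h01 : ∀ a : ZMod 2, a ≠ 0 → a = 1 := by decide
  -- The trace of `τ` is `2 ^ m` or `-2 ^ m` according to the type of the plane with index `0`.
  have hsum : ∑ i : Fin m, (if (i : ℕ) = 0 then s else 0) = s := by
    by_cases h : s = 0
    · simp [h]
    · obtain ⟨n, rfl⟩ := Nat.exists_eq_succ_of_ne_zero (hs h).ne'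
      rw [Fin.sum_univ_succ]
      simp
  rw [hsum] at htr
  constructor
  · rintro ⟨r, hr, hk⟩
    have hs0 : s = 0 := by
      by_contra h
      rw [h01 s h, sg_one] at htr
      have hk' := congrArg (Nat.cast : ℕ → F) hk
      push_cast at hk'
      rw [htr, hr, hk'] at htr2
      push_cast at htr2
      have h3 : ((r + 2 ^ m : ℕ) : F) = 0 := by
        push_cast
        linear_combination -htr2
      have h4 := Nat.cast_eq_zero.mp h3
      have h5 := Nat.one_le_two_pow (n := m)
      omega
    subst hs0
    exact ⟨m, H.exists_iso _ ψ Y hYg hY0 hYm hYτ _ (fun i p => by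
      rw [ite_self]; exact tauO_qb F p)⟩
  · rintro ⟨r, hr, hk⟩
    have hr1 : 1 ≤ r := by
      rcases Nat.eq_zero_or_pos r with rfl | h
      · omega
      · exact h
    have hs0 : s = 1 := by
      refine h01 s fun h => ?_
      rw [h, sg_zero] at htr
      have hk' := congrArg (Nat.cast : ℕ → F) hk
      push_cast [Nat.cast_sub hr1] at hk'
      rw [htr, hr, hk'] at htr2
      push_cast at htr2
      have h3 : ((r + 2 ^ m : ℕ) : F) = 0 := by
        push_cast
        linear_combination htr2
      have h4 := Nat.cast_eq_zero.mp h3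
      have h5 := Nat.one_le_two_pow (n := m)
      omega
    subst hs0
    obtain ⟨n, rfl⟩ := Nat.exists_eq_succ_of_ne_zero (hs one_ne_zero).ne'
    exact ⟨n, H.exists_iso _ ψ Y hYg hY0 hYm hYτ _ (fun i p => by
      by_cases hi : i = 0
      · subst hi
        simpa using tauS_qb F p
      · have hi' : (i : ℕ) ≠ 0 := fun h => hi (Fin.ext h)
        rw [if_neg hi, if_neg hi']
        exact tauO_qb F p)⟩

end
end
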